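/- arXiv:math/9811155 — 11 statements merged into one kernel-verified Lean document; each statement's English description precedes it below -/
import Mathlib

section
/- Let (W,S) be a finite Coxeter system with length function ℓ, let 𝒞 be a category, and for each w ∈ W let T(w) : 𝒞 ⥤ 𝒞 be a functor with T(1) = 𝟭_𝒞. Suppose given: (a) for each pair w, w' ∈ W with ℓ(ww') = ℓ(w) + ℓ(w'), a natural isomorphism c_{w,w'} : T(w) ∘ T(w') ≅ T(ww'), with c_{1,w} and c_{w,1} the identities, such that for every triple w, w', w'' ∈ W with ℓ(ww'w'') = ℓ(w) + ℓ(w') + ℓ(w'') one has c_{w,w'w''} ∘ (T(w) whiskered with c_{w',w''}) = c_{ww',w''} ∘ (c_{w,w'} whiskered with T(w'')); (b) for each s ∈ S a natural transformation c_s : T(s) ∘ T(s) ⟶ 𝟭_𝒞 satisfying: (1) for every object X of 𝒞, T(s)(c_{s,X}) = c_{s,T(s)X} as morphisms T(s)³X → T(s)X; and (2) for every w ∈ W and s, s' ∈ S with sw = ws' and ℓ(sw) = ℓ(w) + 1, the composite T(s)T(w)T(s') → T(w)T(s')T(s') → T(w) (first arrow the isomorphism (c_{w,s'})⁻¹ ∘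 c_{s,w} whiskered on the right with T(s'), second arrow T(w) whiskered with c_{s'}) equals the composite T(s)T(w)T(s') → T(s)T(s)T(w) → T(w) (first arrow T(s) whiskered with (c_{s,w})⁻¹ ∘ c_{w,s'}, second arrow c_s whiskered on the right with T(w)). Then there exists a family of natural transformations C_{w,w'} : T(w) ∘ T(w') ⟶ T(ww'), defined for all w, w' ∈ W, such that C_{w,w'} = c_{w,w'} whenever ℓ(ww') = ℓ(w) + ℓ(w'), C_{s,s} = c_s for all s ∈ S, and the associativity C_{w,w'w''} ∘ (T(w) whiskered with C_{w',w''}) = C_{ww',w''} ∘ (C_{w,w'} whiskered with T(w'')) holds for all w, w', w'' ∈ W; that is, the data (T(w), C_{w,w'}) form a quasi-action of W on 𝒞. -/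
open CategoryTheory

/-!
Left translations `T s ∘ T b ⟶ T (s b)` and right translations `T b ∘ T t ⟶ T (b t)` by simple
reflections are determined by the given data: use `c_{s,b}` if `s b` is longer than `b`, and
otherwise split `T b ≅ T s ∘ T (s b)` and apply `c_s`. Each left translation commutes with each
right translation. If the shortest and the longest of `b`, `s b`, `b t`, `s b t` differ in length
by two, this follows from the associativity and naturality of `c`. Otherwise the exchange condition
forces `s b = b t`, and this is where the two conditions on the `c_s` enter.

Composing along reduced words gives commuting left and right translations by all elements of the
group. Commutation at `1` shows that left translation of `T b` by `a` and right translation of `T a`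
by `b` are the same transformation `T a ∘ T b ⟶ T (a b)`. For this common transformation,
commutation of left and right translations is associativity.
-/

section Coxeter

variable {B W : Type*} [Group W] {M : CoxeterMatrix B} (cs : CoxeterSystem M W)

open Classical in
/-- A simple reflection acting on `W × ℤ/2` by conjugation on the first factor, changing the sign
exactly at that reflection. On pairs (reflection, sign) this is the action of `W` on the roots. -/
noncomputable def signedConj (i : B) : Function.End (W × ZMod 2) :=
  fun p => (cs.simple i * p.1 * cs.simple i, p.2 + if p.1 = cs.simple i then 1 else 0)

open Classical in
theorem prod_map_signedConj (ω : List B) (t : W) (e : ZMod 2) :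
    (ω.map (signedConj cs)).prod (t, e) =
      (cs.wordProd ω * t * (cs.wordProd ω)⁻¹, e + (cs.rightInvSeq ω).count t) := by
  induction ω with
  | nil => simp [Function.End.one_def]
  | cons i ω ih =>
    have conj_eq_iff : cs.wordProd ω * t * (cs.wordProd ω)⁻¹ = cs.simple i ↔
        (cs.wordProd ω)⁻¹ * cs.simple i * cs.wordProd ω = t := by
      rw [mul_inv_eq_iff_eq_mul, mul_assoc, inv_mul_eq_iff_eq_mul, eq_comm]
    rw [List.map_cons, List.prod_cons]
    change signedConj cs i ((ω.map (signedConj cs)).prod (t, e)) = _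
    rw [ih, cs.wordProd_cons]
    refine Prod.ext ?_ ?_
    · simp [signedConj, mul_assoc]
    · simp [signedConj, CoxeterSystem.rightInvSeq, List.count_cons, conj_eq_iff, add_assoc]

theorem prod_map_reverse_alternatingWord {G : Type*} [Monoid G] (f : B → G) (i j : B) (k : ℕ) :
    ((CoxeterSystem.alternatingWord j i (2 * k)).reverse.map f).prod = (f i * f j) ^ k := by
  induction k with
  | zero => simp [CoxeterSystem.alternatingWord]
  | succ k ih =>
    rw [Nat.mul_succ, CoxeterSystem.alternatingWord_succ, CoxeterSystem.alternatingWord_succ,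
      List.concat_eq_append, List.concat_eq_append, List.reverse_concat, List.reverse_concat,
      List.map_cons, List.map_cons, List.prod_cons, List.prod_cons, ih, pow_succ', mul_assoc]

theorem leftInvSeq_braid_sq (i j : B) :
    ∃ l : List W, cs.leftInvSeq (CoxeterSystem.alternatingWord j i (2 * M i j)) = l ++ l := by
  let f (k : ℕ) : W := cs.wordProd (CoxeterSystem.alternatingWord i j (2 * k + 1))
  have f_add_period (k : ℕ) : f (M i j + k) = f k := by
    have odd_div (n : ℕ) : (2 * n + 1) / 2 = n := by omega
    simp [f, cs.prod_alternatingWord_eq_mul_pow, odd_div, pow_add]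
  refine ⟨(List.range (M i j)).map f, ?_⟩
  have eq_map_range : cs.leftInvSeq (CoxeterSystem.alternatingWord j i (2 * M i j)) =
      (List.range (2 * M i j)).map f :=
    List.ext_getElem (by simp) fun k hk _ => by
      simpa [f] using cs.getElem_leftInvSeq_alternatingWord j i (M i j) k (by simpa using hk)
  rw [eq_map_range, two_mul, List.range_add, List.map_append, List.map_map]
  simp only [Function.comp_def, f_add_period]

theorem isLiftable_signedConj : M.IsLiftable (signedConj cs) := by
  classical
  intro i j
  let ω := (CoxeterSystem.alternatingWord j i (2 * M i j)).reverse
  obtain ⟨l, hl⟩ := leftInvSeq_braid_sq cs i j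
  have wordProd_eq_one : cs.wordProd ω = 1 := by
    rw [CoxeterSystem.wordProd, prod_map_reverse_alternatingWord, cs.simple_mul_simple_pow]
  rw [← prod_map_reverse_alternatingWord]
  funext ⟨t, e⟩
  rw [prod_map_signedConj, wordProd_eq_one, cs.rightInvSeq_reverse, hl]
  simp [CharTwo.add_self_eq_zero, Function.End.one_def]

open Classical in
theorem count_rightInvSeq_eq_of_wordProd_eq {ω ω' : List B}
    (h : cs.wordProd ω = cs.wordProd ω') (t : W) :
    ((cs.rightInvSeq ω).count t : ZMod 2) = (cs.rightInvSeq ω').count t := by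
  let φ := cs.lift ⟨signedConj cs, isLiftable_signedConj cs⟩
  have prod_eq (ω : List B) : (ω.map (signedConj cs)).prod = φ (cs.wordProd ω) := by
    simp [φ, CoxeterSystem.wordProd, map_list_prod, Function.comp_def]
  simpa [prod_map_signedConj] using
    congrArg Prod.snd (congrFun ((prod_eq ω).trans ((congrArg φ h).trans (prod_eq ω').symm)) (t, 0))

theorem simple_mem_rightInvSeq_of_isRightDescent {ω : List B} {j : B}
    (h : cs.IsRightDescent (cs.wordProd ω) j) : cs.simple j ∈ cs.rightInvSeq ω := by
  classical
  obtain ⟨τ, hτ, wordProd_τ⟩ := cs.exists_isReduced (cs.wordProd ω * cs.simple j)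
  have wordProd_concat : cs.wordProd (τ.concat j) = cs.wordProd ω := by
    rw [cs.wordProd_concat, ← wordProd_τ, cs.simple_mul_simple_cancel_right]
  have reduced_concat : cs.IsReduced (τ.concat j) := by
    rw [CoxeterSystem.IsReduced, wordProd_concat, ← cs.isRightDescent_iff.mp h, wordProd_τ, hτ.eq,
      List.length_concat]
  have count_concat : (cs.rightInvSeq (τ.concat j)).count (cs.simple j) = 1 :=
    List.count_eq_one_of_mem reduced_concat.nodup_rightInvSeq <| by
      rw [cs.rightInvSeq_concat, List.concat_eq_append]
      exact List.mem_append_right _ (List.mem_singleton_self _)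
  have count_odd := count_rightInvSeq_eq_of_wordProd_eq cs wordProd_concat (cs.simple j)
  by_contra not_mem
  rw [count_concat, List.count_eq_zero_of_not_mem not_mem] at count_odd
  simp at count_odd

theorem simple_mul_eq_mul_simple_of_length {w : W} {i j : B}
    (h_left : cs.length (cs.simple i * w) = cs.length w + 1)
    (h_right : cs.length (w * cs.simple j) = cs.length w + 1)
    (h_both : cs.length (cs.simple i * w * cs.simple j) = cs.length w) :
    cs.simple i * w = w * cs.simple j := by
  obtain ⟨ω, hω, rfl⟩ := cs.exists_isReduced w
  have mem_cons : cs.simple j ∈ cs.rightInvSeq (i :: ω) :=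
    simple_mem_rightInvSeq_of_isRightDescent cs <| by
      rw [CoxeterSystem.IsRightDescent, cs.wordProd_cons]
      omega
  rcases List.mem_cons.mp mem_cons with h_head | h_tail
  · rw [h_head, mul_assoc, mul_inv_cancel_left]
  · have := (cs.isRightInversion_of_mem_rightInvSeq hω h_tail).2
    omega

/-- `u = a b` is a product whose length is the sum of the lengths of the factors. -/
structure LengthAdd (a b u : W) : Prop where
  mul_eq : a * b = u
  length_eq : cs.length u = cs.length a + cs.length b

namespace LengthAdd

theorem one_left (w : W) : LengthAdd cs 1 w w := ⟨one_mul w, by simp⟩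

theorem one_right (w : W) : LengthAdd cs w 1 w := ⟨mul_one w, by simp⟩

variable {cs}

theorem inv {a b u : W} (h : LengthAdd cs a b u) : LengthAdd cs b⁻¹ a⁻¹ u⁻¹ where
  mul_eq := by rw [← mul_inv_rev, h.mul_eq]
  length_eq := by simp only [cs.length_inv, h.length_eq, add_comm]

theorem assoc {a b c ab abc : W} (hab : LengthAdd cs a b ab) (habc : LengthAdd cs ab c abc) :
    LengthAdd cs b c (b * c) ∧ LengthAdd cs a (b * c) abc := by
  have mul_eq : a * (b * c) = abc := by rw [← mul_assoc, hab.mul_eq, habc.mul_eq]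
  have := hab.length_eq
  have := habc.length_eq
  have := cs.length_mul_le b c
  have := mul_eq ▸ cs.length_mul_le a (b * c)
  exact ⟨⟨rfl, by omega⟩, ⟨mul_eq, by omega⟩⟩

theorem assoc_symm {a b c bc abc : W} (hbc : LengthAdd cs b c bc) (habc : LengthAdd cs a bc abc) :
    LengthAdd cs a b (a * b) ∧ LengthAdd cs (a * b) c abc := by
  have mul_eq : a * b * c = abc := by rw [mul_assoc, hbc.mul_eq, habc.mul_eq]
  have := hbc.length_eq
  have := habc.length_eq
  have := cs.length_mul_le a b
  have := mul_eq ▸ cs.length_mul_le (a * b) c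
  exact ⟨⟨rfl, by omega⟩, ⟨mul_eq, by omega⟩⟩

theorem induction_left {p : W → Prop} (w : W) (one : p 1)
    (simple_mul : ∀ ⦃i : B⦄ ⦃v u : W⦄, LengthAdd cs (cs.simple i) v u → p v → p u) : p w := by
  obtain ⟨ω, hω, rfl⟩ := cs.exists_isReduced w
  induction ω with
  | nil => simpa using one
  | cons i ω ih =>
    have hω' : cs.IsReduced ω := hω.drop 1
    refine simple_mul ⟨(cs.wordProd_cons i ω).symm, ?_⟩ (ih hω')
    rw [hω.eq, hω'.eq, cs.length_simple, List.length_cons, add_comm]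

theorem induction_right {p : W → Prop} (w : W) (one : p 1)
    (mul_simple : ∀ ⦃i : B⦄ ⦃v u : W⦄, LengthAdd cs v (cs.simple i) u → p v → p u) : p w := by
  rw [← inv_inv w]
  refine induction_left (cs := cs) (p := fun v => p v⁻¹) w⁻¹ (by simpa using one) ?_
  intro i v u h hp
  exact mul_simple (by simpa using h.inv) hp

theorem of_simple_mul {i : B} {w u : W} (h : cs.simple i * w = u) :
    LengthAdd cs (cs.simple i) w u ∨ LengthAdd cs (cs.simple i) u w := by
  have h_length := cs.length_simple_mul w i
  rw [h] at h_length
  refine h_length.imp (fun h_up => ⟨h, ?_⟩) (fun h_down => ⟨?_, ?_⟩)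
  · rw [h_up, cs.length_simple, add_comm]
  · rw [← h, cs.simple_mul_simple_cancel_left]
  · rw [← h_down, cs.length_simple, add_comm]

theorem of_mul_simple {i : B} {w u : W} (h : w * cs.simple i = u) :
    LengthAdd cs w (cs.simple i) u ∨ LengthAdd cs u (cs.simple i) w := by
  have h_length := cs.length_mul_simple w i
  rw [h] at h_length
  refine h_length.imp (fun h_up => ⟨h, ?_⟩) (fun h_down => ⟨?_, ?_⟩)
  · rw [h_up, cs.length_simple]
  · rw [← h, cs.simple_mul_simple_cancel_right]
  · rw [← h_down, cs.length_simple]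

end LengthAdd

end Coxeter

section Translation

variable {W C : Type*} [Category C]

/-- A left translation by `a`: transformations `T a ∘ T b ⟶ T (a b)` for all `b`. The product `a b`
is passed as an element `u` with a proof of `a * b = u`, which keeps `eqToHom` out of the
associativity laws. -/
abbrev LeftTranslation [Mul W] (T : W → C ⥤ C) (a : W) :=
  ∀ ⦃b u : W⦄, a * b = u → (T b ⋙ T a ⟶ T u)

/-- A right translation by `z`: transformations `T b ∘ T z ⟶ T (b z)` for all `b`, indexed like
left translations. -/
abbrev RightTranslation [Mul W] (T : W → C ⥤ C) (z : W) :=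
  ∀ ⦃b u : W⦄, b * z = u → (T z ⋙ T b ⟶ T u)

variable {T : W → C ⥤ C}

theorem LeftTranslation.app_eq_comp_eqToHom [Mul W] {a b u v : W} (L : LeftTranslation T a)
    (hu : a * b = u) (hv : a * b = v) (X : C) :
    (L hv).app X = (L hu).app X ≫ eqToHom (by rw [← hu, hv]) := by
  subst hu hv
  simp

/-- A left translation by `a` and a right translation by `z` commute at `b` if both ways of forming
`T a ∘ T b ∘ T z ⟶ T (a b z)` agree. -/
def LeftTranslation.CommutesAt [Mul W] {a b z bz ab abz : W} (L : LeftTranslation T a)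
    (R : RightTranslation T z) (hbz : b * z = bz) (habz : a * bz = abz) (hab : a * b = ab)
    (hab_z : ab * z = abz) : Prop :=
  ∀ X : C, (T a).map ((R hbz).app X) ≫ (L habz).app X =
    (L hab).app ((T z).obj X) ≫ (R hab_z).app X

/-- A left and a right translation commute if they commute at every element. -/
def LeftTranslation.Commutes [Mul W] {a z : W} (L : LeftTranslation T a)
    (R : RightTranslation T z) : Prop :=
  ∀ ⦃b bz ab abz : W⦄ (hbz : b * z = bz) (habz : a * bz = abz) (hab : a * b = ab)
    (hab_z : ab * z = abz), L.CommutesAt R hbz habz hab hab_z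

variable [Semigroup W]

/-- The left translation by `a = a₁ a₂` obtained by splitting `T a` into `T a₁ ∘ T a₂` and
translating by `a₂`, then by `a₁`. -/
def LeftTranslation.comp {a₁ a₂ a : W} (L₁ : LeftTranslation T a₁) (L₂ : LeftTranslation T a₂)
    (h : a₁ * a₂ = a) (split : T a ⟶ T a₂ ⋙ T a₁) : LeftTranslation T a := fun b u hu =>
  Functor.whiskerLeft (T b) split ≫ (Functor.associator _ _ _).inv ≫
    Functor.whiskerRight (L₂ rfl) (T a₁) ≫ L₁ (show a₁ * (a₂ * b) = u by rw [← mul_assoc, h, hu])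

/-- The right translation by `z = z₁ z₂` obtained by splitting `T z` into `T z₁ ∘ T z₂` and
translating by `z₁`, then by `z₂`. -/
def RightTranslation.comp {z₁ z₂ z : W} (R₁ : RightTranslation T z₁) (R₂ : RightTranslation T z₂)
    (h : z₁ * z₂ = z) (split : T z ⟶ T z₂ ⋙ T z₁) : RightTranslation T z := fun b u hu =>
  Functor.whiskerRight split (T b) ≫ (Functor.associator _ _ _).hom ≫
    Functor.whiskerLeft (T z₂) (R₁ rfl) ≫ R₂ (show b * z₁ * z₂ = u by rw [mul_assoc, h, hu])

theorem LeftTranslation.comp_app {a₁ a₂ a b u : W} (L₁ : LeftTranslation T a₁)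
    (L₂ : LeftTranslation T a₂) (h : a₁ * a₂ = a) (split : T a ⟶ T a₂ ⋙ T a₁) (hu : a * b = u)
    (h₂ : a₁ * (a₂ * b) = u) (X : C) :
    (L₁.comp L₂ h split hu).app X =
      split.app ((T b).obj X) ≫ (T a₁).map ((L₂ rfl).app X) ≫ (L₁ h₂).app X := by
  simp [LeftTranslation.comp]

theorem RightTranslation.comp_app {z₁ z₂ z b u : W} (R₁ : RightTranslation T z₁)
    (R₂ : RightTranslation T z₂) (h : z₁ * z₂ = z) (split : T z ⟶ T z₂ ⋙ T z₁) (hu : b * z = u)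
    (h₁ : b * z₁ * z₂ = u) (X : C) :
    (R₁.comp R₂ h split hu).app X =
      (T b).map (split.app X) ≫ (R₁ rfl).app ((T z₂).obj X) ≫ (R₂ h₁).app X := by
  simp [RightTranslation.comp]

theorem LeftTranslation.Commutes.comp_left {a₁ a₂ a z : W} {L₁ : LeftTranslation T a₁}
    {L₂ : LeftTranslation T a₂} {R : RightTranslation T z} (hL₁ : L₁.Commutes R)
    (hL₂ : L₂.Commutes R) (h : a₁ * a₂ = a) (split : T a ⟶ T a₂ ⋙ T a₁) :
    (L₁.comp L₂ h split).Commutes R := by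
  intro b bz ab abz hbz habz hab habz' X
  have habz₁ : a₁ * (a₂ * bz) = abz := by rw [← mul_assoc, h, habz]
  have hab₁ : a₁ * (a₂ * b) = ab := by rw [← mul_assoc, h, hab]
  have habz₂ : a₂ * b * z = a₂ * bz := by rw [mul_assoc, hbz]
  calc (T a).map ((R hbz).app X) ≫ (L₁.comp L₂ h split habz).app X
      = split.app ((T b).obj ((T z).obj X)) ≫
          (T a₁).map ((T a₂).map ((R hbz).app X) ≫ (L₂ rfl).app X) ≫ (L₁ habz₁).app X := by
        simp [comp_app (h₂ := habz₁)]
    _ = split.app ((T b).obj ((T z).obj X)) ≫ (T a₁).map ((L₂ rfl).app ((T z).obj X)) ≫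
          (T a₁).map ((R habz₂).app X) ≫ (L₁ habz₁).app X := by
        rw [hL₂ hbz rfl rfl habz₂, Functor.map_comp, Category.assoc]
    _ = (L₁.comp L₂ h split hab).app ((T z).obj X) ≫ (R habz').app X := by
        rw [hL₁ habz₂ habz₁ hab₁ habz', comp_app (h₂ := hab₁)]
        simp only [Category.assoc]

theorem LeftTranslation.Commutes.comp_right {a z₁ z₂ z : W} {L : LeftTranslation T a}
    {R₁ : RightTranslation T z₁} {R₂ : RightTranslation T z₂} (hR₁ : L.Commutes R₁)
    (hR₂ : L.Commutes R₂) (h : z₁ * z₂ = z) (split : T z ⟶ T z₂ ⋙ T z₁) :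
    L.Commutes (R₁.comp R₂ h split) := by
  intro b bz ab abz hbz habz hab habz' X
  have hbz₂ : b * z₁ * z₂ = bz := by rw [mul_assoc, h, hbz]
  have habz₂ : ab * z₁ * z₂ = abz := by rw [mul_assoc, h, habz']
  have habz₁ : a * (b * z₁) = ab * z₁ := by rw [← mul_assoc, hab]
  calc (T a).map ((R₁.comp R₂ h split hbz).app X) ≫ (L habz).app X
      = (T a).map ((T b).map (split.app X)) ≫ (T a).map ((R₁ rfl).app ((T z₂).obj X)) ≫
          (T a).map ((R₂ hbz₂).app X) ≫ (L habz).app X := by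
        rw [RightTranslation.comp_app (h₁ := hbz₂)]
        simp only [Functor.map_comp, Category.assoc]
    _ = (T a).map ((T b).map (split.app X)) ≫ ((T a).map ((R₁ rfl).app ((T z₂).obj X)) ≫
          (L habz₁).app ((T z₂).obj X)) ≫ (R₂ habz₂).app X := by
        rw [hR₂ hbz₂ habz habz₁ habz₂, Category.assoc]
    _ = ((T b ⋙ T a).map (split.app X) ≫ (L hab).app ((T z₁).obj ((T z₂).obj X))) ≫
          (R₁ rfl).app ((T z₂).obj X) ≫ (R₂ habz₂).app X := by
        rw [hR₁ rfl habz₁ hab rfl]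
        simp only [Functor.comp_map, Category.assoc]
    _ = (L hab).app ((T z).obj X) ≫ (R₁.comp R₂ h split habz').app X := by
        rw [RightTranslation.comp_app (h₁ := habz₂), ← Category.assoc ((L hab).app _)]
        exact congrArg (· ≫ _) ((L hab).naturality (split.app X))

end Translation

section Datum

variable {B W : Type*} [Group W] {M : CoxeterMatrix B} (cs : CoxeterSystem M W)

/-- The part of a quasi-action `(T w, c_{w,w'})` of a Coxeter group that lives on length-additive
pairs, where `c_{w,w'}` is an isomorphism (`mul`), and on pairs `(s, s)` of simple reflections,
where it is a transformation `c_s` to the identity (`contract`). -/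
structure QuasiActionDatum {C : Type*} [Category C] (T : W → C ⥤ C) where
  map_one : T 1 = 𝟭 C
  mul : ∀ w w' : W, cs.length (w * w') = cs.length w + cs.length w' →
    (T w' ⋙ T w ≅ T (w * w'))
  mul_one_left : ∀ (w : W) (h : cs.length (1 * w) = cs.length 1 + cs.length w),
    (mul 1 w h).hom = eqToHom (by rw [map_one, Functor.comp_id, one_mul])
  mul_one_right : ∀ (w : W) (h : cs.length (w * 1) = cs.length w + cs.length 1),
    (mul w 1 h).hom = eqToHom (by rw [map_one, Functor.id_comp, mul_one])
  mul_assoc : ∀ (w w' w'' : W)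
    (h1 : cs.length (w' * w'') = cs.length w' + cs.length w'')
    (h2 : cs.length (w * (w' * w'')) = cs.length w + cs.length (w' * w''))
    (h3 : cs.length (w * w') = cs.length w + cs.length w')
    (h4 : cs.length (w * w' * w'') = cs.length (w * w') + cs.length w'')
    (X : C),
    (T w).map ((mul w' w'' h1).hom.app X) ≫ (mul w (w' * w'') h2).hom.app X =
      (mul w w' h3).hom.app ((T w'').obj X) ≫ (mul (w * w') w'' h4).hom.app X ≫
        eqToHom (by rw [_root_.mul_assoc])
  contract : ∀ i : B, (T (cs.simple i) ⋙ T (cs.simple i) ⟶ 𝟭 C)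
  map_contract : ∀ (i : B) (X : C),
    (T (cs.simple i)).map ((contract i).app X) = (contract i).app ((T (cs.simple i)).obj X)
  contract_comm : ∀ (w : W) (i i' : B) (heq : cs.simple i * w = w * cs.simple i')
    (h1 : cs.length (cs.simple i * w) = cs.length (cs.simple i) + cs.length w)
    (h2 : cs.length (w * cs.simple i') = cs.length w + cs.length (cs.simple i'))
    (X : C),
    ((mul (cs.simple i) w h1).hom ≫ eqToHom (congrArg T heq) ≫
        (mul w (cs.simple i') h2).inv).app ((T (cs.simple i')).obj X) ≫
      (T w).map ((contract i').app X) =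
    (T (cs.simple i)).map
        (((mul w (cs.simple i') h2).hom ≫ eqToHom (congrArg T heq.symm) ≫
          (mul (cs.simple i) w h1).inv).app X) ≫
      (contract i).app ((T w).obj X)

end Datum

namespace QuasiActionDatum

variable {B W : Type*} [Group W] {M : CoxeterMatrix B} {cs : CoxeterSystem M W}
  {C : Type*} [Category C] {T : W → C ⥤ C} (D : QuasiActionDatum cs T)

/-- The isomorphism `c_{a,b} : T a ∘ T b ≅ T u` for a length-additive product `u = a b`. -/
def mulIso {a b u : W} (h : LengthAdd cs a b u) : T b ⋙ T a ≅ T u :=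
  D.mul a b (by rw [h.mul_eq, h.length_eq]) ≪≫ eqToIso (congrArg T h.mul_eq)

theorem mulIso_one_left (w : W) (X : C) :
    (D.mulIso (.one_left cs w)).hom.app X =
      (eqToIso D.map_one).hom.app ((T w).obj X) := by
  simp [mulIso, D.mul_one_left, eqToHom_app]

theorem mulIso_one_right (w : W) (X : C) :
    (D.mulIso (.one_right cs w)).hom.app X =
      (T w).map ((eqToIso D.map_one).hom.app X) := by
  simp [mulIso, D.mul_one_right, eqToHom_app, eqToHom_map]

theorem mulIso_assoc {x y z xy yz xyz : W} (hyz : LengthAdd cs y z yz)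
    (hxyz : LengthAdd cs x yz xyz) (hxy : LengthAdd cs x y xy) (hxyz' : LengthAdd cs xy z xyz)
    (X : C) :
    (T x).map ((D.mulIso hyz).hom.app X) ≫ (D.mulIso hxyz).hom.app X =
      (D.mulIso hxy).hom.app ((T z).obj X) ≫ (D.mulIso hxyz').hom.app X := by
  obtain ⟨rfl, hyz⟩ := hyz
  obtain ⟨rfl, hxy⟩ := hxy
  obtain ⟨rfl, hxyz'⟩ := hxyz'
  obtain ⟨h_assoc, hxyz⟩ := hxyz
  have key := D.mul_assoc x y z hyz (by rw [h_assoc, hxyz]) hxy hxyz' X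
  simp only [mulIso, Iso.trans_hom, eqToIso.hom, NatTrans.comp_app, eqToHom_app, eqToHom_refl,
    Category.comp_id]
  rw [← Category.assoc, key]
  simp

theorem mulIso_contract_comm {i j : B} {w v : W} (hl : LengthAdd cs (cs.simple i) w v)
    (hr : LengthAdd cs w (cs.simple j) v) (X : C) :
    (D.mulIso hl).hom.app ((T (cs.simple j)).obj X) ≫
        (D.mulIso hr).inv.app ((T (cs.simple j)).obj X) ≫ (T w).map ((D.contract j).app X) =
      (T (cs.simple i)).map ((D.mulIso hr).hom.app X ≫ (D.mulIso hl).inv.app X) ≫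
        (D.contract i).app ((T w).obj X) := by
  obtain ⟨rfl, hl⟩ := hl
  obtain ⟨h_comm, hr⟩ := hr
  simpa [mulIso] using D.contract_comm w i j h_comm.symm hl (by rw [h_comm, hr]) X

/-- A left translation by `a` extends the datum if it is `c_{a,b}` at every `b` for which
`ℓ (a b) = ℓ a + ℓ b`. -/
def ExtendsLeft {a : W} (L : LeftTranslation T a) : Prop :=
  ∀ ⦃b u : W⦄ (h : LengthAdd cs a b u), L h.mul_eq = (D.mulIso h).hom

/-- A right translation by `z` extends the datum if it is `c_{b,z}` at every `b` for which
`ℓ (b z) = ℓ b + ℓ z`. -/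
def ExtendsRight {z : W} (R : RightTranslation T z) : Prop :=
  ∀ ⦃b u : W⦄ (h : LengthAdd cs b z u), R h.mul_eq = (D.mulIso h).hom

open Classical in
/-- Left translation by a simple reflection: the isomorphism `c_{s,w}` if `s w` is longer than `w`,
and otherwise the contraction of `T s ∘ T w ≅ T s ∘ T s ∘ T (s w)` by `c_s`. -/
noncomputable def leftMul (i : B) : LeftTranslation T (cs.simple i) := fun _ u hu =>
  if h : LengthAdd cs _ _ u then (D.mulIso h).hom
  else
    Functor.whiskerRight (D.mulIso ((LengthAdd.of_simple_mul hu).resolve_left h)).inv _ ≫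
      (Functor.associator _ _ _).hom ≫ Functor.whiskerLeft (T u) (D.contract i) ≫
        (Functor.rightUnitor _).hom

open Classical in
/-- Right translation by a simple reflection: the isomorphism `c_{w,s}` if `w s` is longer than `w`,
and otherwise the contraction of `T w ∘ T s ≅ T (w s) ∘ T s ∘ T s` by `c_s`. -/
noncomputable def rightMul (i : B) : RightTranslation T (cs.simple i) := fun _ u hu =>
  if h : LengthAdd cs _ _ u then (D.mulIso h).hom
  else
    Functor.whiskerLeft _ (D.mulIso ((LengthAdd.of_mul_simple hu).resolve_left h)).inv ≫
      (Functor.associator _ _ _).inv ≫ Functor.whiskerRight (D.contract i) (T u) ≫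
        (Functor.leftUnitor _).hom

theorem extendsLeft_leftMul (i : B) : D.ExtendsLeft (D.leftMul i) := fun _ _ h => dif_pos h

theorem extendsRight_rightMul (i : B) : D.ExtendsRight (D.rightMul i) := fun _ _ h => dif_pos h

theorem leftMul_app_of_descent {i : B} {w u : W} (h : LengthAdd cs (cs.simple i) u w)
    (hu : cs.simple i * w = u) (X : C) :
    (D.leftMul i hu).app X =
      (T (cs.simple i)).map ((D.mulIso h).inv.app X) ≫ (D.contract i).app ((T u).obj X) := by
  have not_up : ¬ LengthAdd cs (cs.simple i) w u := fun h' => by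
    have := h.length_eq
    have := h'.length_eq
    have := cs.length_simple i
    omega
  simp [leftMul, not_up]

theorem rightMul_app_of_descent {i : B} {w u : W} (h : LengthAdd cs u (cs.simple i) w)
    (hu : w * cs.simple i = u) (X : C) :
    (D.rightMul i hu).app X =
      (D.mulIso h).inv.app ((T (cs.simple i)).obj X) ≫ (T u).map ((D.contract i).app X) := by
  have not_up : ¬ LengthAdd cs w (cs.simple i) u := fun h' => by
    have := h.length_eq
    have := h'.length_eq
    have := cs.length_simple i
    omega
  simp [rightMul, not_up]

theorem map_mulIso_comp_leftMul {i : B} {w u : W} (h : LengthAdd cs (cs.simple i) u w)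
    (hu : cs.simple i * w = u) (X : C) :
    (T (cs.simple i)).map ((D.mulIso h).hom.app X) ≫ (D.leftMul i hu).app X =
      (D.contract i).app ((T u).obj X) := by
  rw [D.leftMul_app_of_descent h hu, ← Functor.map_comp_assoc, Iso.hom_inv_id_app,
    CategoryTheory.Functor.map_id, Category.id_comp]

theorem mulIso_comp_rightMul {i : B} {w u : W} (h : LengthAdd cs u (cs.simple i) w)
    (hu : w * cs.simple i = u) (X : C) :
    (D.mulIso h).hom.app ((T (cs.simple i)).obj X) ≫ (D.rightMul i hu).app X =
      (T u).map ((D.contract i).app X) := by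
  rw [D.rightMul_app_of_descent h hu, Iso.hom_inv_id_app_assoc]

-- The position is that of the middle factor in the square of the length-additive products
-- `w`, `s w`, `w t`, `s w t`, with `w` at the bottom and `s w` on the left.
theorem commutesAt_bottom {i j : B} {w sw wt swt : W} (hsw : LengthAdd cs (cs.simple i) w sw)
    (hwt : LengthAdd cs w (cs.simple j) wt) (hswt : LengthAdd cs (cs.simple i) wt swt)
    (hswt' : LengthAdd cs sw (cs.simple j) swt) :
    (D.leftMul i).CommutesAt (D.rightMul j) hwt.mul_eq hswt.mul_eq hsw.mul_eq hswt'.mul_eq := by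
  intro X
  rw [D.extendsLeft_leftMul i hswt, D.extendsLeft_leftMul i hsw, D.extendsRight_rightMul j hwt,
    D.extendsRight_rightMul j hswt']
  exact D.mulIso_assoc hwt hswt hsw hswt' X

theorem commutesAt_left {i j : B} {w sw wt swt : W} (hsw : LengthAdd cs (cs.simple i) w sw)
    (hwt : LengthAdd cs w (cs.simple j) wt) (hswt : LengthAdd cs (cs.simple i) wt swt)
    (hswt' : LengthAdd cs sw (cs.simple j) swt) (hs : cs.simple i * sw = w)
    (hs' : cs.simple i * swt = wt) :
    (D.leftMul i).CommutesAt (D.rightMul j) hswt'.mul_eq hs' hs hwt.mul_eq := by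
  intro X
  rw [D.extendsRight_rightMul j hwt, D.extendsRight_rightMul j hswt', ← cancel_epi
    ((T (cs.simple i)).map ((D.mulIso hsw).hom.app ((T (cs.simple j)).obj X)))]
  rw [← Functor.map_comp_assoc, ← D.mulIso_assoc hwt hswt hsw hswt', Functor.map_comp_assoc,
    D.map_mulIso_comp_leftMul, ← Category.assoc, D.map_mulIso_comp_leftMul]
  exact (D.contract i).naturality ((D.mulIso hwt).hom.app X)

theorem commutesAt_right {i j : B} {w sw wt swt : W} (hsw : LengthAdd cs (cs.simple i) w sw)
    (hwt : LengthAdd cs w (cs.simple j) wt) (hswt : LengthAdd cs (cs.simple i) wt swt)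
    (hswt' : LengthAdd cs sw (cs.simple j) swt) (ht : wt * cs.simple j = w)
    (ht' : swt * cs.simple j = sw) :
    (D.leftMul i).CommutesAt (D.rightMul j) ht hsw.mul_eq hswt.mul_eq ht' := by
  intro X
  rw [D.extendsLeft_leftMul i hsw, D.extendsLeft_leftMul i hswt, ← cancel_epi
    ((T (cs.simple i)).map ((D.mulIso hwt).hom.app ((T (cs.simple j)).obj X)))]
  rw [← Functor.map_comp_assoc, D.mulIso_comp_rightMul, ← Category.assoc,
    D.mulIso_assoc hwt hswt hsw hswt', Category.assoc, D.mulIso_comp_rightMul]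
  exact (D.mulIso hsw).hom.naturality ((D.contract j).app X)

theorem commutesAt_top {i j : B} {w sw wt swt : W} (hsw : LengthAdd cs (cs.simple i) w sw)
    (hwt : LengthAdd cs w (cs.simple j) wt) (hswt : LengthAdd cs (cs.simple i) wt swt)
    (hswt' : LengthAdd cs sw (cs.simple j) swt) (ht' : swt * cs.simple j = sw)
    (hs : cs.simple i * sw = w) (hs' : cs.simple i * swt = wt) (ht : wt * cs.simple j = w) :
    (D.leftMul i).CommutesAt (D.rightMul j) ht' hs hs' ht := by
  intro X
  let TtX := (T (cs.simple j)).obj X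
  rw [← cancel_epi ((T (cs.simple i)).map ((T (cs.simple i)).map ((D.mulIso hwt).hom.app TtX) ≫
    (D.mulIso hswt).hom.app TtX))]
  have via_right : ((T (cs.simple i)).map ((D.mulIso hwt).hom.app TtX) ≫
      (D.mulIso hswt).hom.app TtX) ≫ (D.rightMul j ht').app X =
        (T (cs.simple i)).map ((T w).map ((D.contract j).app X)) ≫ (D.mulIso hsw).hom.app X := by
    rw [D.mulIso_assoc hwt hswt hsw hswt', Category.assoc, D.mulIso_comp_rightMul]
    exact ((D.mulIso hsw).hom.naturality ((D.contract j).app X)).symm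
  have via_left : (T (cs.simple i)).map ((T (cs.simple i)).map ((D.mulIso hwt).hom.app TtX) ≫
      (D.mulIso hswt).hom.app TtX) ≫ (D.leftMul i hs').app TtX =
        (D.contract i).app ((T w).obj ((T (cs.simple j)).obj TtX)) ≫
          (D.mulIso hwt).hom.app TtX := by
    rw [Functor.map_comp_assoc, D.map_mulIso_comp_leftMul]
    exact (D.contract i).naturality ((D.mulIso hwt).hom.app TtX)
  rw [← Functor.map_comp_assoc, via_right, Functor.map_comp_assoc, D.map_mulIso_comp_leftMul,
    ← Category.assoc, via_left, Category.assoc, D.mulIso_comp_rightMul]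
  exact (D.contract i).naturality ((T w).map ((D.contract j).app X))

theorem commutesAt_bottom_of_simple_mul_eq {i j : B} {w v : W}
    (hl : LengthAdd cs (cs.simple i) w v) (hr : LengthAdd cs w (cs.simple j) v)
    (hs : cs.simple i * v = w) (ht : v * cs.simple j = w) :
    (D.leftMul i).CommutesAt (D.rightMul j) hr.mul_eq hs hl.mul_eq ht := by
  intro X
  rw [D.leftMul_app_of_descent hl, D.extendsLeft_leftMul i hl, D.extendsRight_rightMul j hr,
    D.rightMul_app_of_descent hr, ← Functor.map_comp_assoc]
  exact (D.mulIso_contract_comm hl hr X).symm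

theorem commutesAt_top_of_simple_mul_eq {i j : B} {w v : W}
    (hl : LengthAdd cs (cs.simple i) w v) (hr : LengthAdd cs w (cs.simple j) v)
    (hs : cs.simple i * v = w) (ht : v * cs.simple j = w) :
    (D.leftMul i).CommutesAt (D.rightMul j) ht hl.mul_eq hs hr.mul_eq := by
  intro X
  let TtX := (T (cs.simple j)).obj X
  let swap := (D.mulIso hr).hom.app X ≫ (D.mulIso hl).inv.app X
  rw [D.extendsLeft_leftMul i hl, D.extendsRight_rightMul j hr,
    ← cancel_epi ((T (cs.simple i)).map ((D.mulIso hl).hom.app TtX))]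
  have contract_swap : (T (cs.simple i)).map ((T (cs.simple i)).map swap) ≫
      (D.contract i).app ((T (cs.simple i)).obj ((T w).obj X)) =
        (D.contract i).app ((T w).obj TtX) ≫ swap :=
    (D.contract i).naturality swap
  calc (T (cs.simple i)).map ((D.mulIso hl).hom.app TtX) ≫
        (T (cs.simple i)).map ((D.rightMul j ht).app X) ≫ (D.mulIso hl).hom.app X
      = (T (cs.simple i)).map ((T (cs.simple i)).map swap ≫ (D.contract i).app ((T w).obj X)) ≫
          (D.mulIso hl).hom.app X := by
        rw [D.rightMul_app_of_descent hr, ← Functor.map_comp_assoc,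
          D.mulIso_contract_comm hl hr X]
    _ = ((D.contract i).app ((T w).obj TtX) ≫ swap) ≫ (D.mulIso hl).hom.app X := by
        rw [Functor.map_comp, D.map_contract, contract_swap]
    _ = (T (cs.simple i)).map ((D.mulIso hl).hom.app TtX) ≫
          (D.leftMul i hs).app TtX ≫ (D.mulIso hr).hom.app X := by
        rw [← Category.assoc ((T (cs.simple i)).map _), D.map_mulIso_comp_leftMul]
        simp [swap]

theorem leftMul_commutes_rightMul (i j : B) : (D.leftMul i).Commutes (D.rightMul j) := by
  intro b bt sb sbt hbt hsbt hsb hsbt'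
  have ht_sb : sbt * cs.simple j = sb := by rw [← hsbt', cs.simple_mul_simple_cancel_right]
  have ht_b : bt * cs.simple j = b := by rw [← hbt, cs.simple_mul_simple_cancel_right]
  have ℓ_i := cs.length_simple i
  have ℓ_j := cs.length_simple j
  rcases LengthAdd.of_simple_mul hsb with hl | hl <;>
  rcases LengthAdd.of_simple_mul hsbt with hl' | hl' <;>
  rcases LengthAdd.of_mul_simple hbt with hr | hr <;>
  rcases LengthAdd.of_mul_simple hsbt' with hr' | hr' <;>
  have ℓ_hl := hl.length_eq <;> have ℓ_hl' := hl'.length_eq <;>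
  have ℓ_hr := hr.length_eq <;> have ℓ_hr' := hr'.length_eq <;>
  try (exfalso; omega)
  · exact D.commutesAt_bottom hl hr hl' hr'
  · exact D.commutesAt_right hl' hr hl hr' hbt hsbt'
  · obtain rfl : sb = bt := by
      rw [← hsb, ← hbt]
      exact simple_mul_eq_mul_simple_of_length cs (by rw [hsb]; omega) (by rw [hbt]; omega)
        (by rw [hsb, hsbt']; omega)
    obtain rfl : sbt = b := by rw [← hsbt', ht_b]
    exact D.commutesAt_bottom_of_simple_mul_eq hl hr hsbt ht_b
  · obtain rfl : sbt = b := by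
      rw [← hsbt, ← ht_b]
      exact simple_mul_eq_mul_simple_of_length cs (by rw [hsbt]; omega) (by rw [ht_b]; omega)
        (by rw [hsbt, ht_sb]; omega)
    obtain rfl : sb = bt := by rw [← ht_sb, hbt]
    exact D.commutesAt_top_of_simple_mul_eq hl hr hsb ht_sb
  · exact D.commutesAt_left hl hr' hl' hr hsb hsbt
  · exact D.commutesAt_top hl' hr' hl hr hbt hsbt hsb hsbt'

variable {D} in
theorem ExtendsLeft.comp {a₁ a₂ a : W} {L₁ : LeftTranslation T a₁} {L₂ : LeftTranslation T a₂}
    (hL₁ : D.ExtendsLeft L₁) (hL₂ : D.ExtendsLeft L₂) (h : LengthAdd cs a₁ a₂ a) :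
    D.ExtendsLeft (L₁.comp L₂ h.mul_eq (D.mulIso h).inv) := by
  intro b u hab
  obtain ⟨h₂, h₁⟩ := h.assoc hab
  ext X
  rw [LeftTranslation.comp_app (h₂ := h₁.mul_eq), hL₁ h₁, hL₂ h₂, D.mulIso_assoc h₂ h₁ h hab,
    Iso.inv_hom_id_app_assoc]

variable {D} in
theorem ExtendsRight.comp {z₁ z₂ z : W} {R₁ : RightTranslation T z₁} {R₂ : RightTranslation T z₂}
    (hR₁ : D.ExtendsRight R₁) (hR₂ : D.ExtendsRight R₂) (h : LengthAdd cs z₁ z₂ z) :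
    D.ExtendsRight (R₁.comp R₂ h.mul_eq (D.mulIso h).inv) := by
  intro b u hbz
  obtain ⟨h₁, h₂⟩ := h.assoc_symm hbz
  ext X
  rw [RightTranslation.comp_app (h₁ := h₂.mul_eq), hR₁ h₁, hR₂ h₂, ← D.mulIso_assoc h hbz h₁ h₂,
    ← Functor.map_comp_assoc, Iso.inv_hom_id_app, CategoryTheory.Functor.map_id, Category.id_comp]

theorem exists_extendsLeft_commutes (a : W) :
    ∃ L : LeftTranslation T a, D.ExtendsLeft L ∧ ∀ j, L.Commutes (D.rightMul j) := by
  induction a using LengthAdd.induction_left (cs := cs) with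
  | one =>
    refine ⟨fun b u h => (D.mulIso ⟨h, by simp [← h]⟩).hom, fun _ _ _ => rfl, ?_⟩
    intro j b bt b' bt' hbt hbt' hb hbt'' X
    obtain rfl : bt = bt' := by rw [← hbt', one_mul]
    obtain rfl : b = b' := by rw [← hb, one_mul]
    rw [D.mulIso_one_left, D.mulIso_one_left]
    exact (eqToIso D.map_one).hom.naturality ((D.rightMul j hbt).app X)
  | simple_mul h ih =>
    obtain ⟨L, hL, hLR⟩ := ih
    exact ⟨_, .comp (D.extendsLeft_leftMul _) hL h,
      fun j => (D.leftMul_commutes_rightMul _ j).comp_left (hLR j) _ _⟩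

theorem exists_extendsRight_commutes (z : W) :
    ∃ R : RightTranslation T z, D.ExtendsRight R ∧
      ∀ ⦃a : W⦄ ⦃L : LeftTranslation T a⦄, (∀ j, L.Commutes (D.rightMul j)) → L.Commutes R := by
  induction z using LengthAdd.induction_right (cs := cs) with
  | one =>
    refine ⟨fun b u h => (D.mulIso ⟨h, by simp [← h]⟩).hom, fun _ _ _ => rfl, ?_⟩
    intro a L _ b b' ab ab' hb hab' hab hab'' X
    obtain rfl : b = b' := by rw [← hb, mul_one]
    obtain rfl : ab = ab' := by rw [← hab'', mul_one]
    rw [D.mulIso_one_right, D.mulIso_one_right]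
    exact (L hab).naturality ((eqToIso D.map_one).hom.app X)
  | mul_simple h ih =>
    obtain ⟨R, hR, hLR⟩ := ih
    exact ⟨_, hR.comp (D.extendsRight_rightMul _) h,
      fun _ _ hL => (hLR hL).comp_right (hL _) _ _⟩

variable {D} in
theorem ExtendsLeft.eq_of_commutes {a z az : W} {L : LeftTranslation T a}
    {R : RightTranslation T z} (hL : D.ExtendsLeft L) (hR : D.ExtendsRight R)
    (hLR : L.Commutes R) (h : a * z = az) : L h = R h := by
  ext X
  have at_one := hLR (one_mul z) h (mul_one a) h X
  rw [hR (.one_left cs z), hL (.one_right cs a), D.mulIso_one_left] at at_one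
  have same_unit : (D.mulIso (.one_right cs a)).hom.app ((T z).obj X) =
      (T a).map ((eqToIso D.map_one).hom.app ((T z).obj X)) := D.mulIso_one_right a _
  rw [same_unit] at at_one
  exact (cancel_epi _).mp at_one

theorem rightMul_simple_app (i : B) (h : cs.simple i * cs.simple i = 1) (X : C) :
    (D.rightMul i h).app X = (D.contract i).app X ≫ (eqToIso D.map_one).inv.app X := by
  rw [← cancel_epi ((D.mulIso (.one_left cs (cs.simple i))).hom.app ((T (cs.simple i)).obj X)),
    D.mulIso_comp_rightMul, D.mulIso_one_left]
  exact (NatIso.naturality_2 (eqToIso D.map_one) ((D.contract i).app X)).symm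

theorem exists_extendsLeft_assoc :
    ∃ Q : ∀ a : W, LeftTranslation T a, (∀ a, D.ExtendsLeft (Q a)) ∧
      (∀ (i : B) (h : cs.simple i * cs.simple i = 1), Q (cs.simple i) h = D.rightMul i h) ∧
      ∀ ⦃x y z xy yz xyz : W⦄ (hyz : y * z = yz) (hxyz : x * yz = xyz) (hxy : x * y = xy)
        (hxyz' : xy * z = xyz) (X : C),
        (T x).map ((Q y hyz).app X) ≫ (Q x hxyz).app X =
          (Q x hxy).app ((T z).obj X) ≫ (Q xy hxyz').app X := by
  choose L hL hL_rightMul using D.exists_extendsLeft_commutes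
  choose R hR hR_comm using D.exists_extendsRight_commutes
  have L_commutes_R (a z : W) : (L a).Commutes (R z) := hR_comm z (hL_rightMul a)
  have L_eq_R {a z u : W} (h : a * z = u) : L a h = R z h :=
    (hL a).eq_of_commutes (hR z) (L_commutes_R a z) h
  refine ⟨L, hL, fun i h => ?_, fun x y z xy yz xyz hyz hxyz hxy hxyz' X => ?_⟩
  · exact (hL _).eq_of_commutes (D.extendsRight_rightMul i) (hL_rightMul _ i) h
  · rw [L_eq_R hyz, L_eq_R hxyz']
    exact L_commutes_R x z hyz hxyz hxy hxyz' X

end QuasiActionDatum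

theorem stmt_0_general {B W C : Type*} [Group W] {M : CoxeterMatrix B} {cs : CoxeterSystem M W}
    [Category C] {T : W → C ⥤ C} (D : QuasiActionDatum cs T) :
    ∃ Q : ∀ w w' : W, (T w' ⋙ T w ⟶ T (w * w')),
      (∀ (w w' : W) (h : cs.length (w * w') = cs.length w + cs.length w'),
        Q w w' = (D.mul w w' h).hom) ∧
      (∀ (i : B) (X : C),
        (Q (cs.simple i) (cs.simple i)).app X =
          (D.contract i).app X ≫
            eqToHom (show (𝟭 C).obj X = (T (cs.simple i * cs.simple i)).obj X by
              rw [cs.simple_mul_simple_self, D.map_one])) ∧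
      (∀ (w w' w'' : W) (X : C),
        (T w).map ((Q w' w'').app X) ≫ (Q w (w' * w'')).app X =
          (Q w w').app ((T w'').obj X) ≫ (Q (w * w') w'').app X ≫
            eqToHom (by rw [mul_assoc])) := by
  obtain ⟨Q, hQ, Q_simple, Q_assoc⟩ := D.exists_extendsLeft_assoc
  refine ⟨fun w w' => Q w rfl, fun w w' h => ?_, fun i X => ?_, fun w w' w'' X => ?_⟩
  · simpa [QuasiActionDatum.mulIso] using hQ w ⟨rfl, h⟩
  · have h_sq := cs.simple_mul_simple_self i
    rw [(Q (cs.simple i)).app_eq_comp_eqToHom h_sq, Q_simple i h_sq, D.rightMul_simple_app i h_sq]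
    simp [eqToHom_app]
  · rw [Q_assoc rfl rfl rfl (mul_assoc w w' w''),
      (Q (w * w')).app_eq_comp_eqToHom rfl (mul_assoc _ _ _)]

/-- Given a finite Coxeter system `(W,S)`, functors `T w : 𝒞 ⥤ 𝒞` with
`T 1 = 𝟭`, natural isomorphisms `c_{w,w'} : T w ∘ T w' ≅ T (w w')` for length-additive
pairs (with `c_{1,w}`, `c_{w,1}` the identities) satisfying associativity on length-additive
triples, and natural transformations `c_s : T s ∘ T s ⟶ 𝟭` satisfying conditions (1) and
(2), there is a quasi-action of `W`: a family `C_{w,w'} : T w ∘ T w' ⟶ T (w w')` extending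
the `c_{w,w'}` and the `c_s` and satisfying associativity for all triples. -/
theorem stmt_0 {B : Type*} {W : Type*} [Group W] [Finite W]
    {M : CoxeterMatrix B} (cs : CoxeterSystem M W)
    {C : Type*} [Category C]
    (T : W → C ⥤ C) (hT1 : T 1 = 𝟭 C)
    (c : ∀ w w' : W, cs.length (w * w') = cs.length w + cs.length w' →
      (T w' ⋙ T w ≅ T (w * w')))
    (hc_one_left : ∀ (w : W) (h : cs.length (1 * w) = cs.length 1 + cs.length w),
      (c 1 w h).hom = eqToHom (by rw [hT1, Functor.comp_id, one_mul]))
    (hc_one_right : ∀ (w : W) (h : cs.length (w * 1) = cs.length w + cs.length 1),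
      (c w 1 h).hom = eqToHom (by rw [hT1, Functor.id_comp, mul_one]))
    (hassoc : ∀ (w w' w'' : W)
      (h1 : cs.length (w' * w'') = cs.length w' + cs.length w'')
      (h2 : cs.length (w * (w' * w'')) = cs.length w + cs.length (w' * w''))
      (h3 : cs.length (w * w') = cs.length w + cs.length w')
      (h4 : cs.length (w * w' * w'') = cs.length (w * w') + cs.length w'')
      (X : C),
      (T w).map ((c w' w'' h1).hom.app X) ≫ (c w (w' * w'') h2).hom.app X =
        (c w w' h3).hom.app ((T w'').obj X) ≫ (c (w * w') w'' h4).hom.app X ≫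
          eqToHom (by rw [mul_assoc]))
    (d : ∀ i : B, (T (cs.simple i) ⋙ T (cs.simple i) ⟶ 𝟭 C))
    (hd1 : ∀ (i : B) (X : C),
      (T (cs.simple i)).map ((d i).app X) = (d i).app ((T (cs.simple i)).obj X))
    (hd2 : ∀ (w : W) (i i' : B)
      (heq : cs.simple i * w = w * cs.simple i')
      (hli : cs.length (cs.simple i * w) = cs.length w + 1)
      (h1 : cs.length (cs.simple i * w) = cs.length (cs.simple i) + cs.length w)
      (h2 : cs.length (w * cs.simple i') = cs.length w + cs.length (cs.simple i'))
      (X : C),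
      ((c (cs.simple i) w h1).hom ≫ eqToHom (congrArg T heq) ≫
          (c w (cs.simple i') h2).inv).app ((T (cs.simple i')).obj X) ≫
        (T w).map ((d i').app X) =
      (T (cs.simple i)).map
          (((c w (cs.simple i') h2).hom ≫ eqToHom (congrArg T heq.symm) ≫
            (c (cs.simple i) w h1).inv).app X) ≫
        (d i).app ((T w).obj X)) :
    ∃ Q : ∀ w w' : W, (T w' ⋙ T w ⟶ T (w * w')),
      (∀ (w w' : W) (h : cs.length (w * w') = cs.length w + cs.length w'),
        Q w w' = (c w w' h).hom) ∧
      (∀ (i : B) (X : C),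
        (Q (cs.simple i) (cs.simple i)).app X =
          (d i).app X ≫
            eqToHom (show (𝟭 C).obj X = (T (cs.simple i * cs.simple i)).obj X by
              rw [cs.simple_mul_simple_self, hT1])) ∧
      (∀ (w w' w'' : W) (X : C),
        (T w).map ((Q w' w'').app X) ≫ (Q w (w' * w'')).app X =
          (Q w w').app ((T w'').obj X) ≫ (Q (w * w') w'').app X ≫
            eqToHom (by rw [mul_assoc])) :=
  stmt_0_general ⟨hT1, c, hc_one_left, hc_one_right, hassoc, d, hd1, fun w i j heq h1 h2 X =>
    hd2 w i j heq (by rw [h1, cs.length_simple, add_comm]) h1 h2 X⟩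
end

section
/- Let (W,S) be a finite Coxeter system with length function ℓ, 𝒞 a category, T(w) : 𝒞 ⥤ 𝒞 functors with T(1) = 𝟭_𝒞, together with natural isomorphisms c_{w,w'} : T(w) ∘ T(w') ≅ T(ww') for all pairs with ℓ(ww') = ℓ(w) + ℓ(w') satisfying the associativity condition on length-additive triples, and natural transformations c_s : T(s) ∘ T(s) ⟶ 𝟭_𝒞 for s ∈ S satisfying condition (1): T(s)(c_{s,X}) = c_{s,T(s)X} for all objects X. For each ordered pair (s₁, s₂) of distinct elements of S, let m be the order of s₁s₂ in W (finite), let w(s₁,s₂) be the alternating product s₂s₁s₂s₁⋯ with m − 1 factors beginning with s₂, and let s'(s₁,s₂) = s₁ if m is even and s'(s₁,s₂) = s₂ if m is odd; then s₁·w(s₁,s₂) = w(s₁,s₂)·s'(s₁,s₂) and ℓ(s₁·w(s₁,s₂)) = ℓ(w(s₁,s₂)) + 1. Suppose that for every such pair (s₁,s₂) the compatibility condition (2) holds for the triple (w, s, s') = (w(s₁,s₂), s₁, s'(s₁,s₂)): the composite T(s)T(w)T(s') → T(w)T(s')T(s') → T(w) (via the isomorphism (c_{w,s'})⁻¹ ∘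 c_{s,w} whiskered with T(s'), then T(w) whiskered with c_{s'}) equals the composite T(s)T(w)T(s') → T(s)T(s)T(w) → T(w) (via T(s) whiskered with (c_{s,w})⁻¹ ∘ c_{w,s'}, then c_s whiskered with T(w)). Then condition (2) holds for every triple (w, s, s') with w ∈ W, s, s' ∈ S, sw = ws' and ℓ(sw) = ℓ(w) + 1. -/
open CategoryTheory

/-- `altProd x y n` is the alternating product `x y x y ⋯` with `n` factors,
beginning with `x`. -/
def altProd {W : Type*} [Monoid W] (x y : W) : ℕ → W
  | 0 => 1
  | n + 1 => x * altProd y x n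

/-- Condition (2) for a triple `(w, s, s')` (with `s = simple i`, `s' = simple i'`):
whenever `s w = w s'` and the relevant lengths are additive, the composite
`T(s)T(w)T(s') → T(w)T(s')T(s') → T(w)` equals the composite
`T(s)T(w)T(s') → T(s)T(s)T(w) → T(w)`, expressed componentwise. -/
def Cond2 {B : Type*} {W : Type*} [Group W] {M : CoxeterMatrix B} (cs : CoxeterSystem M W)
    {C : Type*} [Category C] (T : W → C ⥤ C)
    (c : ∀ w w' : W, cs.length (w * w') = cs.length w + cs.length w' →
      (T w' ⋙ T w ≅ T (w * w')))
    (d : ∀ i : B, (T (cs.simple i) ⋙ T (cs.simple i) ⟶ 𝟭 C))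
    (w : W) (i i' : B) : Prop :=
  ∀ (heq : cs.simple i * w = w * cs.simple i')
    (h1 : cs.length (cs.simple i * w) = cs.length (cs.simple i) + cs.length w)
    (h2 : cs.length (w * cs.simple i') = cs.length w + cs.length (cs.simple i'))
    (X : C),
    ((c (cs.simple i) w h1).hom ≫ eqToHom (congrArg T heq) ≫
        (c w (cs.simple i') h2).inv).app ((T (cs.simple i')).obj X) ≫
      (T w).map ((d i').app X) =
    (T (cs.simple i)).map
        (((c w (cs.simple i') h2).hom ≫ eqToHom (congrArg T heq.symm) ≫
          (c (cs.simple i) w h1).inv).app X) ≫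
      (d i).app ((T w).obj X)

/-!
Condition (2) is multiplicative along length-additive products `w = v u`: if `s v = v t` and
`t u = u s'`, the commutation isomorphism of `w` is the pasting of those of `v` and `u`. It
holds for `w = 1` because `T(1)` is fully faithful. Now let `w ≠ 1` with `s w = w s' > w`, and
pick a left descent `r` of `w`. Then `s` and `r` are both left descents of `x = s w`, so `x`
starts with the longest element of the dihedral group `⟨s, r⟩`; cancelling `s`, `w` starts with
the alternating product `v = r s r ⋯` with `m - 1` factors. Condition (2) is assumed for `v`,
and one concludes by induction on the length.

Two facts on Coxeter systems are needed. The left inversions of `u v` are left inversions of `u` or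
conjugates of left inversions of `v`, because the number of occurrences of `t` in a left inversion
sequence is, modulo `2`, a cocycle of the group. And the simple reflections are pairwise distinct,
because they act as distinct reflections in the geometric representation.
-/

section Intertwining

variable {C : Type*} [Category C] {S S' S'' U V F G : C ⥤ C}
  {d : S ⋙ S ⟶ 𝟭 C} {d' : S' ⋙ S' ⟶ 𝟭 C} {d'' : S'' ⋙ S'' ⟶ 𝟭 C}

/-- Condition (2) for an abstract commutation isomorphism `φ : S V ≅ V S'`: sliding `V` past
`S' S'` and applying `d'` agrees with sliding `V` past `S S` and applying `d`. -/
def Intertwines (φ : V ⋙ S ≅ S' ⋙ V) (d : S ⋙ S ⟶ 𝟭 C) (d' : S' ⋙ S' ⟶ 𝟭 C) : Prop :=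
  ∀ X : C, φ.hom.app (S'.obj X) ≫ V.map (d'.app X) = S.map (φ.inv.app X) ≫ d.app (V.obj X)

/-- The pasting `S V U ≅ V S' U ≅ V U S''` of two commutation isomorphisms. -/
def commIsoPaste (φ : V ⋙ S ≅ S' ⋙ V) (ψ : U ⋙ S' ≅ S'' ⋙ U) :
    (U ⋙ V) ⋙ S ≅ S'' ⋙ U ⋙ V :=
  Functor.associator U V S ≪≫ Functor.isoWhiskerLeft U φ ≪≫ (Functor.associator U S' V).symm ≪≫
    Functor.isoWhiskerRight ψ V ≪≫ Functor.associator S'' U V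

theorem commIsoPaste_hom_app (φ : V ⋙ S ≅ S' ⋙ V) (ψ : U ⋙ S' ≅ S'' ⋙ U) (X : C) :
    (commIsoPaste φ ψ).hom.app X = φ.hom.app (U.obj X) ≫ V.map (ψ.hom.app X) := by
  simp [commIsoPaste]

theorem commIsoPaste_inv_app (φ : V ⋙ S ≅ S' ⋙ V) (ψ : U ⋙ S' ≅ S'' ⋙ U) (X : C) :
    (commIsoPaste φ ψ).inv.app X = V.map (ψ.inv.app X) ≫ φ.inv.app (U.obj X) := by
  simp [commIsoPaste]

theorem Intertwines.paste {φ : V ⋙ S ≅ S' ⋙ V} {ψ : U ⋙ S' ≅ S'' ⋙ U}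
    (hφ : Intertwines φ d d') (hψ : Intertwines ψ d' d'') :
    Intertwines (commIsoPaste φ ψ) d d'' := by
  intro X
  have naturality : φ.hom.app (U.obj (S''.obj X)) ≫ V.map (S'.map (ψ.inv.app X)) =
      S.map (V.map (ψ.inv.app X)) ≫ φ.hom.app (S'.obj (U.obj X)) :=
    (φ.hom.naturality (ψ.inv.app X)).symm
  calc (commIsoPaste φ ψ).hom.app (S''.obj X) ≫ (U ⋙ V).map (d''.app X)
      = φ.hom.app (U.obj (S''.obj X)) ≫ V.map (ψ.hom.app (S''.obj X) ≫ U.map (d''.app X)) := by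
        simp [commIsoPaste_hom_app]
    _ = (φ.hom.app (U.obj (S''.obj X)) ≫ V.map (S'.map (ψ.inv.app X))) ≫
          V.map (d'.app (U.obj X)) := by
        rw [hψ X, V.map_comp, Category.assoc]
    _ = S.map (V.map (ψ.inv.app X)) ≫ S.map (φ.inv.app (U.obj X)) ≫ d.app (V.obj (U.obj X)) := by
        rw [naturality, Category.assoc, hφ (U.obj X)]
    _ = S.map ((commIsoPaste φ ψ).inv.app X) ≫ d.app ((U ⋙ V).obj X) := by
        simp [commIsoPaste_inv_app]

theorem Intertwines.of_iso {φ : F ⋙ S ≅ S' ⋙ F} {ψ : G ⋙ S ≅ S' ⋙ G} (γ : F ≅ G)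
    (hγ : ∀ X, S.map (γ.hom.app X) ≫ ψ.hom.app X = φ.hom.app X ≫ γ.hom.app (S'.obj X))
    (hφ : Intertwines φ d d') : Intertwines ψ d d' := by
  intro X
  have hγ_inv : S.map (γ.hom.app X) = φ.hom.app X ≫ γ.hom.app (S'.obj X) ≫ ψ.inv.app X := by
    rw [← reassoc_of% (hγ X), Iso.hom_inv_id_app]
    exact (Category.comp_id _).symm
  have hγ_inv' : φ.inv.app X ≫ S.map (γ.hom.app X) = γ.hom.app (S'.obj X) ≫ ψ.inv.app X := by
    rw [hγ_inv, Iso.inv_hom_id_app_assoc]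
  rw [← cancel_epi (S.map (γ.hom.app (S'.obj X)))]
  calc S.map (γ.hom.app (S'.obj X)) ≫ ψ.hom.app (S'.obj X) ≫ G.map (d'.app X)
      = φ.hom.app (S'.obj X) ≫ γ.hom.app (S'.obj (S'.obj X)) ≫ G.map (d'.app X) := by
        rw [reassoc_of% (hγ (S'.obj X))]
    _ = (φ.hom.app (S'.obj X) ≫ F.map (d'.app X)) ≫ γ.hom.app X := by
        rw [Category.assoc]
        exact congrArg _ (γ.hom.naturality (d'.app X)).symm
    _ = S.map (φ.inv.app X) ≫ S.map (S.map (γ.hom.app X)) ≫ d.app (G.obj X) := by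
        rw [hφ X, Category.assoc]
        exact congrArg _ (d.naturality (γ.hom.app X)).symm
    _ = S.map (γ.hom.app (S'.obj X)) ≫ S.map (ψ.inv.app X) ≫ d.app (G.obj X) := by
        rw [← S.map_comp_assoc, hγ_inv', S.map_comp_assoc]

-- Since `P` is fully faithful, `μ = P β` for a natural isomorphism `β : P ≅ 𝟭`, and the two
-- unit constraints become `r = S β` and `l = β S`.
theorem intertwines_unit {P : C ⥤ C} [P.Full] [P.Faithful] (μ : P ⋙ P ≅ P)
    (r : P ⋙ S ≅ S) (l : S ⋙ P ≅ S)
    (hr : ∀ X, S.map (μ.hom.app X) = r.hom.app (P.obj X))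
    (hl : ∀ X, P.map (l.hom.app X) = μ.hom.app (S.obj X)) (d : S ⋙ S ⟶ 𝟭 C) :
    Intertwines (r ≪≫ l.symm) d d := by
  let β : P ≅ 𝟭 C := Functor.fullyFaithfulCancelRight P (μ ≪≫ P.leftUnitor.symm)
  have map_β (X : C) : P.map (β.hom.app X) = μ.hom.app X := by simp [β]
  have hr' (X : C) : r.hom.app X = S.map (β.hom.app X) := by
    have naturality : S.map (P.map (β.hom.app X)) ≫ r.hom.app X =
        r.hom.app (P.obj X) ≫ S.map (β.hom.app X) := r.hom.naturality (β.hom.app X)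
    rwa [map_β, hr, cancel_epi] at naturality
  have hl' (X : C) : l.hom.app X = β.hom.app (S.obj X) :=
    P.map_injective ((hl X).trans (map_β (S.obj X)).symm)
  intro X
  have hr_inv : r.inv.app X = S.map (β.inv.app X) := by
    rw [← cancel_mono (r.hom.app X), Iso.inv_hom_id_app, hr', ← S.map_comp, Iso.inv_hom_id_app]
    exact (S.map_id X).symm
  have hl_inv (Y : C) : l.inv.app Y = β.inv.app (S.obj Y) := by
    rw [← cancel_mono (l.hom.app Y), Iso.inv_hom_id_app, hl']
    exact (Iso.inv_hom_id_app β (S.obj Y)).symm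
  have naturality : β.inv.app (S.obj (S.obj X)) ≫ P.map (d.app X) = d.app X ≫ β.inv.app X :=
    (β.inv.naturality (d.app X)).symm
  have naturality' : S.map (S.map (β.inv.app X)) ≫ d.app (P.obj X) = d.app X ≫ β.inv.app X :=
    d.naturality (β.inv.app X)
  calc (r ≪≫ l.symm).hom.app (S.obj X) ≫ P.map (d.app X)
      = S.map (β.hom.app (S.obj X)) ≫ β.inv.app (S.obj (S.obj X)) ≫ P.map (d.app X) := by
        simp [hr', hl_inv]
    _ = S.map (β.hom.app (S.obj X)) ≫ S.map (S.map (β.inv.app X)) ≫ d.app (P.obj X) := by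
        rw [naturality, naturality']
    _ = S.map ((r ≪≫ l.symm).inv.app X) ≫ d.app (P.obj X) := by
        simp [hl', hr_inv]

end Intertwining

section BraidAction

variable {B W : Type*} [Group W] {M : CoxeterMatrix B} (cs : CoxeterSystem M W)
  {C : Type*} [Category C] (T : W → C ⥤ C)
  (c : ∀ w w' : W, cs.length (w * w') = cs.length w + cs.length w' → (T w' ⋙ T w ≅ T (w * w')))

/-- The associativity condition on the isomorphisms `c_{w,w'}` of an action of the positive braid
monoid: the two ways of composing `T(w) T(w') T(w'') → T(w w' w'')` agree. The `eqToHom`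
identifies `T ((w * w') * w'')` with `T (w * (w' * w''))`. -/
def IsAssociative : Prop :=
  ∀ (w w' w'' : W)
    (h1 : cs.length (w' * w'') = cs.length w' + cs.length w'')
    (h2 : cs.length (w * (w' * w'')) = cs.length w + cs.length (w' * w''))
    (h3 : cs.length (w * w') = cs.length w + cs.length w')
    (h4 : cs.length (w * w' * w'') = cs.length (w * w') + cs.length w'')
    (X : C),
    (T w).map ((c w' w'' h1).hom.app X) ≫ (c w (w' * w'') h2).hom.app X =
      (c w w' h3).hom.app ((T w'').obj X) ≫ (c (w * w') w'' h4).hom.app X ≫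
        eqToHom (by rw [mul_assoc])

/-- The isomorphism `c_{w,w'}` with target `T x` for a given `x = w w'`, which keeps
`eqToHom` out of later computations. -/
def mulIso {w w' x : W} (h : w * w' = x) (hl : cs.length x = cs.length w + cs.length w') :
    T w' ⋙ T w ≅ T x :=
  c w w' (by rw [h, hl]) ≪≫ eqToIso (congrArg T h)

/-- The isomorphism `T(s) T(w) ≅ T(x) ≅ T(w) T(s')` attached to two length-additive
factorizations `x = s w = w s'`. -/
def commIso {s w s' x : W} (h : s * w = x) (h' : w * s' = x)
    (hl : cs.length x = cs.length s + cs.length w)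
    (hl' : cs.length x = cs.length w + cs.length s') : T w ⋙ T s ≅ T s' ⋙ T w :=
  mulIso cs T c h hl ≪≫ (mulIso cs T c h' hl').symm

variable {cs T c}

theorem mulIso_assoc (hassoc : IsAssociative cs T c) {u v w uv vw uvw : W}
    (h1 : v * w = vw) (l1 : cs.length vw = cs.length v + cs.length w)
    (h2 : u * vw = uvw) (l2 : cs.length uvw = cs.length u + cs.length vw)
    (h3 : u * v = uv) (l3 : cs.length uv = cs.length u + cs.length v)
    (h4 : uv * w = uvw) (l4 : cs.length uvw = cs.length uv + cs.length w) (X : C) :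
    (T u).map ((mulIso cs T c h1 l1).hom.app X) ≫ (mulIso cs T c h2 l2).hom.app X =
      (mulIso cs T c h3 l3).hom.app ((T w).obj X) ≫ (mulIso cs T c h4 l4).hom.app X := by
  subst h1 h3
  subst h2
  simp [mulIso, eqToHom_app, hassoc u v w l1 l2 l3 (by rw [h4, l4])]

theorem commIso_hom_app_comp {s w s' x : W} (h : s * w = x) (h' : w * s' = x)
    (hl : cs.length x = cs.length s + cs.length w)
    (hl' : cs.length x = cs.length w + cs.length s') (X : C) :
    (commIso cs T c h h' hl hl').hom.app X ≫ (mulIso cs T c h' hl').hom.app X =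
      (mulIso cs T c h hl).hom.app X := by
  simp [commIso]

theorem commIso_mul (hassoc : IsAssociative cs T c) {s v s' u s'' sv s'u svu vu : W}
    (h1 : s * v = sv) (l1 : cs.length sv = cs.length s + cs.length v)
    (h2 : v * s' = sv) (l2 : cs.length sv = cs.length v + cs.length s')
    (h3 : s' * u = s'u) (l3 : cs.length s'u = cs.length s' + cs.length u)
    (h4 : u * s'' = s'u) (l4 : cs.length s'u = cs.length u + cs.length s'')
    (h5 : s * vu = svu) (l5 : cs.length svu = cs.length s + cs.length vu)
    (h6 : vu * s'' = svu) (l6 : cs.length svu = cs.length vu + cs.length s'')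
    (h : v * u = vu) (l : cs.length vu = cs.length v + cs.length u) (X : C) :
    (T s).map ((mulIso cs T c h l).hom.app X) ≫ (commIso cs T c h5 h6 l5 l6).hom.app X =
      (commIsoPaste (commIso cs T c h1 h2 l1 l2) (commIso cs T c h3 h4 l3 l4)).hom.app X ≫
        (mulIso cs T c h l).hom.app ((T s'').obj X) := by
  have hsv_u : sv * u = svu := by rw [← h1, mul_assoc, h, h5]
  have hv_s'u : v * s'u = svu := by rw [← h3, ← mul_assoc, h2, hsv_u]
  have assoc_svu := mulIso_assoc hassoc h l h5 l5 h1 l1 hsv_u (by omega) X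
  have assoc_vs'u := mulIso_assoc hassoc h3 l3 hv_s'u (by omega) h2 l2 hsv_u (by omega) X
  have assoc_vus'' := mulIso_assoc hassoc h4 l4 hv_s'u (by omega) h l h6 l6 X
  rw [← cancel_mono ((mulIso cs T c h6 l6).hom.app X), commIsoPaste_hom_app]
  calc ((T s).map ((mulIso cs T c h l).hom.app X) ≫ (commIso cs T c h5 h6 l5 l6).hom.app X) ≫
        (mulIso cs T c h6 l6).hom.app X
      = (mulIso cs T c h1 l1).hom.app ((T u).obj X) ≫
          (mulIso cs T c hsv_u (by omega)).hom.app X := by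
        rw [Category.assoc, commIso_hom_app_comp, assoc_svu]
    _ = (commIso cs T c h1 h2 l1 l2).hom.app ((T u).obj X) ≫
          (T v).map ((mulIso cs T c h3 l3).hom.app X) ≫
            (mulIso cs T c hv_s'u (by omega)).hom.app X := by
        rw [assoc_vs'u, reassoc_of% commIso_hom_app_comp]
    _ = (commIso cs T c h1 h2 l1 l2).hom.app ((T u).obj X) ≫
          (T v).map ((commIso cs T c h3 h4 l3 l4).hom.app X) ≫
            (T v).map ((mulIso cs T c h4 l4).hom.app X) ≫
              (mulIso cs T c hv_s'u (by omega)).hom.app X := by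
        rw [← (T v).map_comp_assoc, commIso_hom_app_comp]
    _ = _ := by rw [assoc_vus'']; simp only [Category.assoc]

variable {d : ∀ i : B, T (cs.simple i) ⋙ T (cs.simple i) ⟶ 𝟭 C}

theorem cond2_iff_intertwines {w x : W} {i i' : B} (h : cs.simple i * w = x)
    (h' : w * cs.simple i' = x) (hl : cs.length x = cs.length (cs.simple i) + cs.length w)
    (hl' : cs.length x = cs.length w + cs.length (cs.simple i')) :
    Cond2 cs T c d w i i' ↔ Intertwines (commIso cs T c h h' hl hl') (d i) (d i') := by
  subst h'
  have hom_eq : (commIso cs T c h rfl hl hl').hom = (c (cs.simple i) w (h ▸ hl)).hom ≫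
      eqToHom (congrArg T h) ≫ (c w (cs.simple i') hl').inv := by
    simp [commIso, mulIso]
  have inv_eq : (commIso cs T c h rfl hl hl').inv = (c w (cs.simple i') hl').hom ≫
      eqToHom (congrArg T h.symm) ≫ (c (cs.simple i) w (h ▸ hl)).inv := by
    simp [commIso, mulIso]
  simp only [Cond2, Intertwines, hom_eq, inv_eq]
  exact ⟨fun H => H h (h ▸ hl) hl', fun H _ _ _ => H⟩

theorem cond2_one [(T 1).Full] [(T 1).Faithful] (hassoc : IsAssociative cs T c) (i : B) :
    Cond2 cs T c d 1 i i := by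
  have l₁ : cs.length (1 : W) = cs.length (1 : W) + cs.length (1 : W) := by simp
  have l₂ : cs.length (cs.simple i) = cs.length (cs.simple i) + cs.length (1 : W) := by simp
  have l₃ : cs.length (cs.simple i) = cs.length (1 : W) + cs.length (cs.simple i) := by simp
  have h₁ := one_mul (1 : W)
  have h₂ := mul_one (cs.simple i)
  have h₃ := one_mul (cs.simple i)
  rw [cond2_iff_intertwines h₂ h₃ l₂ l₃]
  refine intertwines_unit (mulIso cs T c h₁ l₁) _ _ (fun X => ?_) (fun X => ?_) (d i)
  · simpa only [cancel_mono] using mulIso_assoc hassoc h₁ l₁ h₂ l₂ h₂ l₂ h₂ l₂ X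
  · simpa only [cancel_mono] using mulIso_assoc hassoc h₃ l₃ h₃ l₃ h₁ l₁ h₃ l₃ X

theorem cond2_mul (hassoc : IsAssociative cs T c) {v u : W} {i j k : B}
    (hv : cs.simple i * v = v * cs.simple j)
    (hvu : cs.length (v * u) = cs.length v + cs.length u)
    (Hv : Cond2 cs T c d v i j) (Hu : Cond2 cs T c d u j k) : Cond2 cs T c d (v * u) i k := by
  intro heq h1 h2
  have hu : cs.simple j * u = u * cs.simple k := by
    rw [← mul_right_inj v, ← mul_assoc, ← hv, mul_assoc, heq, mul_assoc]
  have hsvu : cs.simple i * (v * u) = v * cs.simple j * u := by rw [← mul_assoc, hv]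
  have hsvu' : cs.simple i * (v * u) = v * (u * cs.simple k) := by rw [heq, mul_assoc]
  have le_svu := cs.length_mul_le (v * cs.simple j) u
  have le_sv := cs.length_mul_le v (cs.simple j)
  have le_svu' := cs.length_mul_le v (u * cs.simple k)
  have le_us := cs.length_mul_le u (cs.simple k)
  rw [← hsvu] at le_svu
  rw [← hsvu'] at le_svu'
  simp only [cs.length_simple] at h1 le_sv le_us
  have lv : cs.length (v * cs.simple j) = cs.length v + 1 := by omega
  have lu : cs.length (u * cs.simple k) = cs.length u + 1 := by omega
  have lvs := cs.length_simple
  rw [cond2_iff_intertwines hv rfl (by rw [lv, lvs, add_comm]) (by rw [lv, lvs])] at Hv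
  rw [cond2_iff_intertwines hu rfl (by rw [lu, lvs, add_comm]) (by rw [lu, lvs])] at Hu
  suffices Cond2 cs T c d (v * u) i k from this heq (by rw [h1, lvs]) h2
  rw [cond2_iff_intertwines heq rfl (by rw [h2, lvs, lvs, add_comm]) h2]
  exact (Hv.paste Hu).of_iso (mulIso cs T c rfl hvu)
    (commIso_mul hassoc hv _ rfl _ hu _ rfl _ heq _ rfl _ rfl hvu)

end BraidAction

section Inversions

open CoxeterSystem

variable {B W : Type*} [Group W] {M : CoxeterMatrix B} (cs : CoxeterSystem M W)

theorem leftInvSeq_alternatingWord (i j : B) (p : ℕ) :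
    cs.leftInvSeq (alternatingWord i j (2 * p)) =
      (List.range (2 * p)).map fun k => cs.simple i * (cs.simple j * cs.simple i) ^ k := by
  refine List.ext_getElem (by simp) fun k hk _ => ?_
  rw [length_leftInvSeq, length_alternatingWord] at hk
  rw [cs.getElem_leftInvSeq_alternatingWord _ _ _ _ hk, List.getElem_map, List.getElem_range,
    prod_alternatingWord_eq_mul_pow, if_neg (by simp), show (2 * k + 1) / 2 = k by lia]

theorem even_count_leftInvSeq_alternatingWord [DecidableEq W] (i j : B) (t : W) :
    Even ((cs.leftInvSeq (alternatingWord i j (2 * M i j))).count t) := by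
  have periodic (k : ℕ) : (cs.simple j * cs.simple i) ^ (M i j + k) =
      (cs.simple j * cs.simple i) ^ k := by
    rw [pow_add, M.symmetric, simple_mul_simple_pow, one_mul]
  refine ⟨((List.range (M i j)).map fun k =>
    cs.simple i * (cs.simple j * cs.simple i) ^ k).count t, ?_⟩
  rw [leftInvSeq_alternatingWord, two_mul, List.range_add, List.map_append, List.map_map,
    List.count_append]
  simp only [Function.comp_def, periodic]

section Toggle

variable [DecidableEq W]

/-- The generator `g` acting on functions `W → ℤ/2` by conjugation followed by a change of the value
at `g`. On the zero function, a product of generators counts, modulo `2`, the occurrences of each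
element in a left inversion sequence. -/
def toggle (g : W) : Function.End (W → ZMod 2) :=
  fun f t => f (g⁻¹ * t * g) + if t = g then 1 else 0

theorem prod_map_toggle_apply (ω : List B) (f : W → ZMod 2) (t : W) :
    (ω.map fun i => toggle (cs.simple i)).prod f t =
      f ((cs.wordProd ω)⁻¹ * t * cs.wordProd ω) + (cs.leftInvSeq ω).count t := by
  induction ω generalizing t with
  | nil =>
    have one_apply : (1 : Function.End (W → ZMod 2)) f = f := rfl
    simp [one_apply]
  | cons i ω ih =>
    have count_map : ((cs.leftInvSeq ω).map (MulAut.conj (cs.simple i))).count t =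
        (cs.leftInvSeq ω).count ((cs.simple i)⁻¹ * t * cs.simple i) := by
      have ht : t = MulAut.conj (cs.simple i) ((cs.simple i)⁻¹ * t * cs.simple i) := by
        simp [mul_assoc]
      conv_lhs => rw [ht]
      exact List.count_map_of_injective _ _ (MulAut.conj (cs.simple i)).injective _
    calc toggle (cs.simple i) ((ω.map fun i => toggle (cs.simple i)).prod f) t
        = f ((cs.wordProd (i :: ω))⁻¹ * t * cs.wordProd (i :: ω)) +
            (cs.leftInvSeq ω).count ((cs.simple i)⁻¹ * t * cs.simple i) +
              if t = cs.simple i then 1 else 0 := by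
          rw [toggle, ih, wordProd_cons, mul_inv_rev]
          simp only [mul_assoc]
      _ = _ := by
          rw [leftInvSeq, List.count_cons, count_map, add_assoc]
          simp [eq_comm (a := t)]

theorem prod_map_alternatingWord {G : Type*} [Monoid G] (f : B → G) (i j : B) (p : ℕ) :
    ((alternatingWord i j (2 * p)).map f).prod = (f i * f j) ^ p := by
  induction p with
  | zero => simp [alternatingWord]
  | succ p ih =>
    rw [mul_add, mul_one, alternatingWord_succ', alternatingWord_succ', pow_succ', ← ih]
    simp [mul_assoc]

theorem isLiftable_toggle : M.IsLiftable fun i => toggle (cs.simple i) := by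
  intro i j
  funext f t
  have wordProd_eq : cs.wordProd (alternatingWord i j (2 * M i j)) = 1 := by
    simp [prod_alternatingWord_eq_mul_pow]
  have count_eq_zero : ((cs.leftInvSeq (alternatingWord i j (2 * M i j))).count t : ZMod 2) = 0 :=
    (ZMod.natCast_eq_zero_iff_even).mpr (even_count_leftInvSeq_alternatingWord cs i j t)
  rw [← prod_map_alternatingWord fun i => toggle (cs.simple i), prod_map_toggle_apply,
    wordProd_eq, count_eq_zero, inv_one, one_mul, mul_one, add_zero]
  rfl

/-- The parity of the number of occurrences of `t` in the left inversion sequence of a word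
for `w`, which does not depend on the word. -/
def inversionParity (w t : W) : ZMod 2 :=
  cs.lift ⟨_, isLiftable_toggle cs⟩ w 0 t

theorem lift_toggle_wordProd (ω : List B) :
    cs.lift ⟨_, isLiftable_toggle cs⟩ (cs.wordProd ω) =
      (ω.map fun i => toggle (cs.simple i)).prod := by
  rw [wordProd, map_list_prod, List.map_map]
  congr 2
  funext i
  exact cs.lift_apply_simple _ i

theorem inversionParity_wordProd (ω : List B) (t : W) :
    inversionParity cs (cs.wordProd ω) t = (cs.leftInvSeq ω).count t := by
  rw [inversionParity, lift_toggle_wordProd, prod_map_toggle_apply]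
  exact zero_add _

theorem inversionParity_mul (u v t : W) :
    inversionParity cs (u * v) t =
      inversionParity cs u t + inversionParity cs v (u⁻¹ * t * u) := by
  obtain ⟨ω, rfl⟩ := cs.wordProd_surjective u
  rw [inversionParity_wordProd, inversionParity, map_mul, lift_toggle_wordProd, add_comm]
  exact prod_map_toggle_apply cs ω _ t

variable {cs}

theorem inversionParity_self {t : W} (ht : cs.IsReflection t) : inversionParity cs t t = 1 := by
  have parity_simple (i : B) : inversionParity cs (cs.simple i) (cs.simple i) = 1 := by
    rw [← wordProd_singleton, inversionParity_wordProd]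
    simp
  have parity_one (t : W) : inversionParity cs 1 t = 0 := by
    rw [← cs.wordProd_nil, inversionParity_wordProd]
    simp
  obtain ⟨w, i, rfl⟩ := ht
  have conj_conj : w⁻¹ * (w * cs.simple i * w⁻¹) * w = cs.simple i := by group
  have cancel : inversionParity cs w (w * cs.simple i * w⁻¹) +
      inversionParity cs w⁻¹ (cs.simple i) = 0 := by
    have := inversionParity_mul cs w w⁻¹ (w * cs.simple i * w⁻¹)
    rwa [conj_conj, mul_inv_cancel, parity_one, eq_comm] at this
  calc inversionParity cs (w * cs.simple i * w⁻¹) (w * cs.simple i * w⁻¹)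
      = inversionParity cs w (w * cs.simple i * w⁻¹) +
          (inversionParity cs (cs.simple i) (cs.simple i) +
            inversionParity cs w⁻¹ (cs.simple i)) := by
        rw [mul_assoc w, inversionParity_mul, ← mul_assoc w, conj_conj, inversionParity_mul,
          inv_mul_cancel, one_mul]
    _ = 1 := by rw [parity_simple, add_left_comm, cancel, add_zero]

theorem isLeftInversion_iff_inversionParity {w t : W} (ht : cs.IsReflection t) :
    cs.IsLeftInversion w t ↔ inversionParity cs w t = 1 := by
  have isLeftInversion_of_parity {w : W} (h : inversionParity cs w t = 1) :
      cs.IsLeftInversion w t := by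
    obtain ⟨ω, hω, rfl⟩ := cs.exists_isReduced w
    refine cs.isLeftInversion_of_mem_leftInvSeq hω (List.count_pos_iff.mp ?_)
    rw [inversionParity_wordProd] at h
    refine Nat.pos_of_ne_zero fun h0 => ?_
    simp [h0] at h
  refine ⟨fun h => ?_, isLeftInversion_of_parity⟩
  have add_parity : inversionParity cs (t * w) t = 1 + inversionParity cs w t := by
    rw [inversionParity_mul, inversionParity_self ht, inv_mul_cancel, one_mul]
  have : inversionParity cs (t * w) t ≠ 1 := fun hp =>
    ht.isLeftInversion_mul_right_iff.mp (isLeftInversion_of_parity hp) h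
  revert this
  rw [add_parity]
  generalize inversionParity cs w t = n
  decide +revert

end Toggle

variable {cs}

theorem isLeftInversion_or_of_mul {u v t : W} (h : cs.IsLeftInversion (u * v) t) :
    cs.IsLeftInversion u t ∨ cs.IsLeftInversion v (u⁻¹ * t * u) := by
  classical
  have ht' : cs.IsReflection (u⁻¹ * t * u) := by simpa using h.1.conj u⁻¹
  rw [isLeftInversion_iff_inversionParity h.1, isLeftInversion_iff_inversionParity ht']
  rw [isLeftInversion_iff_inversionParity h.1, inversionParity_mul] at h
  generalize inversionParity cs u t = m, inversionParity cs v (u⁻¹ * t * u) = n at h ⊢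
  decide +revert

end Inversions

section AltProd

open CoxeterSystem

theorem altProd_succ' {G : Type*} [Monoid G] (x y : G) (n : ℕ) :
    altProd x y (n + 1) = altProd x y n * if Even n then x else y := by
  induction n generalizing x y with
  | zero => simp [altProd]
  | succ n ih =>
    rw [altProd, ih, altProd, mul_assoc]
    simp only [Nat.even_add_one, ite_not]

theorem mul_pow_mul_altProd_swap {G : Type*} [Monoid G] {x y : G} (hx : x * x = 1)
    (hy : y * y = 1) (n : ℕ) : (x * y) ^ n * altProd y x n = altProd x y n := by
  induction n generalizing x y with
  | zero => simp [altProd]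
  | succ n ih =>
    calc (x * y) ^ (n + 1) * altProd y x (n + 1)
        = (x * y) ^ n * x * (y * y) * altProd x y n := by simp only [altProd, pow_succ, mul_assoc]
      _ = x * ((y * x) ^ n * altProd x y n) := by
        rw [hy, mul_one, mul_pow_mul, mul_assoc]
      _ = altProd x y (n + 1) := by rw [ih hy hx, altProd]

variable {B W : Type*} [Group W] {M : CoxeterMatrix B} {cs : CoxeterSystem M W} {i j : B}

theorem simple_mul_altProd {n : ℕ} (h : orderOf (cs.simple i * cs.simple j) = n + 1) :
    cs.simple i * altProd (cs.simple j) (cs.simple i) n =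
      altProd (cs.simple j) (cs.simple i) n * cs.simple (if Even (n + 1) then i else j) := by
  have altProd_swap := mul_pow_mul_altProd_swap (cs.simple_mul_simple_self i)
    (cs.simple_mul_simple_self j) (n + 1)
  rw [← h, pow_orderOf_eq_one, one_mul, h, altProd_succ', altProd] at altProd_swap
  rw [← altProd_swap]
  simp only [Nat.even_add_one, ite_not, apply_ite cs.simple]

variable (cs i j)

theorem length_altProd_le (n : ℕ) : cs.length (altProd (cs.simple i) (cs.simple j) n) ≤ n := by
  induction n generalizing i j with
  | zero => simp [altProd]
  | succ n ih =>
    have := cs.length_mul_le (cs.simple i) (altProd (cs.simple j) (cs.simple i) n)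
    rw [cs.length_simple] at this
    have := ih j i
    rw [altProd]
    lia

variable {cs i j}

theorem eq_pow_mul_of_isLeftInversion_altProd {n : ℕ} {t : W}
    (h : cs.IsLeftInversion (altProd (cs.simple i) (cs.simple j) n) t) :
    ∃ p < n, t = (cs.simple i * cs.simple j) ^ p * cs.simple i := by
  induction n generalizing i j t with
  | zero => simpa [altProd] using h.2
  | succ n ih =>
    rcases isLeftInversion_or_of_mul h with h | h
    · have : t * cs.simple i = 1 := by
        have := h.2
        rwa [cs.length_simple, Nat.lt_one_iff, cs.length_eq_zero_iff] at this
      exact ⟨0, n.succ_pos, by simpa using eq_inv_of_mul_eq_one_left this⟩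
    · obtain ⟨p, hp, hpt⟩ := ih h
      refine ⟨p + 1, by lia, ?_⟩
      calc t = cs.simple i * ((cs.simple i)⁻¹ * t * cs.simple i) * cs.simple i := by
            simp [mul_assoc]
        _ = (cs.simple i * cs.simple j) ^ (p + 1) * cs.simple i := by
            rw [hpt, ← mul_assoc, ← mul_pow_mul, pow_succ]
            simp only [mul_assoc]

theorem exists_eq_altProd_mul {x : W} {k : ℕ} (hi : cs.IsLeftDescent x i)
    (hj : cs.IsLeftDescent x j)
    (hk : ∀ p, 0 < p → p < k → (cs.simple i * cs.simple j) ^ p ≠ 1) :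
    ∃ u, x = altProd (cs.simple i) (cs.simple j) k * u ∧ cs.length x = k + cs.length u := by
  induction k generalizing i j with
  | zero => exact ⟨x, by simp [altProd], by simp⟩
  | succ k ih =>
    have hk' : ∀ p, 0 < p → p < k + 1 → (cs.simple j * cs.simple i) ^ p ≠ 1 := fun p hp hpk h =>
      hk p hp hpk (by simpa [← inv_pow] using congrArg (·⁻¹) h)
    obtain ⟨u, hxu, hlu⟩ := ih hj hi fun p hp hpk => hk' p hp (by lia)
    set v := altProd (cs.simple j) (cs.simple i) k
    have hinv : cs.IsLeftInversion (v * u) (cs.simple i) :=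
      hxu ▸ (cs.isLeftInversion_simple_iff_isLeftDescent x i).mpr hi
    rcases isLeftInversion_or_of_mul hinv with hinv | hinv
    · obtain ⟨p, hp, hpi⟩ := eq_pow_mul_of_isLeftInversion_altProd hinv
      refine absurd ?_ (hk' (p + 1) p.succ_pos (by lia))
      rw [pow_succ, ← mul_assoc, ← hpi, cs.simple_mul_simple_self]
    · have hx : x = cs.simple i * (v * (v⁻¹ * cs.simple i * v * u)) := by
        simp [mul_assoc, hxu]
      refine ⟨v⁻¹ * cs.simple i * v * u, by rwa [altProd, mul_assoc], ?_⟩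
      have lt_length := hinv.2
      have le_length := cs.length_mul_le (cs.simple i) (v * (v⁻¹ * cs.simple i * v * u))
      have le_length' := cs.length_mul_le v (v⁻¹ * cs.simple i * v * u)
      have le_length_v := length_altProd_le cs j i k
      rw [← hx, cs.length_simple] at le_length
      lia

theorem isOfFinOrder_of_isLeftDescent {x : W} (hi : cs.IsLeftDescent x i)
    (hj : cs.IsLeftDescent x j) : IsOfFinOrder (cs.simple i * cs.simple j) := by
  by_contra h
  obtain ⟨u, -, hu⟩ := exists_eq_altProd_mul (k := cs.length x + 1) hi hj fun p hp _ hpow =>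
    h (isOfFinOrder_iff_pow_eq_one.mpr ⟨p, hp, hpow⟩)
  lia

theorem exists_rankTwo_factorization {w : W} {i' : B} (hw : w ≠ 1)
    (heq : cs.simple i * w = w * cs.simple i') (hi : ¬ cs.IsLeftDescent w i) :
    ∃ (j : B) (n : ℕ) (u : W), cs.simple i ≠ cs.simple j ∧
      orderOf (cs.simple i * cs.simple j) = n + 1 ∧
      w = altProd (cs.simple j) (cs.simple i) n * u ∧
      cs.length w = cs.length (altProd (cs.simple j) (cs.simple i) n) + cs.length u ∧
      cs.length u < cs.length w := by
  obtain ⟨j, hj⟩ := cs.exists_leftDescent_of_ne_one hw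
  have hij : cs.simple i ≠ cs.simple j := fun h => hi (by rwa [IsLeftDescent, h])
  have hlen := cs.not_isLeftDescent_iff.mp hi
  have hxi : cs.IsLeftDescent (cs.simple i * w) i := by
    rw [IsLeftDescent, cs.simple_mul_simple_cancel_left]
    lia
  have hxj : cs.IsLeftDescent (cs.simple i * w) j := by
    have := cs.length_mul_le (cs.simple j * w) (cs.simple i')
    rw [mul_assoc, ← heq, cs.length_simple] at this
    rw [IsLeftDescent]
    have : cs.length (cs.simple j * w) < cs.length w := hj
    lia
  have hfin := isOfFinOrder_of_isLeftDescent hxi hxj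
  have hne : orderOf (cs.simple i * cs.simple j) ≠ 1 := fun h =>
    hij (by simpa using eq_inv_of_mul_eq_one_left (orderOf_eq_one_iff.mp h))
  obtain ⟨n, hn⟩ := Nat.exists_eq_add_one.mpr hfin.orderOf_pos
  obtain ⟨u, hxu, hlu⟩ := exists_eq_altProd_mul (k := n + 1) hxi hxj
    fun p hp hpn => pow_ne_one_of_lt_orderOf hp.ne' (hn ▸ hpn)
  rw [altProd, mul_assoc, mul_right_inj] at hxu
  have le_length_v := length_altProd_le cs j i n
  have le_length := cs.length_mul_le (altProd (cs.simple j) (cs.simple i) n) u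
  rw [← hxu] at le_length
  exact ⟨j, n, u, hij, hn, hxu, by lia, by lia⟩

end AltProd

section GeometricRepresentation

open CoxeterSystem Module Real

section RankTwo

variable {V : Type*} [AddCommGroup V] [Module ℝ V] {x y : V} {f g : Dual ℝ V} {θ : ℝ}

-- The plane spanned by `x` and `y` carries the closed curve `φ ↦ sin (φ + θ) x + sin φ y`, on which
-- the product of the two reflections acts by `φ ↦ φ + 2θ`.
theorem reflection_mul_reflection_apply_sin (hf : f x = 2) (hg : g y = 2)
    (hfy : f y = -2 * cos θ) (hgx : g x = -2 * cos θ) (φ : ℝ) :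
    (reflection hf * reflection hg) (sin (φ + θ) • x + sin φ • y) =
      sin (φ + 2 * θ + θ) • x + sin (φ + 2 * θ) • y := by
  have sin_add_two_mul (φ : ℝ) : sin (φ + 2 * θ) = 2 * cos θ * sin (φ + θ) - sin φ := by
    rw [two_mul, ← add_assoc, sin_add (φ + θ) θ]
    have := sin_sub (φ + θ) θ
    rw [add_sub_cancel_right] at this
    linear_combination this
  have sin_add_three_mul : sin (φ + 2 * θ + θ) = 2 * cos θ * sin (φ + 2 * θ) - sin (φ + θ) := by
    rw [add_right_comm, sin_add_two_mul, add_assoc φ, ← two_mul]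
  have reflection_y : reflection hg (sin (φ + θ) • x + sin φ • y) =
      sin (φ + θ) • x + sin (φ + 2 * θ) • y := by
    simp only [reflection_apply, map_add, map_smul, hg, hgx, sin_add_two_mul]
    module
  rw [LinearEquiv.mul_apply, reflection_y, sin_add_three_mul]
  simp only [reflection_apply, map_add, map_smul, hf, hfy]
  module

theorem reflection_mul_reflection_pow_apply_sin (hf : f x = 2) (hg : g y = 2)
    (hfy : f y = -2 * cos θ) (hgx : g x = -2 * cos θ) (n : ℕ) (φ : ℝ) :
    ((reflection hf * reflection hg) ^ n) (sin (φ + θ) • x + sin φ • y) =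
      sin (φ + 2 * (n * θ) + θ) • x + sin (φ + 2 * (n * θ)) • y := by
  induction n generalizing φ with
  | zero => simp
  | succ n ih =>
    have angle_eq : φ + 2 * θ + 2 * (n * θ) = φ + 2 * ((n + 1 : ℕ) * θ) := by
      push_cast
      ring
    rw [pow_succ, LinearEquiv.mul_apply, reflection_mul_reflection_apply_sin hf hg hfy hgx, ih,
      angle_eq]

theorem reflection_mul_reflection_pow_eq_one (hf : f x = 2) (hg : g y = 2)
    (hfy : f y = -2 * cos θ) (hgx : g x = -2 * cos θ) (hθ : sin θ ≠ 0) {m : ℕ}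
    (hm : m * θ = π) : (reflection hf * reflection hg) ^ m = 1 := by
  have pow_apply_curve (φ : ℝ) : ((reflection hf * reflection hg) ^ m)
      (sin (φ + θ) • x + sin φ • y) = sin (φ + θ) • x + sin φ • y := by
    rw [reflection_mul_reflection_pow_apply_sin hf hg hfy hgx, hm, add_right_comm,
      sin_add_two_pi, sin_add_two_pi]
  have pow_apply_x : ((reflection hf * reflection hg) ^ m) x = x := by
    simpa [hθ] using pow_apply_curve 0
  have pow_apply_y : ((reflection hf * reflection hg) ^ m) y = y := by
    simpa [hθ] using pow_apply_curve (-θ)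
  have pow_apply_of_eq_zero {z : V} (hfz : f z = 0) (hgz : g z = 0) :
      ((reflection hf * reflection hg) ^ m) z = z := by
    have hz : reflection hf * reflection hg ∈ MulAction.stabilizer (V ≃ₗ[ℝ] V) z := by
      simp [MulAction.mem_stabilizer_iff, reflection_apply, hfz, hgz]
    exact pow_mem hz m
  ext z
  obtain ⟨a, b, ha, hb⟩ : ∃ a b : ℝ, f (z - a • x - b • y) = 0 ∧ g (z - a • x - b • y) = 0 := by
    refine ⟨(f z + cos θ * g z) / (2 * sin θ ^ 2), (g z + cos θ * f z) / (2 * sin θ ^ 2), ?_, ?_⟩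
    · simp only [map_sub, map_smul, smul_eq_mul, hf, hfy]
      field_simp
      linear_combination f z * sin_sq_add_cos_sq θ
    · simp only [map_sub, map_smul, smul_eq_mul, hg, hgx]
      field_simp
      linear_combination g z * sin_sq_add_cos_sq θ
  simpa [pow_apply_x, pow_apply_y] using pow_apply_of_eq_zero ha hb

end RankTwo

variable {B : Type*} (M : CoxeterMatrix B)

/-- The coroots of the geometric representation of the Coxeter group on `B →₀ ℝ`, whose roots are
the basis vectors. For `M i j = 0`, which encodes the order `∞`, the convention `π / 0 = 0` gives
the usual value `-2`. -/
noncomputable def simpleCoroot (i : B) : Dual ℝ (B →₀ ℝ) :=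
  Finsupp.lsum ℝ fun j => (-2 * cos (π / M i j)) • LinearMap.id

theorem simpleCoroot_single (i j : B) :
    simpleCoroot M i (Finsupp.single j 1) = -2 * cos (π / M i j) := by
  simp [simpleCoroot]

theorem simpleCoroot_single_self (i : B) : simpleCoroot M i (Finsupp.single i 1) = 2 := by
  simp [simpleCoroot_single]

theorem isLiftable_reflection_simpleCoroot :
    M.IsLiftable fun i => reflection (simpleCoroot_single_self M i) := by
  intro i j
  by_cases hij : i = j
  · subst hij
    rw [M.diagonal, pow_one]
    exact LinearEquiv.ext (involutive_reflection (simpleCoroot_single_self M i))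
  rcases (M i j).eq_zero_or_pos with hM | hM
  · rw [hM, pow_zero]
  have two_le : (2 : ℝ) ≤ M i j := by
    have := M.off_diagonal i j hij
    exact_mod_cast (by lia : 2 ≤ M i j)
  have sin_pos : 0 < sin (π / M i j) :=
    sin_pos_of_pos_of_lt_pi (by positivity) (div_lt_self pi_pos (by linarith))
  refine reflection_mul_reflection_pow_eq_one (θ := π / M i j) _ _ (simpleCoroot_single M i j) ?_
    sin_pos.ne' (by field_simp)
  rw [simpleCoroot_single, M.symmetric]

variable {M} {W : Type*} [Group W] (cs : CoxeterSystem M W)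

theorem simple_injective : Function.Injective cs.simple := by
  intro i j h
  by_contra hij
  have reflection_eq : reflection (simpleCoroot_single_self M i) =
      reflection (simpleCoroot_single_self M j) := by
    rw [← cs.lift_apply_simple (isLiftable_reflection_simpleCoroot M),
      ← cs.lift_apply_simple (isLiftable_reflection_simpleCoroot M), h]
  have coord_eq := DFunLike.congr_fun
    (LinearEquiv.congr_fun reflection_eq (Finsupp.single i 1)) i
  rw [reflection_apply_self, reflection_apply] at coord_eq
  norm_num [hij] at coord_eq

end GeometricRepresentation

theorem stmt_1_general {B W : Type*} [Group W] {M : CoxeterMatrix B} (cs : CoxeterSystem M W)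
    {C : Type*} [Category C] (T : W → C ⥤ C) [(T 1).Full] [(T 1).Faithful]
    (c : ∀ w w' : W, cs.length (w * w') = cs.length w + cs.length w' →
      (T w' ⋙ T w ≅ T (w * w')))
    (hassoc : IsAssociative cs T c)
    (d : ∀ i : B, (T (cs.simple i) ⋙ T (cs.simple i) ⟶ 𝟭 C))
    (hrank2 : ∀ i j : B, cs.simple i ≠ cs.simple j → IsOfFinOrder (cs.simple i * cs.simple j) →
      Cond2 cs T c d
        (altProd (cs.simple j) (cs.simple i) (orderOf (cs.simple i * cs.simple j) - 1))
        i
        (if Even (orderOf (cs.simple i * cs.simple j)) then i else j))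
    (w : W) (i i' : B) : Cond2 cs T c d w i i' := by
  induction hn : cs.length w using Nat.strong_induction_on generalizing w i i' with
  | _ n ih =>
    intro heq h1 h2
    rcases eq_or_ne w 1 with rfl | hw
    · obtain rfl : i = i' := simple_injective cs (by simpa using heq)
      exact cond2_one hassoc i heq h1 h2
    have not_descent : ¬ cs.IsLeftDescent w i := by
      rw [cs.not_isLeftDescent_iff, h1, cs.length_simple, add_comm]
    obtain ⟨j, m, u, hij, hm, rfl, hvu, hu⟩ := exists_rankTwo_factorization hw heq not_descent
    have cond2_altProd := hrank2 i j hij (orderOf_pos_iff.mp (by lia))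
    rw [hm, Nat.add_sub_cancel] at cond2_altProd
    exact cond2_mul hassoc (simple_mul_altProd hm) hvu cond2_altProd
      (ih _ (hn ▸ hu) u _ i' rfl) heq h1 h2

/-- With the hypotheses of an action of the positive braid monoid
(functors `T w` with `T 1 = 𝟭`, isomorphisms `c_{w,w'}` for length-additive pairs with
associativity on length-additive triples) and transformations `c_s` satisfying condition (1),
if condition (2) holds for all the rank-2 triples `(w(s₁,s₂), s₁, s'(s₁,s₂))` associated with
ordered pairs of distinct simple reflections — where `m` is the order of `s₁s₂`,
`w(s₁,s₂) = s₂s₁s₂s₁⋯` (`m − 1` factors beginning with `s₂`) and `s'(s₁,s₂) = s₁` if `m` is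
even, `s₂` if `m` is odd — then condition (2) holds for every triple `(w, s, s')` with
`s w = w s'` and `ℓ(s w) = ℓ(w) + 1`. -/
theorem stmt_1 {B : Type*} {W : Type*} [Group W] [Finite W]
    {M : CoxeterMatrix B} (cs : CoxeterSystem M W)
    {C : Type*} [Category C]
    (T : W → C ⥤ C) (hT1 : T 1 = 𝟭 C)
    (c : ∀ w w' : W, cs.length (w * w') = cs.length w + cs.length w' →
      (T w' ⋙ T w ≅ T (w * w')))
    (hassoc : ∀ (w w' w'' : W)
      (h1 : cs.length (w' * w'') = cs.length w' + cs.length w'')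
      (h2 : cs.length (w * (w' * w'')) = cs.length w + cs.length (w' * w''))
      (h3 : cs.length (w * w') = cs.length w + cs.length w')
      (h4 : cs.length (w * w' * w'') = cs.length (w * w') + cs.length w'')
      (X : C),
      (T w).map ((c w' w'' h1).hom.app X) ≫ (c w (w' * w'') h2).hom.app X =
        (c w w' h3).hom.app ((T w'').obj X) ≫ (c (w * w') w'' h4).hom.app X ≫
          eqToHom (by rw [mul_assoc]))
    (d : ∀ i : B, (T (cs.simple i) ⋙ T (cs.simple i) ⟶ 𝟭 C))
    (hd1 : ∀ (i : B) (X : C),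
      (T (cs.simple i)).map ((d i).app X) = (d i).app ((T (cs.simple i)).obj X))
    (hrank2 : ∀ i j : B, cs.simple i ≠ cs.simple j →
      Cond2 cs T c d
        (altProd (cs.simple j) (cs.simple i) (orderOf (cs.simple i * cs.simple j) - 1))
        i
        (if Even (orderOf (cs.simple i * cs.simple j)) then i else j)) :
    ∀ (w : W) (i i' : B), cs.simple i * w = w * cs.simple i' →
      cs.length (cs.simple i * w) = cs.length w + 1 →
      Cond2 cs T c d w i i' := by
  have : (T 1).Full := hT1 ▸ inferInstance
  have : (T 1).Faithful := hT1 ▸ inferInstance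
  exact fun w i i' _ _ => stmt_1_general cs T c hassoc d (fun i j hij _ => hrank2 i j hij) w i i'
end

section
/- Let 𝒞 and 𝒟 be abelian categories and let j^* : 𝒞 ⥤ 𝒟 be an exact functor admitting a left adjoint j_! : 𝒟 ⥤ 𝒞 and a right adjoint j_* : 𝒟 ⥤ 𝒞. Assume that the unit id_𝒟 ⟶ j^* ∘ j_! of the adjunction j_! ⊣ j^* is an isomorphism and that the counit j^* ∘ j_* ⟶ id_𝒟 of the adjunction j^* ⊣ j_* is an isomorphism. Then for every simple object A of 𝒞, the object j^*A of 𝒟 is either zero or simple. -/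
open CategoryTheory CategoryTheory.Limits

/-!
For a nonzero `f : Y ⟶ R.obj A` with `A` simple, the transpose `L.obj Y ⟶ A` is nonzero, hence an
epimorphism. Since `R` preserves epimorphisms, the factorization of `f` through the unit at `Y`
exhibits `f` as a composite of two epimorphisms. So every nonzero subobject of `R.obj A` is all of
it. In the gluing situation this is applied to `j_! ⊣ j^*`.
-/

section Simple

variable {C : Type*} [Category C] [HasZeroMorphisms C]

theorem simple_of_epi_of_mono_of_ne_zero [Balanced C] {X : C} (hX : ¬ IsZero X)
    (hepi : ∀ {Y : C} (f : Y ⟶ X) [Mono f], f ≠ 0 → Epi f) : Simple X where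
  mono_isIso_iff_nonzero {Y} f _ := by
    refine ⟨?_, fun hf ↦ ?_⟩
    · rintro _ rfl
      exact hX (IsZero.of_epi_eq_zero (0 : Y ⟶ X) rfl)
    · have : Epi f := hepi f hf
      exact isIso_of_mono_of_epi f

end Simple

section Adjunction

variable {C D : Type*} [Category C] [Category D] [HasZeroMorphisms C] [HasZeroMorphisms D]
  {L : D ⥤ C} {R : C ⥤ D} [R.PreservesZeroMorphisms]

theorem homEquiv_symm_ne_zero (adj : L ⊣ R) {Y : D} {A : C} {f : Y ⟶ R.obj A} (hf : f ≠ 0) :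
    (adj.homEquiv Y A).symm f ≠ 0 := by
  rw [Ne, Equiv.symm_apply_eq, adj.homEquiv_unit, R.map_zero, comp_zero]
  exact hf

variable [HasEqualizers C] [HasImages C] [R.PreservesEpimorphisms]

theorem epi_of_ne_zero_to_rightAdjoint_obj_simple (adj : L ⊣ R) {Y : D} [Epi (adj.unit.app Y)]
    {A : C} [Simple A] {f : Y ⟶ R.obj A} (hf : f ≠ 0) : Epi f := by
  have : Epi ((adj.homEquiv Y A).symm f) := epi_of_nonzero_to_simple (homEquiv_symm_ne_zero adj hf)
  rw [← (adj.homEquiv Y A).apply_symm_apply f, adj.homEquiv_unit]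
  exact epi_comp _ _

theorem stmt_3_general [Balanced D] (adj : L ⊣ R) [∀ Y, Epi (adj.unit.app Y)]
    (A : C) [Simple A] : IsZero (R.obj A) ∨ Simple (R.obj A) :=
  or_iff_not_imp_left.mpr fun hRA ↦ simple_of_epi_of_mono_of_ne_zero hRA
    fun _ _ hf ↦ epi_of_ne_zero_to_rightAdjoint_obj_simple adj hf

end Adjunction

/-- Let `𝒞` and `𝒟` be abelian categories and `j^* : 𝒞 ⥤ 𝒟` an exact functor
admitting a left adjoint `j_!` and a right adjoint `j_*`. If the unit of `j_! ⊣ j^*` and the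
counit of `j^* ⊣ j_*` are isomorphisms, then for every simple object `A` of `𝒞`, the object
`j^* A` is either zero or simple. -/
theorem stmt_3 {C : Type*} [Category C] [Abelian C] {D : Type*} [Category D] [Abelian D]
    (jstar : C ⥤ D) [PreservesFiniteLimits jstar] [PreservesFiniteColimits jstar]
    (jshriek jlower : D ⥤ C) (adj₁ : jshriek ⊣ jstar) (adj₂ : jstar ⊣ jlower)
    [IsIso adj₁.unit] [IsIso adj₂.counit]
    (A : C) [Simple A] :
    IsZero (jstar.obj A) ∨ Simple (jstar.obj A) :=
  stmt_3_general adj₁ A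
end

section
/- Let 𝒞 and 𝒟 be abelian categories and let j^* : 𝒞 ⥤ 𝒟 be an exact functor admitting a left adjoint j_! : 𝒟 ⥤ 𝒞 and a right adjoint j_* : 𝒟 ⥤ 𝒞. Assume that the unit id_𝒟 ⟶ j^* ∘ j_! of the adjunction j_! ⊣ j^* is an isomorphism and that the counit j^* ∘ j_* ⟶ id_𝒟 of the adjunction j^* ⊣ j_* is an isomorphism. Let A be a simple object of 𝒞 such that j^*A is not a zero object. Then the counit morphism ε_A : j_!(j^*A) → A (of the adjunction j_! ⊣ j^*) is an epimorphism, the unit morphism η_A : A → j_*(j^*A) (of the adjunction j^* ⊣ j_*) is a monomorphism, and A is isomorphic to the image of the composite η_A ∘ ε_A : j_!(j^*A) → j_*(j^*A). Consequently, if A and A' are simple objects of 𝒞 with j^*A ≅ j^*A' and j^*A nonzero, then A ≅ A'; i.e., a simple object of 𝒞 is determined up to isomorphism by its nonzero restriction to 𝒟. -/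
open CategoryTheory CategoryTheory.Limits

/-!
The triangle identities show that neither `ε_A` nor `η_A` vanishes unless `j^*A = 0`; for simple
`A` this makes `ε_A` epi and `η_A` mono. The composite `η_A ∘ ε_A` is the canonical map
`j_! X ⟶ j_* X` at `X = j^*A`, so its image `j_{!*} X` depends only on `X`, and it recovers `A`.
-/

theorem strongEpi_of_nonzero_to_simple {C : Type*} [Category* C] [HasZeroMorphisms C]
    [HasEqualizers C] [HasImages C] [HasStrongEpiImages C] {X Y : C} [Simple Y] {f : X ⟶ Y}
    (hf : f ≠ 0) : StrongEpi f := by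
  have : IsIso (image.ι f) := isIso_of_mono_of_nonzero fun h ↦ hf (eq_zero_of_image_eq_zero h)
  rw [← image.fac f]
  exact strongEpi_comp _ _

section Adjunction

variable {C D : Type*} [Category* C] [Category* D] [HasZeroMorphisms D]

theorem isZero_obj_of_counit_app_eq_zero [HasZeroMorphisms C] {L : D ⥤ C} {R : C ⥤ D}
    [R.PreservesZeroMorphisms] (adj : L ⊣ R) {A : C} (h : adj.counit.app A = 0) :
    IsZero (R.obj A) := by
  rw [IsZero.iff_id_eq_zero, ← adj.right_triangle_components A, h, R.map_zero, comp_zero]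

theorem isZero_obj_of_unit_app_eq_zero [HasZeroMorphisms C] {L : C ⥤ D} {R : D ⥤ C}
    [L.PreservesZeroMorphisms] (adj : L ⊣ R) {A : C} (h : adj.unit.app A = 0) :
    IsZero (L.obj A) := by
  rw [IsZero.iff_id_eq_zero, ← adj.left_triangle_components A, h, L.map_zero, zero_comp]

theorem strongEpi_counit_app_of_simple [HasZeroMorphisms C] [HasEqualizers C] [HasImages C]
    [HasStrongEpiImages C] {L : D ⥤ C} {R : C ⥤ D} [R.PreservesZeroMorphisms] (adj : L ⊣ R)
    {A : C} [Simple A] (hA : ¬ IsZero (R.obj A)) : StrongEpi (adj.counit.app A) :=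
  strongEpi_of_nonzero_to_simple (Y := A) (mt (isZero_obj_of_counit_app_eq_zero adj) hA)

theorem mono_unit_app_of_simple [Preadditive C] [HasKernels C] {L : C ⥤ D} {R : D ⥤ C}
    [L.PreservesZeroMorphisms] (adj : L ⊣ R) {A : C} [Simple A] (hA : ¬ IsZero (L.obj A)) :
    Mono (adj.unit.app A) :=
  mono_of_nonzero_from_simple (X := A) (mt (isZero_obj_of_unit_app_eq_zero adj) hA)

end Adjunction

section IntermediateExtension

variable {C D : Type*} [Category* C] [Category* D] [HasStrongEpiMonoFactorisations C]
  {F H : D ⥤ C} {G : C ⥤ D} [F.Full] [F.Faithful] (t : Adjunction.Triple F G H)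

/-- The intermediate extension `j_{!*} X`: the image of the canonical morphism `j_! X ⟶ j_* X`,
where `F = j_!`, `G = j^*` and `H = j_*`. -/
noncomputable def intermediateExtension (X : D) : C :=
  image (t.leftToRight.app X)

/-- An object `A` presented as a strong quotient of `j_! j^*A` and a subobject of `j_* j^*A` is the
intermediate extension of any object isomorphic to `j^*A`. -/
noncomputable def isoIntermediateExtension {A : C} {X : D} (φ : X ≅ G.obj A)
    [StrongEpi (t.adj₁.counit.app A)] [Mono (t.adj₂.unit.app A)] :
    A ≅ intermediateExtension t X :=
  have : StrongEpi (F.map φ.hom ≫ t.adj₁.counit.app A) := strongEpi_comp _ _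
  image.isoStrongEpiMono (F.map φ.hom ≫ t.adj₁.counit.app A) (t.adj₂.unit.app A ≫ H.map φ.inv) <|
    calc (F.map φ.hom ≫ t.adj₁.counit.app A) ≫ t.adj₂.unit.app A ≫ H.map φ.inv
      _ = F.map φ.hom ≫ t.leftToRight.app (G.obj A) ≫ H.map φ.inv := by
        simp only [t.leftToRight_app_obj, Category.assoc]
      _ = t.leftToRight.app X := by
        rw [← t.leftToRight.naturality, ← F.map_comp_assoc, φ.hom_inv_id, F.map_id,
          Category.id_comp]

end IntermediateExtension

theorem stmt_4_general {C D : Type*} [Category* C] [Preadditive C] [HasEqualizers C]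
    [HasStrongEpiMonoFactorisations C] [Category* D] [HasZeroMorphisms D]
    (jstar : C ⥤ D) [jstar.PreservesZeroMorphisms]
    (jshriek jlower : D ⥤ C) (adj₁ : jshriek ⊣ jstar) (adj₂ : jstar ⊣ jlower) [IsIso adj₁.unit]
    (A : C) [Simple A] (hA : ¬ IsZero (jstar.obj A)) :
    StrongEpi (adj₁.counit.app A) ∧ Mono (adj₂.unit.app A) ∧
    Nonempty (A ≅ image (adj₁.counit.app A ≫ adj₂.unit.app A)) ∧
    ∀ (A' : C), Simple A' → (jstar.obj A ≅ jstar.obj A') → Nonempty (A ≅ A') := by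
  have hε : StrongEpi (adj₁.counit.app A) := strongEpi_counit_app_of_simple adj₁ hA
  have hη : Mono (adj₂.unit.app A) := mono_unit_app_of_simple adj₂ hA
  refine ⟨hε, hη, ⟨image.isoStrongEpiMono _ _ rfl⟩, fun A' _ φ ↦ ?_⟩
  have hA' : ¬ IsZero (jstar.obj A') := mt φ.isZero_iff.mpr hA
  have hε' : StrongEpi (adj₁.counit.app A') := strongEpi_counit_app_of_simple adj₁ hA'
  have hη' : Mono (adj₂.unit.app A') := mono_unit_app_of_simple adj₂ hA'
  have := adj₁.fullyFaithfulLOfIsIsoUnit.full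
  have := adj₁.fullyFaithfulLOfIsIsoUnit.faithful
  let t : Adjunction.Triple jshriek jstar jlower := ⟨adj₁, adj₂⟩
  exact ⟨isoIntermediateExtension t (.refl _) ≪≫ (isoIntermediateExtension t φ).symm⟩

/-- In the gluing situation (exact `j^*` with left adjoint `j_!`, right adjoint
`j_*`, unit of `j_! ⊣ j^*` and counit of `j^* ⊣ j_*` isomorphisms), if `A` is simple with
`j^* A ≠ 0`, then the counit `j_!(j^*A) → A` is epi, the unit `A → j_*(j^*A)` is mono,
`A` is isomorphic to the image of their composite, and any simple `A'` with
`j^*A ≅ j^*A'` satisfies `A ≅ A'`. -/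
theorem stmt_4 {C : Type*} [Category C] [Abelian C] {D : Type*} [Category D] [Abelian D]
    (jstar : C ⥤ D) [PreservesFiniteLimits jstar] [PreservesFiniteColimits jstar]
    (jshriek jlower : D ⥤ C) (adj₁ : jshriek ⊣ jstar) (adj₂ : jstar ⊣ jlower)
    [IsIso adj₁.unit] [IsIso adj₂.counit]
    (A : C) [Simple A] (hA : ¬ IsZero (jstar.obj A)) :
    Epi (adj₁.counit.app A) ∧ Mono (adj₂.unit.app A) ∧
    Nonempty (A ≅ image (adj₁.counit.app A ≫ adj₂.unit.app A)) ∧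
    ∀ (A' : C), Simple A' → (jstar.obj A ≅ jstar.obj A') → Nonempty (A ≅ A') := by
  obtain ⟨hε, hrest⟩ := stmt_4_general jstar jshriek jlower adj₁ adj₂ A hA
  exact ⟨hε.epi, hrest⟩
end

section
/- Let (W,S) be a finite Coxeter system with length function ℓ, let s_i ∈ S, and let P_i = {w ∈ W : ℓ(w s_i) = ℓ(w) + 1}. Let J ⊆ S, let W_J be the standard parabolic subgroup of W generated by J, and let y ∈ P_i. Then W_J · y ⊆ P_i if and only if y s_i y⁻¹ ∉ W_J. -/
/-!
Encode the set `N w` of left inversions of `w`, the reflections `t` with `ℓ (t * w) < ℓ w`, by the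
sign function `W → ℤˣ` that is `-1` exactly on `N w`. Pairing each simple reflection `s` with the
function that is `-1` only at `s` respects the Coxeter relations, hence extends to a homomorphism
from `W` to `(W → ℤˣ) ⋊ W`. Its first component is the sign function of `N w`, which is therefore
a cocycle: `N (u * y)` is the symmetric difference of `N u` and `u * N y * u⁻¹`.

If `u` lies in a standard parabolic subgroup `W_J`, then so do its inversions. So for `t ∉ W_J`,
the conjugate `u * t * u⁻¹` is an inversion of `u * y` iff `t` is an inversion of `y`. Apply this
to `t = y * s * y⁻¹`, which is an inversion of `y` iff `ℓ (y * s) < ℓ y`. If instead `t ∈ W_J`, the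
coset `W_J * y` contains `t * y = y * s`, which `s` shortens.
-/

section SignedElements

variable {G : Type*} [Group G]

/-- The action of a group on sign functions on itself, induced by conjugation:
`(g • f) t = f (g⁻¹ * t * g)`. -/
def conjSignAction (G : Type*) [Group G] : G →* MulAut (G → ℤˣ) :=
  mulAutArrow.comp (ConjAct.toConjAct (G := G)).toMonoidHom

theorem conjSignAction_apply (g : G) (f : G → ℤˣ) (t : G) :
    conjSignAction G g f t = f (g⁻¹ * t * g) := by
  change f ((ConjAct.toConjAct g)⁻¹ • t) = _
  rw [← ConjAct.toConjAct_inv, ConjAct.toConjAct_smul, inv_inv]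

open scoped Classical in
theorem conjSignAction_mulSingle (g a : G) (ε : ℤˣ) :
    conjSignAction G g (Pi.mulSingle a ε) = Pi.mulSingle (g * a * g⁻¹) ε := by
  funext t
  have conj_eq_iff : g⁻¹ * t * g = a ↔ t = g * a * g⁻¹ := by
    rw [eq_mul_inv_iff_mul_eq, mul_assoc, inv_mul_eq_iff_eq_mul]
  simp only [conjSignAction_apply, Pi.mulSingle_apply, conj_eq_iff]

open scoped Classical in
/-- The element `a` of a group, paired with the sign function that is `-1` only at `a`. For a
simple reflection `a`, this function records that `a` is its own unique inversion. -/
noncomputable def signedElement (a : G) : (G → ℤˣ) ⋊[conjSignAction G] G :=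
  ⟨Pi.mulSingle a (-1), a⟩

open scoped Classical in
theorem signedElement_left (a : G) : (signedElement a).left = Pi.mulSingle a (-1) := rfl

theorem signedElement_right (a : G) : (signedElement a).right = a := rfl

theorem signedElement_mul_pow_right (a b : G) (k : ℕ) :
    ((signedElement a * signedElement b) ^ k).right = (a * b) ^ k :=
  map_pow SemidirectProduct.rightHom (signedElement a * signedElement b) k

theorem mul_pow_inv_of_mul_self_eq_one {a b : G} (ha : a * a = 1) (hb : b * b = 1) (k : ℕ) :
    a * ((a * b) ^ k)⁻¹ = (a * b) ^ k * a := by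
  have semiconj : SemiconjBy a (a * b)⁻¹ (a * b) := by
    rw [SemiconjBy, mul_inv_rev, inv_eq_of_mul_eq_one_left ha, inv_eq_of_mul_eq_one_left hb,
      mul_assoc]
  rw [← inv_pow]
  exact semiconj.pow_right k

open scoped Classical in
theorem signedElement_mul_pow_left {a b : G} (ha : a * a = 1) (hb : b * b = 1) (k : ℕ) :
    ((signedElement a * signedElement b) ^ k).left =
      ∏ n ∈ Finset.range (2 * k), Pi.mulSingle ((a * b) ^ n * a) (-1 : ℤˣ) := by
  induction k with
  | zero => rfl
  | succ k ih =>
    have conj_even : (a * b) ^ k * a * ((a * b) ^ k)⁻¹ = (a * b) ^ (2 * k) * a := by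
      rw [mul_assoc, mul_pow_inv_of_mul_self_eq_one ha hb, ← mul_assoc, ← pow_add, two_mul]
    have conj_odd :
        (a * b) ^ k * (a * b * a⁻¹) * ((a * b) ^ k)⁻¹ = (a * b) ^ (2 * k + 1) * a := by
      rw [inv_eq_of_mul_eq_one_left ha, ← mul_assoc, mul_assoc _ a,
        mul_pow_inv_of_mul_self_eq_one ha hb, ← pow_succ, ← mul_assoc, ← pow_add]
      congr 2
      ring
    rw [pow_succ, SemidirectProduct.mul_left, ih, signedElement_mul_pow_right]
    simp only [SemidirectProduct.mul_left, signedElement_left, signedElement_right, map_mul,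
      conjSignAction_mulSingle, conj_even, conj_odd]
    rw [mul_add_one, Finset.prod_range_succ, Finset.prod_range_succ, mul_assoc]

theorem signedElement_mul_pow_eq_one {a b : G} (ha : a * a = 1) (hb : b * b = 1) {m : ℕ}
    (hm : (a * b) ^ m = 1) : (signedElement a * signedElement b) ^ m = 1 := by
  classical
  refine SemidirectProduct.ext ?_ ((signedElement_mul_pow_right a b m).trans hm)
  -- The factors with indices `n` and `m + n` agree, so the signs cancel in pairs.
  rw [signedElement_mul_pow_left ha hb, two_mul, Finset.prod_range_add]
  simp only [pow_add, hm, one_mul]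
  exact funext fun t ↦ Int.units_mul_self _

end SignedElements

section InversionSign

variable {B W : Type*} [Group W] {M : CoxeterMatrix B} (cs : CoxeterSystem M W)

theorem isLiftable_signedElement_simple : M.IsLiftable fun i ↦ signedElement (cs.simple i) :=
  fun i j ↦ signedElement_mul_pow_eq_one (cs.simple_mul_simple_self i)
    (cs.simple_mul_simple_self j) (cs.simple_mul_simple_pow i j)

/-- The extension of `signedElement` from the simple reflections to a homomorphism on `W`. Its first
component is the inversion cocycle. -/
noncomputable def signedHom : W →* (W → ℤˣ) ⋊[conjSignAction W] W :=
  cs.lift ⟨_, isLiftable_signedElement_simple cs⟩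

theorem signedHom_simple (i : B) : signedHom cs (cs.simple i) = signedElement (cs.simple i) :=
  cs.lift_apply_simple (isLiftable_signedElement_simple cs) i

theorem signedHom_right (w : W) : (signedHom cs w).right = w := by
  have section_of_rightHom :
      SemidirectProduct.rightHom.comp (signedHom cs) = MonoidHom.id W :=
    cs.ext_simple fun i ↦ congrArg SemidirectProduct.right (signedHom_simple cs i)
  exact DFunLike.congr_fun section_of_rightHom w

/-- The sign function of the left inversions of `w`: its value at `t` is `-1` if `t` is a left
inversion of `w`, and `1` otherwise (see `inversionSign_eq_neg_one_iff`). -/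
noncomputable def inversionSign (w : W) : W → ℤˣ := (signedHom cs w).left

theorem inversionSign_one (t : W) : inversionSign cs 1 t = 1 := by
  rw [inversionSign, map_one, SemidirectProduct.one_left, Pi.one_apply]

theorem inversionSign_mul (u v t : W) :
    inversionSign cs (u * v) t = inversionSign cs u t * inversionSign cs v (u⁻¹ * t * u) := by
  simp only [inversionSign, map_mul, SemidirectProduct.mul_left, signedHom_right, Pi.mul_apply,
    conjSignAction_apply]

theorem inversionSign_inv (u t : W) :
    inversionSign cs u⁻¹ t = inversionSign cs u (u * t * u⁻¹) := by
  have cocycle := inversionSign_mul cs u⁻¹ u t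
  rw [inv_mul_cancel, inversionSign_one, inv_inv] at cocycle
  rw [mul_eq_one_iff_eq_inv.mp cocycle.symm, Int.units_inv_eq_self]

open scoped Classical in
theorem inversionSign_simple (i : B) (t : W) :
    inversionSign cs (cs.simple i) t = if t = cs.simple i then -1 else 1 := by
  rw [inversionSign, signedHom_simple, signedElement_left, Pi.mulSingle_apply]

theorem inversionSign_self {t : W} (ht : cs.IsReflection t) : inversionSign cs t t = -1 := by
  obtain ⟨w, i, rfl⟩ := ht
  have conj_cancel : w⁻¹ * (w * cs.simple i * w⁻¹) * w = cs.simple i := by group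
  have conj_mul_cancel :
      (w * cs.simple i)⁻¹ * (w * cs.simple i * w⁻¹) * (w * cs.simple i) = cs.simple i := by group
  rw [inversionSign_mul, conj_mul_cancel, inversionSign_mul, conj_cancel, inversionSign_inv,
    inversionSign_simple, if_pos rfl, mul_right_comm, Int.units_mul_self, one_mul]

theorem inversionSign_wordProd_of_notMem {ω : List B} {t : W} (h : t ∉ cs.leftInvSeq ω) :
    inversionSign cs (cs.wordProd ω) t = 1 := by
  induction ω generalizing t with
  | nil => rw [cs.wordProd_nil, inversionSign_one]
  | cons i ω ih =>
    rw [CoxeterSystem.leftInvSeq, List.mem_cons, not_or] at h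
    have conj_notMem : (cs.simple i)⁻¹ * t * cs.simple i ∉ cs.leftInvSeq ω := fun hmem ↦
      h.2 (List.mem_map.mpr ⟨_, hmem, by rw [MulAut.conj_apply]; group⟩)
    rw [cs.wordProd_cons, inversionSign_mul, inversionSign_simple, if_neg h.1, ih conj_notMem,
      one_mul]

theorem isLeftInversion_of_inversionSign_ne_one {w t : W} (h : inversionSign cs w t ≠ 1) :
    cs.IsLeftInversion w t := by
  obtain ⟨ω, reduced, rfl⟩ := cs.exists_isReduced w
  by_contra not_inversion
  exact h (inversionSign_wordProd_of_notMem cs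
    fun hmem ↦ not_inversion (cs.isLeftInversion_of_mem_leftInvSeq reduced hmem))

theorem inversionSign_eq_neg_one_iff {w t : W} :
    inversionSign cs w t = -1 ↔ cs.IsLeftInversion w t := by
  refine ⟨fun h ↦ isLeftInversion_of_inversionSign_ne_one cs (by rw [h]; decide), fun h ↦ ?_⟩
  -- Otherwise the cocycle identity makes `t` an inversion of both `w` and `t * w`.
  by_contra hne
  have sign_mul : inversionSign cs (t * w) t ≠ 1 := by
    rw [inversionSign_mul, inversionSign_self cs h.1, inv_mul_cancel, one_mul, Ne,
      neg_one_mul, neg_eq_iff_eq_neg]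
    exact hne
  exact h.1.isLeftInversion_mul_right_iff.mp
    (isLeftInversion_of_inversionSign_ne_one cs sign_mul) h

end InversionSign

section Parabolic

variable {B W : Type*} [Group W] {M : CoxeterMatrix B} (cs : CoxeterSystem M W) {J : Set B}

theorem inversionSign_eq_one_of_mem_closure {u t : W}
    (hu : u ∈ Subgroup.closure (cs.simple '' J)) (ht : t ∉ Subgroup.closure (cs.simple '' J)) :
    inversionSign cs u t = 1 := by
  induction hu using Subgroup.closure_induction generalizing t with
  | mem x hx =>
    obtain ⟨j, -, rfl⟩ := id hx
    have ne_simple : t ≠ cs.simple j := fun h ↦ ht (h ▸ Subgroup.subset_closure hx)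
    rw [inversionSign_simple, if_neg ne_simple]
  | one => exact inversionSign_one cs t
  | mul x y hx _ ihx ihy =>
    rw [inversionSign_mul, ihx ht, ihy, one_mul]
    rwa [Subgroup.mul_mem_cancel_right _ hx, Subgroup.mul_mem_cancel_left _ (inv_mem hx)]
  | inv x hx ih =>
    rw [inversionSign_inv, ih]
    rwa [Subgroup.mul_mem_cancel_right _ (inv_mem hx), Subgroup.mul_mem_cancel_left _ hx]

theorem isLeftInversion_mul_conj_iff {u t : W} (y : W)
    (hu : u ∈ Subgroup.closure (cs.simple '' J)) (htJ : t ∉ Subgroup.closure (cs.simple '' J)) :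
    cs.IsLeftInversion (u * y) (u * t * u⁻¹) ↔ cs.IsLeftInversion y t := by
  have conj_notMem : u * t * u⁻¹ ∉ Subgroup.closure (cs.simple '' J) := by
    rwa [Subgroup.mul_mem_cancel_right _ (inv_mem hu), Subgroup.mul_mem_cancel_left _ hu]
  have conj_cancel : u⁻¹ * (u * t * u⁻¹) * u = t := by group
  rw [← inversionSign_eq_neg_one_iff, ← inversionSign_eq_neg_one_iff, inversionSign_mul,
    inversionSign_eq_one_of_mem_closure cs hu conj_notMem, one_mul, conj_cancel]

theorem isLeftInversion_conj_simple_iff (w : W) (i : B) :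
    cs.IsLeftInversion w (w * cs.simple i * w⁻¹) ↔ cs.IsRightDescent w i := by
  rw [CoxeterSystem.IsLeftInversion, CoxeterSystem.IsRightDescent, inv_mul_cancel_right,
    and_iff_right ((cs.isReflection_simple i).conj w)]

end Parabolic

theorem stmt_5_general {B : Type*} {W : Type*} [Group W]
    {M : CoxeterMatrix B} (cs : CoxeterSystem M W)
    (i : B) (J : Set B) (y : W)
    (hy : cs.length (y * cs.simple i) = cs.length y + 1) :
    (∀ u ∈ Subgroup.closure (cs.simple '' J),
        cs.length (u * y * cs.simple i) = cs.length (u * y) + 1) ↔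
      y * cs.simple i * y⁻¹ ∉ Subgroup.closure (cs.simple '' J) := by
  simp only [← cs.not_isRightDescent_iff] at hy ⊢
  constructor
  · intro not_descent mem
    have not_descent_mul : ¬cs.IsRightDescent (y * cs.simple i) i := by
      simpa only [inv_mul_cancel_right] using not_descent _ mem
    exact hy (cs.isRightDescent_iff_not_isRightDescent_mul.mpr not_descent_mul)
  · intro notMem u hu
    have conj_mul : u * y * cs.simple i * (u * y)⁻¹ = u * (y * cs.simple i * y⁻¹) * u⁻¹ := by group
    rwa [← isLeftInversion_conj_simple_iff, conj_mul,
      isLeftInversion_mul_conj_iff cs y hu notMem, isLeftInversion_conj_simple_iff]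

/-- Let `(W,S)` be a finite Coxeter system, `s_i ∈ S`, and
`P_i = {w : ℓ(w sᵢ) = ℓ(w) + 1}`. For `J ⊆ S`, let `W_J` be the standard parabolic subgroup
generated by `J`, and let `y ∈ P_i`. Then `W_J · y ⊆ P_i` iff `y sᵢ y⁻¹ ∉ W_J`. -/
theorem stmt_5 {B : Type*} {W : Type*} [Group W] [Finite W]
    {M : CoxeterMatrix B} (cs : CoxeterSystem M W)
    (i : B) (J : Set B) (y : W)
    (hy : cs.length (y * cs.simple i) = cs.length y + 1) :
    (∀ u ∈ Subgroup.closure (cs.simple '' J),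
        cs.length (u * y * cs.simple i) = cs.length (u * y) + 1) ↔
      y * cs.simple i * y⁻¹ ∉ Subgroup.closure (cs.simple '' J) :=
  stmt_5_general cs i J y hy
end

section
/- Let (W,S) be a finite Coxeter system with length function ℓ, let s_i ∈ S, and let P_i = {w ∈ W : ℓ(w s_i) = ℓ(w) + 1}. For s_j ∈ S, let W^{(j)} denote the standard parabolic subgroup of W generated by S ∖ {s_j}. Then for every y ∈ P_i and every s_j ∈ S: W^{(j)} · y ⊆ P_i if and only if s_j occurs as a letter in some reduced expression of the element y s_i y⁻¹. -/
/-!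
Put `t = y sᵢ y⁻¹`. The parity of the number of times a reflection occurs in the inversion sequence
of a word depends only on the product of the word; it is a cocycle on `W`, and it is odd exactly at
the inversions of the product. As `sᵢ` is not an inversion of `y`, the cocycle identity says that
`sᵢ` is an inversion of `u y` iff `t` is an inversion of `u`. An element of a parabolic subgroup
`W_J` has all of its inversions in `W_J`, while `t` is an inversion of itself, so some `u ∈ W_J`
inverts `t` iff `t ∈ W_J`. Finally, the reduced words of the elements of `W_J` only use letters
of `J`; for words of length one, this is seen on the geometric representation, where `W_J` fixes
every coordinate outside `J`.
-/

namespace CoxeterParabolic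

section DihedralRelation

open Polynomial.Chebyshev Real

lemma chebyshevS_eval_two_mul_cos {φ : ℝ} (hφ : sin φ ≠ 0) (n : ℤ) :
    (S ℝ n).eval (2 * cos φ) = sin ((n + 1) * φ) / sin φ :=
  eq_div_of_mul_eq hφ (S_two_mul_real_cos φ n)

lemma chebyshevS_eval_eq_zero_of_two_mul {p : ℕ} (hp : 1 < p) :
    (S ℝ (p - 1)).eval (2 * cos (2 * π / (2 * p : ℕ))) = 0 := by
  have hp₁ : (1 : ℝ) < p := by exact_mod_cast hp
  have hangle : 2 * π / (2 * p : ℕ) = π / p := by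
    push_cast
    exact mul_div_mul_left π _ two_ne_zero
  have hsin : sin (π / p) ≠ 0 :=
    (sin_pos_of_pos_of_lt_pi (by positivity) (div_lt_self pi_pos hp₁)).ne'
  rw [hangle, chebyshevS_eval_two_mul_cos hsin]
  push_cast
  rw [sub_add_cancel, mul_div_cancel₀ π (by positivity), sin_pi, zero_div]

lemma chebyshevS_eval_add_eval_eq_zero_of_two_mul_add_one {p : ℕ} (hp : 0 < p) :
    (S ℝ p).eval (2 * cos (2 * π / (2 * p + 1 : ℕ))) +
      (S ℝ (p - 1)).eval (2 * cos (2 * π / (2 * p + 1 : ℕ))) = 0 := by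
  have hp₁ : (1 : ℝ) ≤ p := by exact_mod_cast hp
  set φ := 2 * π / (2 * p + 1 : ℕ) with hφ
  have hsin : sin φ ≠ 0 := by
    refine (sin_pos_of_pos_of_lt_pi (by positivity) ?_).ne'
    rw [hφ, div_lt_iff₀ (by positivity)]
    push_cast
    nlinarith [pi_pos]
  have hangle : (p + 1) * φ = 2 * π - p * φ := by
    rw [hφ]
    push_cast
    field_simp
    ring
  rw [chebyshevS_eval_two_mul_cos hsin, chebyshevS_eval_two_mul_cos hsin, ← add_div]
  push_cast
  rw [sub_add_cancel, hangle, sin_two_pi_sub, neg_add_cancel, zero_div]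

variable {V : Type*} [AddCommGroup V] [Module ℝ V] {x y : V} {f g : Module.Dual ℝ V}

open Module

lemma reflection_mul_reflection_sq_eq_one (hf : f x = 2) (hg : g y = 2)
    (hfy : f y = 0) (hgx : g x = 0) : (reflection hf * reflection hg) ^ 2 = 1 := by
  ext z
  simp only [pow_two, LinearEquiv.mul_apply, reflection_apply, map_sub, map_smul, hf, hg, hfy, hgx,
    LinearEquiv.coe_one, id_eq]
  module

lemma reflection_mul_reflection_pow_eq_one (hf : f x = 2) (hg : g y = 2) {m : ℕ} (hm : 2 < m)
    (hfg : f y * g x = 4 * cos (π / m) ^ 2) : (reflection hf * reflection hg) ^ m = 1 := by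
  have htrace : 2 * cos (2 * π / m) = f y * g x - 2 := by
    rw [hfg, mul_div_assoc, cos_two_mul]
    ring
  ext z
  rw [reflection_mul_reflection_pow_apply hf hg m z _ htrace]
  -- Both coefficients in this formula contain the factor that vanishes for the parity of `m`.
  rcases Nat.even_or_odd' m with ⟨p, rfl | rfl⟩
  · have h₁ : (((2 * p : ℕ) : ℤ) - 1) / 2 = p - 1 := by omega
    have h₂ : (((2 * p : ℕ) : ℤ) - 2) / 2 = p - 1 := by omega
    rw [h₁, h₂, chebyshevS_eval_eq_zero_of_two_mul (show 1 < p by omega)]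
    simp
  · have h₀ : ((2 * p + 1 : ℕ) : ℤ) / 2 = p := by omega
    have h₁ : (((2 * p + 1 : ℕ) : ℤ) - 1) / 2 = p := by omega
    have h₂ : (((2 * p + 1 : ℕ) : ℤ) - 2) / 2 = p - 1 := by omega
    have h₃ : (((2 * p + 1 : ℕ) : ℤ) - 3) / 2 = p - 1 := by omega
    rw [h₀, h₁, h₂, h₃,
      chebyshevS_eval_add_eval_eq_zero_of_two_mul_add_one (show 0 < p by omega)]
    simp

end DihedralRelation

variable {B W : Type*} [Group W] {M : CoxeterMatrix B} (cs : CoxeterSystem M W)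

section GeometricRepresentation

open Real Module

/-- The functional `2⟨αᵢ, ·⟩` on the space with basis the simple roots `αₖ`, where
`⟨αᵢ, αₖ⟩ = -cos (π / M i k)`. An infinite order is encoded as `M i k = 0`, and then `π / 0 = 0`
gives the usual value `⟨αᵢ, αₖ⟩ = -1`. -/
noncomputable def simpleCoroot (M : CoxeterMatrix B) (i : B) : Dual ℝ (B →₀ ℝ) :=
  Finsupp.linearCombination ℝ fun k ↦ -2 * cos (π / M i k)

lemma simpleCoroot_single (M : CoxeterMatrix B) (i k : B) :
    simpleCoroot M i (Finsupp.single k 1) = -2 * cos (π / M i k) := by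
  simp [simpleCoroot]

lemma simpleCoroot_single_self (M : CoxeterMatrix B) (i : B) :
    simpleCoroot M i (Finsupp.single i 1) = 2 := by
  simp [simpleCoroot_single]

/-- The action of the simple reflection `sᵢ` in the geometric representation. -/
noncomputable def geometricReflection (M : CoxeterMatrix B) (i : B) : (B →₀ ℝ) ≃ₗ[ℝ] (B →₀ ℝ) :=
  reflection (simpleCoroot_single_self M i)

lemma isLiftable_geometricReflection (M : CoxeterMatrix B) :
    M.IsLiftable (geometricReflection M) := by
  intro i k
  rcases eq_or_ne i k with rfl | hik
  · rw [M.diagonal, pow_one]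
    exact LinearEquiv.ext (involutive_reflection (simpleCoroot_single_self M i))
  have hM_ne_one : M i k ≠ 1 := M.off_diagonal i k hik
  obtain hM | hM | hM : M i k = 0 ∨ M i k = 2 ∨ 2 < M i k := by omega
  · rw [hM, pow_zero]
  · rw [hM]
    apply reflection_mul_reflection_sq_eq_one <;>
      simp [simpleCoroot_single, M.symmetric k i, hM]
  · apply reflection_mul_reflection_pow_eq_one _ _ hM
    rw [simpleCoroot_single, simpleCoroot_single, M.symmetric k i]
    ring

/-- The geometric (Tits) representation of `W`, on the space with basis the simple roots. -/
noncomputable def geometricRep : W →* (B →₀ ℝ) ≃ₗ[ℝ] (B →₀ ℝ) :=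
  cs.lift ⟨geometricReflection M, isLiftable_geometricReflection M⟩

lemma geometricRep_simple_apply (i : B) (v : B →₀ ℝ) :
    geometricRep cs (cs.simple i) v = v - simpleCoroot M i v • Finsupp.single i 1 := by
  rw [geometricRep, cs.lift_apply_simple]
  exact reflection_apply v _

end GeometricRepresentation

section ParabolicSubgroup

/-- The standard parabolic subgroup `W_J` generated by the simple reflections indexed by `J`. -/
abbrev parabolic (J : Set B) : Subgroup W := Subgroup.closure (cs.simple '' J)

variable {cs} {J : Set B}

lemma wordProd_mem_parabolic {ω : List B} (hω : ∀ k ∈ ω, k ∈ J) :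
    cs.wordProd ω ∈ parabolic cs J := by
  refine Subgroup.list_prod_mem _ fun w hw ↦ ?_
  obtain ⟨k, hk, rfl⟩ := List.mem_map.mp hw
  exact Subgroup.subset_closure ⟨k, hω k hk, rfl⟩

lemma exists_wordProd_eq_of_mem_parabolic {u : W} (hu : u ∈ parabolic cs J) :
    ∃ ω : List B, (∀ k ∈ ω, k ∈ J) ∧ cs.wordProd ω = u := by
  induction hu using Subgroup.closure_induction with
  | mem _ hx =>
    obtain ⟨k, hk, rfl⟩ := hx
    exact ⟨[k], by simpa using hk, cs.wordProd_singleton k⟩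
  | one => exact ⟨[], by simp, cs.wordProd_nil⟩
  | mul _ _ _ _ hx hy =>
    obtain ⟨ω₁, h₁, rfl⟩ := hx
    obtain ⟨ω₂, h₂, rfl⟩ := hy
    exact ⟨ω₁ ++ ω₂, by grind, cs.wordProd_append ω₁ ω₂⟩
  | inv _ _ hx =>
    obtain ⟨ω, hω, rfl⟩ := hx
    exact ⟨ω.reverse, by simpa using hω, cs.wordProd_reverse ω⟩

lemma geometricRep_apply_coord_of_mem_parabolic {u : W} (hu : u ∈ parabolic cs J) {j : B}
    (hj : j ∉ J) (v : B →₀ ℝ) : geometricRep cs u v j = v j := by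
  obtain ⟨ω, hω, rfl⟩ := exists_wordProd_eq_of_mem_parabolic hu
  clear hu
  induction ω with
  | nil => simp
  | cons k ω ih =>
    obtain ⟨hk, hω⟩ := List.forall_mem_cons.mp hω
    have hkj : k ≠ j := fun h ↦ hj (h ▸ hk)
    rw [cs.wordProd_cons, map_mul, LinearEquiv.mul_apply, geometricRep_simple_apply]
    simp [hkj, ih hω]

lemma simple_mem_parabolic_iff {j : B} : cs.simple j ∈ parabolic cs J ↔ j ∈ J := by
  refine ⟨fun hmem ↦ ?_, fun hj ↦ Subgroup.subset_closure ⟨j, hj, rfl⟩⟩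
  by_contra hj
  have hcoord := geometricRep_apply_coord_of_mem_parabolic hmem hj (Finsupp.single j 1)
  rw [geometricRep_simple_apply, simpleCoroot_single_self] at hcoord
  norm_num at hcoord

lemma forall_mem_rightInvSeq_mem_parabolic_iff {ω : List B} :
    (∀ t ∈ cs.rightInvSeq ω, t ∈ parabolic cs J) ↔ ∀ k ∈ ω, k ∈ J := by
  induction ω with
  | nil => simp
  | cons k ω ih =>
    rw [CoxeterSystem.rightInvSeq, List.forall_mem_cons, List.forall_mem_cons, ih]
    refine and_congr_left fun hω ↦ ?_
    have hprod : cs.wordProd ω ∈ parabolic cs J := wordProd_mem_parabolic hω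
    rw [Subgroup.mul_mem_cancel_right _ hprod, Subgroup.mul_mem_cancel_left _ (inv_mem hprod),
      simple_mem_parabolic_iff]

end ParabolicSubgroup

section InversionParity

open CoxeterSystem

lemma prod_map_reverse_alternatingWord_two_mul {G : Type*} [Monoid G] (f : B → G) (i k : B)
    (n : ℕ) : ((alternatingWord i k (2 * n)).reverse.map f).prod = (f k * f i) ^ n := by
  induction n with
  | zero => simp [alternatingWord]
  | succ n ih =>
    rw [mul_add_one, alternatingWord_succ', alternatingWord_succ', pow_succ, ← ih]
    simp

open Classical in
lemma even_count_leftInvSeq_alternatingWord (i k : B) (t : W) :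
    Even ((cs.leftInvSeq (alternatingWord i k (2 * M i k))).count t) := by
  set L := cs.leftInvSeq (alternatingWord i k (2 * M i k)) with hL
  have hperiodic : L.drop (M i k) = L.take (M i k) := by
    have hlength : L.length = 2 * M i k := by rw [hL, length_leftInvSeq, length_alternatingWord]
    refine List.ext_getElem (by grind) fun l _ hl ↦ ?_
    have hlM : l < M i k := by grind
    have hpow : (cs.simple k * cs.simple i) ^ (M i k + l) = (cs.simple k * cs.simple i) ^ l := by
      rw [pow_add, cs.simple_mul_simple_pow', one_mul]
    simp only [hL, List.getElem_drop, List.getElem_take]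
    rw [cs.getElem_leftInvSeq_alternatingWord _ _ _ _ (by omega),
      cs.getElem_leftInvSeq_alternatingWord _ _ _ _ (by omega),
      cs.prod_alternatingWord_eq_mul_pow, cs.prod_alternatingWord_eq_mul_pow]
    have hhalf (n : ℕ) : (2 * n + 1) / 2 = n := by omega
    simp [hhalf, hpow]
  rw [← List.take_append_drop (M i k) L, hperiodic, List.count_append]
  exact Even.add_self _

open Classical in
/-- The action of `sᵢ` on signed reflections `(t, ε)`: conjugate `t` by `sᵢ`, and flip the sign iff
`t = sᵢ`. For convenience `t` ranges over all of `W`, and signs are written additively. -/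
noncomputable def signedConj (i : B) : Function.End (W × ZMod 2) :=
  fun p ↦ (cs.simple i * p.1 * cs.simple i, p.2 + if p.1 = cs.simple i then 1 else 0)

open Classical in
lemma prod_map_signedConj_apply (ω : List B) (t : W) (ε : ZMod 2) :
    (ω.map (signedConj cs)).prod • (t, ε) =
      (cs.wordProd ω * t * (cs.wordProd ω)⁻¹, ε + ((cs.rightInvSeq ω).count t : ZMod 2)) := by
  induction ω with
  | nil => simp
  | cons i ω ih =>
    have hcond : cs.wordProd ω * t * (cs.wordProd ω)⁻¹ = cs.simple i ↔
        (cs.wordProd ω)⁻¹ * cs.simple i * cs.wordProd ω = t := by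
      rw [mul_inv_eq_iff_eq_mul, mul_assoc, inv_mul_eq_iff_eq_mul, eq_comm]
    rw [List.map_cons, List.prod_cons, mul_smul, ih, Function.End.smul_def,
      signedConj, rightInvSeq, List.count_cons]
    simp only [hcond, beq_iff_eq]
    simp [cs.wordProd_cons, mul_assoc, add_assoc]

lemma isLiftable_signedConj : M.IsLiftable (signedConj cs) := by
  classical
  intro i k
  refine FaithfulSMul.eq_of_smul_eq_smul (α := W × ZMod 2) fun ⟨t, ε⟩ ↦ ?_
  rw [← prod_map_reverse_alternatingWord_two_mul, prod_map_signedConj_apply,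
    cs.rightInvSeq_reverse, List.count_reverse, M.symmetric i k,
    (ZMod.natCast_eq_zero_iff_even).mpr (even_count_leftInvSeq_alternatingWord cs k i t),
    cs.wordProd_reverse, one_smul]
  simp [cs.prod_alternatingWord_eq_mul_pow]

/-- The action of `W` on signed reflections that extends `signedConj`. -/
noncomputable def signedConjHom : W →* Function.End (W × ZMod 2) :=
  cs.lift ⟨signedConj cs, isLiftable_signedConj cs⟩

/-- The reflection cocycle: the parity of the number of occurrences of `t` in the right inversion
sequence of any word for `w`. -/
noncomputable def inversionParity (w t : W) : ZMod 2 := (signedConjHom cs w • (t, (0 : ZMod 2))).2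

open Classical in
lemma signedConjHom_wordProd_apply (ω : List B) (t : W) (ε : ZMod 2) :
    signedConjHom cs (cs.wordProd ω) • (t, ε) =
      (cs.wordProd ω * t * (cs.wordProd ω)⁻¹, ε + ((cs.rightInvSeq ω).count t : ZMod 2)) := by
  have hmap : signedConjHom cs (cs.wordProd ω) = (ω.map (signedConj cs)).prod := by
    rw [wordProd, map_list_prod, List.map_map]
    congr 2
    funext i
    exact cs.lift_apply_simple (isLiftable_signedConj cs) i
  rw [hmap, prod_map_signedConj_apply]

open Classical in
lemma inversionParity_wordProd (ω : List B) (t : W) :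
    inversionParity cs (cs.wordProd ω) t = (cs.rightInvSeq ω).count t := by
  rw [inversionParity, signedConjHom_wordProd_apply, zero_add]

lemma signedConjHom_apply (w t : W) (ε : ZMod 2) :
    signedConjHom cs w • (t, ε) = (w * t * w⁻¹, ε + inversionParity cs w t) := by
  obtain ⟨ω, rfl⟩ := cs.wordProd_surjective w
  rw [signedConjHom_wordProd_apply, inversionParity_wordProd]

lemma inversionParity_mul (u v t : W) :
    inversionParity cs (u * v) t =
      inversionParity cs v t + inversionParity cs u (v * t * v⁻¹) := by
  rw [inversionParity, map_mul, mul_smul, signedConjHom_apply, signedConjHom_apply,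
    zero_add]

lemma inversionParity_one (t : W) : inversionParity cs 1 t = 0 := by
  simpa using inversionParity_wordProd cs [] t

lemma inversionParity_simple_self (i : B) :
    inversionParity cs (cs.simple i) (cs.simple i) = 1 := by
  simpa using inversionParity_wordProd cs [i] (cs.simple i)

variable {cs} {t u v w : W}

lemma inversionParity_self (ht : cs.IsReflection t) : inversionParity cs t t = 1 := by
  obtain ⟨v, i, rfl⟩ := ht
  set t := v * cs.simple i * v⁻¹ with ht_def
  have hconj : v⁻¹ * t * v⁻¹⁻¹ = cs.simple i := by rw [ht_def]; group
  have hcancel : inversionParity cs v⁻¹ t + inversionParity cs v (cs.simple i) = 0 := by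
    rw [← hconj, ← inversionParity_mul, mul_inv_cancel, inversionParity_one]
  calc inversionParity cs t t
      = inversionParity cs (v * cs.simple i * v⁻¹) t := by rw [← ht_def]
    _ = inversionParity cs v⁻¹ t + inversionParity cs v (cs.simple i) + 1 := by
      rw [inversionParity_mul, hconj, inversionParity_mul, inversionParity_simple_self,
        cs.inv_simple, cs.simple_mul_simple_cancel_right]
      ring
    _ = 1 := by rw [hcancel, zero_add]

lemma mem_rightInvSeq_of_inversionParity_ne_zero {ω : List B}
    (h : inversionParity cs (cs.wordProd ω) t ≠ 0) : t ∈ cs.rightInvSeq ω := by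
  classical
  contrapose! h
  rw [inversionParity_wordProd, List.count_eq_zero_of_not_mem h, Nat.cast_zero]

lemma isRightInversion_of_inversionParity_ne_zero (h : inversionParity cs w t ≠ 0) :
    cs.IsRightInversion w t := by
  obtain ⟨ω, hω, rfl⟩ := cs.exists_isReduced w
  exact cs.isRightInversion_of_mem_rightInvSeq hω (mem_rightInvSeq_of_inversionParity_ne_zero h)

lemma isRightInversion_iff_inversionParity_ne_zero :
    cs.IsRightInversion w t ↔ inversionParity cs w t ≠ 0 := by
  refine ⟨fun h hzero ↦ ?_, isRightInversion_of_inversionParity_ne_zero⟩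
  have hmul : inversionParity cs (w * t) t ≠ 0 := by
    rw [inversionParity_mul, mul_inv_cancel_right, hzero, inversionParity_self h.1, add_zero]
    exact one_ne_zero
  exact h.1.isRightInversion_mul_left_iff.mp (isRightInversion_of_inversionParity_ne_zero hmul) h

lemma isRightInversion_mul_iff (h : ¬cs.IsRightInversion v t) :
    cs.IsRightInversion (u * v) t ↔ cs.IsRightInversion u (v * t * v⁻¹) := by
  rw [isRightInversion_iff_inversionParity_ne_zero, not_not] at h
  rw [isRightInversion_iff_inversionParity_ne_zero, isRightInversion_iff_inversionParity_ne_zero,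
    inversionParity_mul, h, zero_add]

lemma mem_rightInvSeq_of_isRightInversion {ω : List B}
    (h : cs.IsRightInversion (cs.wordProd ω) t) : t ∈ cs.rightInvSeq ω :=
  mem_rightInvSeq_of_inversionParity_ne_zero (isRightInversion_iff_inversionParity_ne_zero.mp h)

end InversionParity

section InversionsInParabolic

variable {cs} {J : Set B} {t u w : W}

lemma mem_parabolic_of_isRightInversion (hu : u ∈ parabolic cs J)
    (ht : cs.IsRightInversion u t) : t ∈ parabolic cs J := by
  obtain ⟨ω, hω, rfl⟩ := exists_wordProd_eq_of_mem_parabolic hu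
  exact forall_mem_rightInvSeq_mem_parabolic_iff.mpr hω t (mem_rightInvSeq_of_isRightInversion ht)

lemma isRightInversion_self (ht : cs.IsReflection t) : cs.IsRightInversion t t := by
  refine ⟨ht, ?_⟩
  rw [ht.mul_self, cs.length_one]
  exact ht.odd_length.pos

lemma forall_mem_parabolic_not_isRightInversion_iff (ht : cs.IsReflection t) :
    (∀ u ∈ parabolic cs J, ¬cs.IsRightInversion u t) ↔ t ∉ parabolic cs J :=
  ⟨fun h hmem ↦ h t hmem (isRightInversion_self ht),
    fun h _ hu hinv ↦ h (mem_parabolic_of_isRightInversion hu hinv)⟩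

lemma wordProd_mem_parabolic_iff {ω : List B} (hω : cs.IsReduced ω) :
    cs.wordProd ω ∈ parabolic cs J ↔ ∀ k ∈ ω, k ∈ J := by
  refine ⟨fun hmem ↦ ?_, wordProd_mem_parabolic⟩
  rw [← forall_mem_rightInvSeq_mem_parabolic_iff (cs := cs)]
  exact fun t ht ↦
    mem_parabolic_of_isRightInversion hmem (cs.isRightInversion_of_mem_rightInvSeq hω ht)

lemma notMem_parabolic_iff_exists_isReduced :
    w ∉ parabolic cs J ↔ ∃ ω, cs.IsReduced ω ∧ cs.wordProd ω = w ∧ ∃ k ∈ ω, k ∉ J := by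
  constructor
  · intro hw
    obtain ⟨ω, hω, rfl⟩ := cs.exists_isReduced w
    rw [wordProd_mem_parabolic_iff hω] at hw
    exact ⟨ω, hω, rfl, by simpa using hw⟩
  · rintro ⟨ω, hω, rfl, k, hk, hkJ⟩ hmem
    exact hkJ ((wordProd_mem_parabolic_iff hω).mp hmem k hk)

end InversionsInParabolic

end CoxeterParabolic

open CoxeterParabolic in
theorem stmt_6_general {B : Type*} {W : Type*} [Group W]
    {M : CoxeterMatrix B} (cs : CoxeterSystem M W)
    (i j : B) (y : W)
    (hy : cs.length (y * cs.simple i) = cs.length y + 1) :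
    (∀ u ∈ Subgroup.closure (cs.simple '' {k | k ≠ j}),
        cs.length (u * y * cs.simple i) = cs.length (u * y) + 1) ↔
      ∃ ω : List B, cs.IsReduced ω ∧ cs.wordProd ω = y * cs.simple i * y⁻¹ ∧ j ∈ ω := by
  have length_mul_simple_iff (w : W) : cs.length (w * cs.simple i) = cs.length w + 1 ↔
      ¬cs.IsRightInversion w (cs.simple i) := by
    rw [cs.isRightInversion_simple_iff_isRightDescent, cs.not_isRightDescent_iff]
  have hreflection : cs.IsReflection (y * cs.simple i * y⁻¹) := ⟨y, i, rfl⟩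
  rw [length_mul_simple_iff] at hy
  simp only [length_mul_simple_iff, isRightInversion_mul_iff hy]
  rw [forall_mem_parabolic_not_isRightInversion_iff hreflection,
    notMem_parabolic_iff_exists_isReduced]
  simp

/-- Let `(W,S)` be a finite Coxeter system, `s_i ∈ S`, and
`P_i = {w : ℓ(w sᵢ) = ℓ(w) + 1}`. For `s_j ∈ S`, let `W^{(j)}` be the standard parabolic
subgroup generated by `S ∖ {s_j}`. Then for every `y ∈ P_i` and every `s_j ∈ S`:
`W^{(j)} · y ⊆ P_i` iff `s_j` occurs as a letter in some reduced expression of `y sᵢ y⁻¹`. -/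
theorem stmt_6 {B : Type*} {W : Type*} [Group W] [Finite W]
    {M : CoxeterMatrix B} (cs : CoxeterSystem M W)
    (i j : B) (y : W)
    (hy : cs.length (y * cs.simple i) = cs.length y + 1) :
    (∀ u ∈ Subgroup.closure (cs.simple '' {k | k ≠ j}),
        cs.length (u * y * cs.simple i) = cs.length (u * y) + 1) ↔
      ∃ ω : List B, cs.IsReduced ω ∧ cs.wordProd ω = y * cs.simple i * y⁻¹ ∧ j ∈ ω :=
  stmt_6_general cs i j y hy
end

section
/- Let (W,S) be a finite Coxeter system with length function ℓ, let s_i ∈ S, and let P_i = {w ∈ W : ℓ(w s_i) = ℓ(w) + 1}. Then P_i is convex: for all y, w ∈ P_i, for every reduced expression w y⁻¹ = s_{j_k} s_{j_{k−1}} ⋯ s_{j_1} (with all s_{j_t} ∈ S and k = ℓ(w y⁻¹)), and for every 0 ≤ t ≤ k, the partial product s_{j_t} s_{j_{t−1}} ⋯ s_{j_1} · y belongs to P_i. -/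
/-!
`W` acts on `W × ZMod 2` with each simple reflection `s` sending `(t, e)` to
`(s * t * s⁻¹, e + [t = s])`. Under a word `ω` the sign of `t` changes by the number of occurrences
of `t` in the right inversion sequence of `ω`; since the action respects the Coxeter relations, the
parity of this number depends only on the product of `ω`. For a reflection `t` this parity
detects whether `t` is a right inversion of `w`. The parity is a cocycle, so along a geodesic from
`y` it changes exactly when the conjugate `y * t * y⁻¹` occurs in the inversion sequence of the
connecting reduced word. That sequence has no repetitions, so the change happens at most once, and
not at all if the two endpoints lie on the same side.
-/

namespace CoxeterConvexity

open CoxeterSystem List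

lemma prod_map_alternatingWord_two_mul {B G : Type*} [Monoid G] (f : B → G) (i j : B) (n : ℕ) :
    ((alternatingWord i j (2 * n)).map f).prod = (f i * f j) ^ n := by
  induction n with
  | zero => simp [alternatingWord]
  | succ n ih =>
    rw [Nat.mul_succ, alternatingWord_succ', alternatingWord_succ']
    simp [ih, pow_succ', mul_assoc]

variable {B W : Type*} [Group W] {M : CoxeterMatrix B} (cs : CoxeterSystem M W)

lemma rightInvSeq_alternatingWord (i j : B) (n : ℕ) :
    cs.rightInvSeq (alternatingWord i j n) =
      ((range n).map fun k ↦ cs.simple j * (cs.simple i * cs.simple j) ^ k).reverse := by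
  induction n generalizing i j with
  | zero => simp [alternatingWord]
  | succ n ih =>
    have conj_term (k : ℕ) :
        cs.simple j * (cs.simple i * (cs.simple j * cs.simple i) ^ k) * cs.simple j =
          cs.simple j * (cs.simple i * cs.simple j) ^ (k + 1) := by
      rw [← mul_pow_mul, mul_assoc, mul_assoc, ← pow_succ]
    rw [alternatingWord_succ, rightInvSeq_concat, ih, range_succ_eq_map]
    simp [Function.comp_def, conj_term]

open scoped Classical in
lemma even_count_rightInvSeq_alternatingWord (i j : B) (t : W) :
    Even ((cs.rightInvSeq (alternatingWord i j (2 * M i j))).count t) := by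
  -- The braid relation makes the second half of the sequence a repetition of the first.
  rw [rightInvSeq_alternatingWord, count_reverse, two_mul, range_add, map_append, count_append,
    map_map]
  simp [Function.comp_def, pow_add]

open scoped Classical in
/-- The action of the simple reflection `cs.simple i` on signed group elements: it conjugates the
element and flips the sign (written additively in `ZMod 2`) of `cs.simple i` itself. All of `W` is
signed, rather than its reflections only, to avoid a subtype. -/
noncomputable def signedConj (i : B) : Function.End (W × ZMod 2) :=
  fun p ↦ (cs.simple i * p.1 * (cs.simple i)⁻¹, p.2 + if p.1 = cs.simple i then 1 else 0)

open scoped Classical in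
lemma signedConj_smul (i : B) (t : W) (e : ZMod 2) :
    signedConj cs i • (t, e) =
      (cs.simple i * t * (cs.simple i)⁻¹, e + if t = cs.simple i then 1 else 0) :=
  rfl

open scoped Classical in
lemma prod_map_signedConj_smul (ω : List B) (t : W) (e : ZMod 2) :
    (ω.map (signedConj cs)).prod • (t, e) =
      (cs.wordProd ω * t * (cs.wordProd ω)⁻¹, e + ((cs.rightInvSeq ω).count t : ℕ)) := by
  induction ω with
  | nil => simp
  | cons i ω ih =>
    have conj_eq_simple_iff : cs.wordProd ω * t * (cs.wordProd ω)⁻¹ = cs.simple i ↔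
        (cs.wordProd ω)⁻¹ * cs.simple i * cs.wordProd ω = t := by
      rw [mul_inv_eq_iff_eq_mul, mul_assoc, inv_mul_eq_iff_eq_mul, eq_comm]
    rw [map_cons, prod_cons, mul_smul, ih, signedConj_smul]
    simp only [conj_eq_simple_iff, rightInvSeq, count_cons, wordProd_cons, beq_iff_eq]
    simp [mul_assoc, add_assoc]

lemma isLiftable_signedConj : M.IsLiftable (signedConj cs) := by
  classical
  intro i j
  refine eq_of_smul_eq_smul (α := W × ZMod 2) fun (t, e) ↦ ?_
  have wordProd_eq_one : cs.wordProd (alternatingWord i j (2 * M i j)) = 1 := by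
    rw [wordProd, prod_map_alternatingWord_two_mul, simple_mul_simple_pow]
  rw [one_smul, ← prod_map_alternatingWord_two_mul, prod_map_signedConj_smul, wordProd_eq_one,
    (even_count_rightInvSeq_alternatingWord cs i j t).natCast_zmod_two]
  simp

/-- The action of `W` on signed group elements extending `signedConj`. -/
noncomputable def signedConjHom : W →* Function.End (W × ZMod 2) :=
  cs.lift ⟨signedConj cs, isLiftable_signedConj cs⟩

/-- The sign change of `t` under `w`, i.e. the parity of the number of occurrences of `t` in the
right inversion sequence of any word for `w`. -/
noncomputable def inversionParity (w t : W) : ZMod 2 :=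
  (signedConjHom cs w • (t, (0 : ZMod 2))).2

open scoped Classical in
lemma signedConjHom_wordProd_smul (ω : List B) (t : W) (e : ZMod 2) :
    signedConjHom cs (cs.wordProd ω) • (t, e) =
      (cs.wordProd ω * t * (cs.wordProd ω)⁻¹, e + ((cs.rightInvSeq ω).count t : ℕ)) := by
  have signedConjHom_comp_simple : signedConjHom cs ∘ cs.simple = signedConj cs :=
    funext fun i ↦ cs.lift_apply_simple (isLiftable_signedConj cs) i
  rw [← prod_map_signedConj_smul, wordProd, map_list_prod, map_map, signedConjHom_comp_simple]

open scoped Classical in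
lemma inversionParity_wordProd (ω : List B) (t : W) :
    inversionParity cs (cs.wordProd ω) t = ((cs.rightInvSeq ω).count t : ℕ) := by
  rw [inversionParity, signedConjHom_wordProd_smul, zero_add]

lemma signedConjHom_smul (w t : W) (e : ZMod 2) :
    signedConjHom cs w • (t, e) = (w * t * w⁻¹, e + inversionParity cs w t) := by
  obtain ⟨ω, rfl⟩ := cs.wordProd_surjective w
  rw [signedConjHom_wordProd_smul, inversionParity_wordProd]

lemma inversionParity_mul (u v t : W) :
    inversionParity cs (u * v) t =
      inversionParity cs v t + inversionParity cs u (v * t * v⁻¹) := by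
  rw [inversionParity, map_mul, mul_smul, signedConjHom_smul, signedConjHom_smul, zero_add]

lemma inversionParity_one (t : W) : inversionParity cs 1 t = 0 := by
  simp [inversionParity]

lemma inversionParity_simple_self (i : B) :
    inversionParity cs (cs.simple i) (cs.simple i) = 1 := by
  simpa using inversionParity_wordProd cs [i] (cs.simple i)

variable {cs}

lemma inversionParity_self {t : W} (ht : cs.IsReflection t) : inversionParity cs t t = 1 := by
  obtain ⟨u, i, rfl⟩ := ht
  have parity_cancel : inversionParity cs u⁻¹ (u * cs.simple i * u⁻¹) +
      inversionParity cs u (cs.simple i) = 0 := by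
    rw [add_comm, ← inversionParity_mul, inv_mul_cancel, inversionParity_one]
  calc
    inversionParity cs (u * cs.simple i * u⁻¹) (u * cs.simple i * u⁻¹)
    _ = inversionParity cs u⁻¹ (u * cs.simple i * u⁻¹) +
          (inversionParity cs (cs.simple i) (cs.simple i) +
            inversionParity cs u (cs.simple i)) := by
      simp [inversionParity_mul, mul_assoc, add_assoc]
    _ = 1 := by rw [inversionParity_simple_self, add_left_comm, parity_cancel, add_zero]

lemma inversionParity_wordProd_eq_zero_iff {ω : List B} (hω : cs.IsReduced ω) (t : W) :
    inversionParity cs (cs.wordProd ω) t = 0 ↔ t ∉ cs.rightInvSeq ω := by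
  classical
  rw [inversionParity_wordProd, (hω.nodup_rightInvSeq cs).count]
  split_ifs with h <;> simp [h]

lemma isRightInversion_of_inversionParity_ne_zero {w t : W} (h : inversionParity cs w t ≠ 0) :
    cs.IsRightInversion w t := by
  obtain ⟨ω, hω, rfl⟩ := cs.exists_isReduced w
  rw [ne_eq, inversionParity_wordProd_eq_zero_iff hω, not_not] at h
  exact cs.isRightInversion_of_mem_rightInvSeq hω h

lemma inversionParity_eq_zero_iff {w t : W} (ht : cs.IsReflection t) :
    inversionParity cs w t = 0 ↔ ¬cs.IsRightInversion w t := by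
  refine ⟨fun h ↦ ?_, Not.imp_symm isRightInversion_of_inversionParity_ne_zero⟩
  have parity_mul : inversionParity cs (w * t) t = 1 := by
    rw [inversionParity_mul, mul_inv_cancel_right, h, inversionParity_self ht, add_zero]
  exact ht.isRightInversion_mul_left_iff.mp
    (isRightInversion_of_inversionParity_ne_zero (parity_mul ▸ one_ne_zero))

variable (cs) in
/-- Convexity of `P` in the graph on `W` with edges between `w` and `s * w` for simple reflections
`s`. A geodesic from `y` to `w` is encoded by a reduced word `ω` for `w * y⁻¹`, read from right to
left, so that its vertices are the products of the suffixes of `ω` applied to `y`. -/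
def IsGeodesicallyConvex (P : Set W) : Prop :=
  ∀ ⦃y⦄, y ∈ P → ∀ ⦃w⦄, w ∈ P → ∀ ⦃ω : List B⦄, cs.IsReduced ω → cs.wordProd ω = w * y⁻¹ →
    ∀ n, cs.wordProd (ω.drop n) * y ∈ P

lemma isGeodesicallyConvex_setOf_inversionParity_eq (t : W) (c : ZMod 2) :
    IsGeodesicallyConvex cs {w | inversionParity cs w t = c} := by
  rintro y rfl w (hw : inversionParity cs w t = _) ω hω hprod n
  rw [← inv_mul_cancel_right w y, ← hprod, inversionParity_mul, add_eq_left,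
    inversionParity_wordProd_eq_zero_iff hω] at hw
  rw [Set.mem_ofPred_eq, inversionParity_mul, add_eq_left,
    inversionParity_wordProd_eq_zero_iff (hω.drop n), rightInvSeq_drop]
  exact fun h ↦ hw (mem_of_mem_drop h)

end CoxeterConvexity

open CoxeterConvexity in
theorem stmt_7_general {B W : Type*} [Group W] {M : CoxeterMatrix B} {cs : CoxeterSystem M W}
    {t : W} (ht : cs.IsReflection t) :
    IsGeodesicallyConvex cs {w | ¬cs.IsRightInversion w t} := by
  simp only [← inversionParity_eq_zero_iff ht]
  exact isGeodesicallyConvex_setOf_inversionParity_eq t 0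

/-- Let `(W,S)` be a finite Coxeter system, `s_i ∈ S`, and
`P_i = {w : ℓ(w sᵢ) = ℓ(w) + 1}`. Then `P_i` is convex: for all `y, w ∈ P_i` and every
reduced word `ω` for `w y⁻¹` (with the leftmost letter first), every partial product
consisting of the last `t` letters of `ω` applied to `y` again lies in `P_i`. -/
theorem stmt_7 {B : Type*} {W : Type*} [Group W] [Finite W]
    {M : CoxeterMatrix B} (cs : CoxeterSystem M W)
    (i : B) (y w : W)
    (hy : cs.length (y * cs.simple i) = cs.length y + 1)
    (hw : cs.length (w * cs.simple i) = cs.length w + 1)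
    (ω : List B) (hred : cs.IsReduced ω) (hprod : cs.wordProd ω = w * y⁻¹) :
    ∀ t : ℕ, t ≤ ω.length →
      cs.length (cs.wordProd (ω.drop (ω.length - t)) * y * cs.simple i) =
        cs.length (cs.wordProd (ω.drop (ω.length - t)) * y) + 1 := by
  simp only [← cs.not_isRightDescent_iff, ← cs.isRightInversion_simple_iff_isRightDescent]
    at hy hw ⊢
  exact fun t _ ↦ stmt_7_general (cs.isReflection_simple i) hy hw hred hprod (ω.length - t)
end

section
/- Let (W,S) be a finite Coxeter system with length function ℓ, and let s_i ∈ S. Let y, w ∈ W be such that ℓ(y s_i y⁻¹) > ℓ(w s_i w⁻¹). Then ℓ(w y⁻¹) ≠ ℓ(w s_i y⁻¹) + ℓ(y s_i y⁻¹); that is, no geodesic from y to w in the Cayley graph of (W,S) passes through y s_i. -/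
/-- With `f` as length, the paths `y → y s → w` and `y → w s⁻¹ → w` share the leg length
`f (w s⁻¹ y⁻¹)`; the other legs have lengths `f (y s y⁻¹)` and `f (w s w⁻¹)`, so the second path
is strictly shorter. -/
theorem stmt_8_general {G α : Type*} [Group G] [AddCommMagma α] [Preorder α]
    [AddLeftStrictMono α] {f : G → α} (hf : ∀ a b, f (a * b) ≤ f a + f b) {s y w : G}
    (h : f (w * s * w⁻¹) < f (y * s * y⁻¹)) :
    f (w * y⁻¹) < f (w * s⁻¹ * y⁻¹) + f (y * s * y⁻¹) :=
  calc f (w * y⁻¹)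
    _ = f ((w * s * w⁻¹) * (w * s⁻¹ * y⁻¹)) := by congr 1; group
    _ ≤ f (w * s * w⁻¹) + f (w * s⁻¹ * y⁻¹) := hf _ _
    _ = f (w * s⁻¹ * y⁻¹) + f (w * s * w⁻¹) := add_comm _ _
    _ < f (w * s⁻¹ * y⁻¹) + f (y * s * y⁻¹) := by gcongr

/-- Let `(W,S)` be a finite Coxeter system and `s_i ∈ S`. If
`ℓ(y sᵢ y⁻¹) > ℓ(w sᵢ w⁻¹)`, then `ℓ(w y⁻¹) ≠ ℓ(w sᵢ y⁻¹) + ℓ(y sᵢ y⁻¹)`; that is,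
no geodesic from `y` to `w` in the Cayley graph of `(W,S)` passes through `y sᵢ`. -/
theorem stmt_8 {B : Type*} {W : Type*} [Group W] [Finite W]
    {M : CoxeterMatrix B} (cs : CoxeterSystem M W)
    (i : B) (y w : W)
    (h : cs.length (w * cs.simple i * w⁻¹) < cs.length (y * cs.simple i * y⁻¹)) :
    cs.length (w * y⁻¹) ≠
      cs.length (w * cs.simple i * y⁻¹) + cs.length (y * cs.simple i * y⁻¹) := by
  simpa only [cs.inv_simple] using (stmt_8_general cs.length_mul_le h).ne
end

section
/- Let n ≥ 1 and let w be a permutation of {1, 2, …, n}. Let 1 ≤ i < j ≤ n. Assume: (a) for every k with 1 ≤ k ≤ n − 1, one has w(k) > w(k+1) if and only if i ≤ k ≤ j − 1; and (b) w(i) − w(j) = j − i. Then w(i) = j, w(j) = i, w(k) = i + j − k for every k with i ≤ k ≤ j, and w(k) = k for every k ∉ [i, j]; that is, w is the order-reversing involution of the interval [i, j] fixing all other elements (the longest element of the parabolic subgroup of S_n generated by the adjacent transpositions s_i, s_{i+1}, …, s_{j−1}). -/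
/-!
Let `r` be the permutation reversing `[i, j]` and fixing everything else. Since `w` is strictly
decreasing on `[i, j]` and `w i - w j = j - i`, it maps `[i, j]` onto the whole interval
`[w j, w i]`. So an element outside `[i, j]` has its image outside `[w j, w i]`, and `w k < w i` for
`k < i` improves to `w k < w j`; likewise `w i < w k` for `j < k`. Hence `w ∘ r` is strictly
increasing, so it is the identity, and `w = r` because `r` is an involution.
-/

section StrictAntiOn

variable {α β : Type*} [LinearOrder α] {i j k : α}

section Preorder

variable [Preorder β] [LocallyFiniteOrder β] {f : α → β}

lemma image_Icc_eq_Icc_of_strictAntiOn (hanti : StrictAntiOn f (Set.Icc i j))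
    (hcard : (Set.Icc (f j) (f i)).ncard ≤ (Set.Icc i j).ncard) :
    f '' Set.Icc i j = Set.Icc (f j) (f i) :=
  Set.eq_of_subset_of_ncard_le hanti.antitoneOn.image_Icc_subset
    (by rwa [hanti.injOn.ncard_image]) (Set.finite_Icc _ _)

lemma apply_mem_Icc_iff_of_strictAntiOn (hinj : Function.Injective f)
    (hanti : StrictAntiOn f (Set.Icc i j))
    (hcard : (Set.Icc (f j) (f i)).ncard ≤ (Set.Icc i j).ncard) :
    f k ∈ Set.Icc (f j) (f i) ↔ k ∈ Set.Icc i j := by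
  rw [← image_Icc_eq_Icc_of_strictAntiOn hanti hcard, hinj.mem_set_image]

end Preorder

variable [LinearOrder β] [LocallyFiniteOrder β] {f : α → β}

lemma apply_lt_apply_right_of_lt_left (hinj : Function.Injective f)
    (hlow : StrictMonoOn f (Set.Iic i)) (hanti : StrictAntiOn f (Set.Icc i j))
    (hcard : (Set.Icc (f j) (f i)).ncard ≤ (Set.Icc i j).ncard) (hk : k < i) : f k < f j := by
  have hlt : f k < f i := hlow hk.le Set.self_mem_Iic hk
  by_contra! hle
  exact hk.not_ge ((apply_mem_Icc_iff_of_strictAntiOn hinj hanti hcard).1 ⟨hle, hlt.le⟩).1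

lemma apply_left_lt_apply_of_right_lt (hinj : Function.Injective f)
    (hanti : StrictAntiOn f (Set.Icc i j)) (hhigh : StrictMonoOn f (Set.Ici j))
    (hcard : (Set.Icc (f j) (f i)).ncard ≤ (Set.Icc i j).ncard) (hk : j < k) : f i < f k := by
  have hlt : f j < f k := hhigh Set.self_mem_Ici hk.le hk
  by_contra! hle
  exact hk.not_ge ((apply_mem_Icc_iff_of_strictAntiOn hinj hanti hcard).1 ⟨hlt.le, hle⟩).2

end StrictAntiOn

lemma strictMono_of_strictMonoOn_Iio_Icc_Ioi {α β : Type*} [LinearOrder α] [Preorder β]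
    {f : α → β} {i j : α} (hij : i ≤ j) (hIio : StrictMonoOn f (Set.Iio i))
    (hIcc : StrictMonoOn f (Set.Icc i j)) (hIoi : StrictMonoOn f (Set.Ioi j))
    (hbelow : ∀ k < i, f k < f i) (habove : ∀ k, j < k → f j < f k) : StrictMono f := by
  have hIic : StrictMonoOn f (Set.Iic i) := by
    rw [← Set.Iio_insert, strictMonoOn_insert_iff_of_forall_le fun _ hk ↦ (Set.mem_Iio.1 hk).le]
    exact ⟨fun k hk _ ↦ hbelow k hk, hIio⟩
  have hIci : StrictMonoOn f (Set.Ici j) := by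
    rw [← Set.Ioi_insert, strictMonoOn_insert_iff_of_forall_ge fun _ hk ↦ (Set.mem_Ioi.1 hk).le]
    exact ⟨fun k hk _ ↦ habove k hk, hIoi⟩
  have hIic_right : StrictMonoOn f (Set.Iic j) := by
    rw [← Set.Iic_union_Icc_eq_Iic hij]
    exact hIic.union hIcc isGreatest_Iic (isLeast_Icc hij)
  exact hIic_right.Iic_union_Ici hIci

section Descents

variable {α β : Type*} [LinearOrder α] [SuccOrder α] [IsSuccArchimedean α] [LinearOrder β]
  {f : α → β} {i j : α}

lemma strictAntiOn_Icc_of_succ_lt (hf : ∀ a ∈ Set.Ico i j, f (Order.succ a) < f a) :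
    StrictAntiOn f (Set.Icc i j) :=
  strictAntiOn_of_succ_lt Set.ordConnected_Icc fun a hmax ha hsucc ↦
    hf a ⟨ha.1, (Order.lt_succ_of_not_isMax hmax).trans_le hsucc.2⟩

lemma strictMonoOn_of_injOn_of_not_succ_lt {s : Set α} (hs : s.OrdConnected)
    (hinj : s.InjOn f)
    (hf : ∀ a, ¬IsMax a → a ∈ s → Order.succ a ∈ s → ¬f (Order.succ a) < f a) :
    StrictMonoOn f s :=
  strictMonoOn_of_lt_succ hs fun a hmax ha hsucc ↦
    (not_lt.1 (hf a hmax ha hsucc)).lt_of_ne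
      (hinj.ne ha hsucc (Order.lt_succ_of_not_isMax hmax).ne)

end Descents

section IntervalRev

variable {n : ℕ} {i j : Fin n}

/-- The map reversing the interval `[i, j]` of `Fin n` and fixing every other element, that is, the
longest element of the parabolic subgroup generated by the adjacent transpositions `(k, k + 1)`
with `i ≤ k < j`. It is the identity if `j < i`. -/
def intervalRev (i j k : Fin n) : Fin n :=
  if h : k ∈ Set.Icc i j then ⟨i + j - k, by have := h.1; omega⟩ else k

lemma val_intervalRev_of_mem {k : Fin n} (hk : k ∈ Set.Icc i j) :
    (intervalRev i j k : ℕ) = i + j - k := by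
  rw [intervalRev, dif_pos hk]

lemma intervalRev_of_notMem {k : Fin n} (hk : k ∉ Set.Icc i j) : intervalRev i j k = k :=
  dif_neg hk

lemma intervalRev_of_lt {k : Fin n} (hk : k < i) : intervalRev i j k = k :=
  intervalRev_of_notMem fun h ↦ hk.not_ge h.1

lemma intervalRev_of_gt {k : Fin n} (hk : j < k) : intervalRev i j k = k :=
  intervalRev_of_notMem fun h ↦ hk.not_ge h.2

lemma intervalRev_left (hij : i ≤ j) : intervalRev i j i = j := by
  ext
  rw [val_intervalRev_of_mem (Set.left_mem_Icc.2 hij)]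
  omega

lemma intervalRev_right (hij : i ≤ j) : intervalRev i j j = i := by
  ext
  rw [val_intervalRev_of_mem (Set.right_mem_Icc.2 hij)]
  omega

lemma strictAntiOn_intervalRev : StrictAntiOn (intervalRev i j) (Set.Icc i j) := by
  intro a ha b hb hab
  rw [Fin.lt_def, val_intervalRev_of_mem ha, val_intervalRev_of_mem hb]
  have := hb.2
  omega

lemma mapsTo_intervalRev : Set.MapsTo (intervalRev i j) (Set.Icc i j) (Set.Icc i j) := by
  intro k hk
  have hval := val_intervalRev_of_mem hk
  obtain ⟨hik, hkj⟩ := hk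
  exact ⟨by omega, by omega⟩

lemma intervalRev_involutive : Function.Involutive (intervalRev i j) := by
  intro k
  by_cases hk : k ∈ Set.Icc i j
  · ext
    rw [val_intervalRev_of_mem (mapsTo_intervalRev hk), val_intervalRev_of_mem hk]
    have := hk.2
    omega
  · rw [intervalRev_of_notMem hk, intervalRev_of_notMem hk]

lemma strictMono_comp_intervalRev {β : Type*} [Preorder β] {f : Fin n → β} (hij : i ≤ j)
    (hlow : StrictMonoOn f (Set.Iio i)) (hanti : StrictAntiOn f (Set.Icc i j))
    (hhigh : StrictMonoOn f (Set.Ioi j)) (hbelow : ∀ k < i, f k < f j)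
    (habove : ∀ k, j < k → f i < f k) : StrictMono (f ∘ intervalRev i j) := by
  refine strictMono_of_strictMonoOn_Iio_Icc_Ioi hij
    (hlow.congr fun k hk ↦ congrArg f (intervalRev_of_lt hk).symm)
    (hanti.comp strictAntiOn_intervalRev mapsTo_intervalRev)
    (hhigh.congr fun k hk ↦ congrArg f (intervalRev_of_gt hk).symm) (fun k hk ↦ ?_) fun k hk ↦ ?_
  · simpa only [Function.comp_apply, intervalRev_left hij, intervalRev_of_lt hk] using hbelow k hk
  · simpa only [Function.comp_apply, intervalRev_right hij, intervalRev_of_gt hk] using habove k hk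

theorem eq_intervalRev_of_succ_lt_iff {f : Fin n → Fin n} (hinj : Function.Injective f)
    (hij : i ≤ j)
    (hdesc : ∀ k, ¬IsMax k → (f (Order.succ k) < f k ↔ k ∈ Set.Ico i j))
    (hdrop : (f i : ℕ) ≤ f j + (j - i)) : f = intervalRev i j := by
  have hanti : StrictAntiOn f (Set.Icc i j) := strictAntiOn_Icc_of_succ_lt fun k hk ↦
    (hdesc k (not_isMax_of_lt hk.2)).2 hk
  have hlow : StrictMonoOn f (Set.Iic i) :=
    strictMonoOn_of_injOn_of_not_succ_lt Set.ordConnected_Iic hinj.injOn fun k hmax _ hsucc h ↦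
      ((Order.lt_succ_of_not_isMax hmax).trans_le hsucc).not_ge ((hdesc k hmax).1 h).1
  have hhigh : StrictMonoOn f (Set.Ici j) :=
    strictMonoOn_of_injOn_of_not_succ_lt Set.ordConnected_Ici hinj.injOn fun k hmax hk _ h ↦
      ((hdesc k hmax).1 h).2.not_ge hk
  have hcard : (Set.Icc (f j) (f i)).ncard ≤ (Set.Icc i j).ncard := by
    simp only [Set.ncard_eq_toFinset_card', Set.toFinset_Icc, Fin.card_Icc]
    omega
  have hmono : StrictMono (f ∘ intervalRev i j) :=
    strictMono_comp_intervalRev hij (hlow.mono Set.Iio_subset_Iic_self) hanti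
      (hhigh.mono Set.Ioi_subset_Ici_self)
      (fun _ ↦ apply_lt_apply_right_of_lt_left hinj hlow hanti hcard)
      (fun _ ↦ apply_left_lt_apply_of_right_lt hinj hanti hhigh hcard)
  have hid : f ∘ intervalRev i j = id := le_antisymm hmono.le_id hmono.id_le
  calc
    f = (f ∘ intervalRev i j) ∘ intervalRev i j := by
      rw [Function.comp_assoc, intervalRev_involutive.comp_self, Function.comp_id]
    _ = intervalRev i j := by rw [hid, Function.id_comp]

end IntervalRev

lemma exists_orderSucc_eq_mk {n : ℕ} {k : Fin n} (hk : ¬IsMax k) :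
    ∃ h : (k : ℕ) + 1 < n, Order.succ k = ⟨k + 1, h⟩ := by
  have hval : (k : ℕ) + 1 = (Order.succ k : Fin n) :=
    Nat.covBy_iff_add_one_eq.1 (Fin.covBy_iff.1 (Order.covBy_succ_of_not_isMax hk))
  exact ⟨hval ▸ (Order.succ k).isLt, Fin.ext hval.symm⟩

/-- Let `w` be a permutation of `{1,…,n}` (modelled as `Fin n`), and `i < j`.
If (a) `w(k) > w(k+1)` iff `i ≤ k ≤ j−1`, and (b) `w(i) − w(j) = j − i`, then `w(i) = j`,
`w(j) = i`, `w(k) = i + j − k` on `[i,j]`, and `w(k) = k` outside `[i,j]`; that is, `w` is the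
order-reversing involution of the interval `[i,j]` fixing everything else. -/
theorem stmt_9 {n : ℕ} (hn : 1 ≤ n) (w : Equiv.Perm (Fin n)) (i j : Fin n) (hij : i < j)
    (ha : ∀ (k : ℕ) (hk : k + 1 < n),
      (w ⟨k + 1, hk⟩ < w ⟨k, Nat.lt_of_succ_lt hk⟩ ↔ (i : ℕ) ≤ k ∧ k < (j : ℕ)))
    (hb : (w i : ℕ) = (w j : ℕ) + ((j : ℕ) - (i : ℕ))) :
    w i = j ∧ w j = i ∧
    (∀ k : Fin n, i ≤ k → k ≤ j → (w k : ℕ) = (i : ℕ) + (j : ℕ) - (k : ℕ)) ∧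
    (∀ k : Fin n, k < i ∨ j < k → w k = k) := by
  have hdesc : ∀ k, ¬IsMax k → (w (Order.succ k) < w k ↔ k ∈ Set.Ico i j) := by
    intro k hk
    obtain ⟨hlt, hsucc⟩ := exists_orderSucc_eq_mk hk
    rw [hsucc]
    exact ha k hlt
  have hw : ⇑w = intervalRev i j :=
    eq_intervalRev_of_succ_lt_iff w.injective hij.le hdesc hb.le
  rw [hw]
  exact ⟨intervalRev_left hij.le, intervalRev_right hij.le,
    fun k hik hkj ↦ val_intervalRev_of_mem ⟨hik, hkj⟩,
    fun k hk ↦ hk.elim intervalRev_of_lt intervalRev_of_gt⟩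
end

section
/- Let k be a field and V a k-vector space with subspaces V₀ and V₁ such that V = V₀ ⊕ V₁ (internal direct sum); let p₀, p₁ : V → V be the projections onto V₀ and V₁ along the complementary summand. Let K ⊆ V be a subspace, and let i₀ : V₀ → V and i₁ : V₁ → V be linear maps whose images lie in K and which satisfy p₀ ∘ i₀ = id on V₀ and p₁ ∘ i₁ = id on V₁. Define the odd linear operator φ : V → V by φ(v₀) = p₁(i₀(v₀)) for v₀ ∈ V₀ and φ(v₁) = p₀(i₁(v₁)) for v₁ ∈ V₁, let V_φ = range(φ² − id), let K(φ) = {v ∈ V : φ(v) − v ∈ V_φ}, and let K^h = (K ∩ V₀) + (K ∩ V₁) be the maximal homogeneous subspace of K. Then: (i) V_φ ⊆ K^h; (ii) K(φ) ⊆ K; and (iii) K = K(φ) if and only if V_φ = K^h. -/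
/-!
For an odd operator `φ`, both `φ² - id` and its range `V_φ` are compatible with the grading. Since
`φ² - id = (φ - id)(φ + id)`, the subspace `K(φ)` equals `range (φ + id) + ker (φ - id)`, and the
kernel is absorbed: if `φ x = x`, then `x₁ = φ x₀`, so `x = (φ + id) x₀`. Hence
`K(φ) = range (φ + id)`, and its homogeneous part is `V_φ`.

For the `φ` built from the sections, `φ + id = i₀ p₀ + i₁ p₁` takes values in `K`, so
`K(φ) ⊆ K`, and passing to homogeneous parts gives `V_φ ⊆ K^h`. Finally, `φ - id` maps `K` into
`K^h`, because the even component of `φ v - v` is `(φ + id) v₁ - v`, and symmetrically for the odd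
one; so `V_φ = K^h` forces `K ⊆ K(φ)`.
-/

section

variable {R V : Type*} [Ring R] [AddCommGroup V] [Module R V]

/-- The maximal homogeneous subspace `K^h` of `K`, for the grading of `V` with even part `V₀` and
odd part `V₁`. -/
def homogeneousPart (V₀ V₁ K : Submodule R V) : Submodule R V :=
  (K ⊓ V₀) ⊔ (K ⊓ V₁)

/-- Odd operators for the grading of `V` with even part `V₀` and odd part `V₁`. -/
structure IsOdd (V₀ V₁ : Submodule R V) (φ : V →ₗ[R] V) : Prop where
  map_even : ∀ v ∈ V₀, φ v ∈ V₁
  map_odd : ∀ v ∈ V₁, φ v ∈ V₀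

/-- The subspace `V_φ = range (φ² - id)`, which measures how far `φ` is from an involution. -/
def squareDefect (φ : V →ₗ[R] V) : Submodule R V :=
  LinearMap.range (φ ∘ₗ φ - LinearMap.id)

/-- The subspace `K(φ)` of vectors fixed by `φ` modulo `V_φ`, encoded as a preimage under
`φ - id`. -/
def fixedModDefect (φ : V →ₗ[R] V) : Submodule R V :=
  (squareDefect φ).comap (φ - LinearMap.id)

variable {V₀ V₁ K L : Submodule R V} {φ : V →ₗ[R] V}

theorem homogeneousPart_mono (h : K ≤ L) : homogeneousPart V₀ V₁ K ≤ homogeneousPart V₀ V₁ L :=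
  sup_le_sup (inf_le_inf_right _ h) (inf_le_inf_right _ h)

theorem mem_and_mem_of_add_mem_homogeneousPart (hV : Disjoint V₀ V₁) {x y : V} (hx : x ∈ V₀)
    (hy : y ∈ V₁) (h : x + y ∈ homogeneousPart V₀ V₁ K) : x ∈ K ∧ y ∈ K := by
  obtain ⟨a, ⟨haK, ha⟩, b, ⟨hbK, hb⟩, hab⟩ := Submodule.mem_sup.1 h
  have hzero : (a - x) + (b - y) = 0 := by rw [sub_add_sub_comm, hab, sub_self]
  obtain ⟨hax, hby⟩ := Submodule.disjoint_iff_add_eq_zero.1 hV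
    (V₀.sub_mem ha hx) (V₁.sub_mem hb hy) hzero
  rw [← sub_eq_zero.1 hax, ← sub_eq_zero.1 hby]
  exact ⟨haK, hbK⟩

theorem range_le_homogeneousPart_range (hV : Codisjoint V₀ V₁) {f : V →ₗ[R] V}
    (h₀ : ∀ v ∈ V₀, f v ∈ V₀) (h₁ : ∀ v ∈ V₁, f v ∈ V₁) :
    LinearMap.range f ≤ homogeneousPart V₀ V₁ (LinearMap.range f) := by
  rw [LinearMap.range_eq_map, ← hV.eq_top, Submodule.map_sup]
  exact sup_le_sup (le_inf le_sup_left (Submodule.map_le_iff_le_comap.2 h₀))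
    (le_inf le_sup_right (Submodule.map_le_iff_le_comap.2 h₁))

theorem comp_self_sub_id_eq (φ : V →ₗ[R] V) :
    φ ∘ₗ φ - LinearMap.id = (φ - LinearMap.id) ∘ₗ (φ + LinearMap.id) := by
  simp only [LinearMap.sub_comp, LinearMap.comp_add, LinearMap.comp_id, LinearMap.id_comp]
  abel

theorem squareDefect_le_fixedModDefect (φ : V →ₗ[R] V) : squareDefect φ ≤ fixedModDefect φ := by
  rintro _ ⟨u, rfl⟩
  refine ⟨φ u - u, ?_⟩
  simp only [LinearMap.sub_apply, LinearMap.comp_apply, LinearMap.id_apply, map_sub]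
  abel

theorem fixedModDefect_eq_range_sup_ker (φ : V →ₗ[R] V) :
    fixedModDefect φ =
      LinearMap.range (φ + LinearMap.id) ⊔ LinearMap.ker (φ - LinearMap.id) := by
  rw [fixedModDefect, squareDefect, comp_self_sub_id_eq, LinearMap.range_comp,
    Submodule.comap_map_eq]

namespace IsOdd

theorem ker_sub_id_le_range_add_id (hφ : IsOdd V₀ V₁ φ) (hV : IsCompl V₀ V₁) :
    LinearMap.ker (φ - LinearMap.id) ≤ LinearMap.range (φ + LinearMap.id) := by
  intro x hx
  obtain ⟨x₀, x₁, hx₀, hx₁, rfl⟩ := Submodule.codisjoint_iff_exists_add_eq.1 hV.codisjoint x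
  have hzero : (φ x₁ - x₀) + (φ x₀ - x₁) = 0 := by
    rw [sub_add_sub_comm, add_comm (φ x₁), ← map_add]
    exact hx
  have hφx₀ : φ x₀ = x₁ := sub_eq_zero.1 (Submodule.disjoint_iff_add_eq_zero.1 hV.disjoint
    (V₀.sub_mem (hφ.map_odd x₁ hx₁) hx₀) (V₁.sub_mem (hφ.map_even x₀ hx₀) hx₁) hzero).2
  exact ⟨x₀, by simp [hφx₀, add_comm]⟩

theorem fixedModDefect_eq_range (hφ : IsOdd V₀ V₁ φ) (hV : IsCompl V₀ V₁) :
    fixedModDefect φ = LinearMap.range (φ + LinearMap.id) := by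
  rw [fixedModDefect_eq_range_sup_ker, sup_eq_left]
  exact hφ.ker_sub_id_le_range_add_id hV

theorem squareDefect_le_homogeneousPart_self (hφ : IsOdd V₀ V₁ φ) (hV : Codisjoint V₀ V₁) :
    squareDefect φ ≤ homogeneousPart V₀ V₁ (squareDefect φ) :=
  range_le_homogeneousPart_range hV
    (fun v hv => V₀.sub_mem (hφ.map_odd _ (hφ.map_even v hv)) hv)
    (fun v hv => V₁.sub_mem (hφ.map_even _ (hφ.map_odd v hv)) hv)

theorem homogeneousPart_fixedModDefect (hφ : IsOdd V₀ V₁ φ) (hV : IsCompl V₀ V₁) :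
    homogeneousPart V₀ V₁ (fixedModDefect φ) = squareDefect φ := by
  have hhom := hφ.squareDefect_le_homogeneousPart_self hV.codisjoint
  refine le_antisymm (sup_le ?_ ?_)
    (hhom.trans (homogeneousPart_mono (squareDefect_le_fixedModDefect φ)))
  · rintro x ⟨hx, hx₀⟩
    have hsplit : -x + φ x ∈ squareDefect φ := by
      rw [neg_add_eq_sub]
      exact hx
    exact neg_mem_iff.1 (mem_and_mem_of_add_mem_homogeneousPart hV.disjoint
      (V₀.neg_mem hx₀) (hφ.map_even x hx₀) (hhom hsplit)).1
  · rintro x ⟨hx, hx₁⟩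
    have hsplit : φ x + -x ∈ squareDefect φ := by
      rw [← sub_eq_add_neg]
      exact hx
    exact neg_mem_iff.1 (mem_and_mem_of_add_mem_homogeneousPart hV.disjoint
      (hφ.map_odd x hx₁) (V₁.neg_mem hx₁) (hhom hsplit)).2

theorem le_comap_sub_id_homogeneousPart (hφ : IsOdd V₀ V₁ φ) (hV : Codisjoint V₀ V₁)
    (hK : LinearMap.range (φ + LinearMap.id) ≤ K) :
    K ≤ (homogeneousPart V₀ V₁ K).comap (φ - LinearMap.id) := by
  intro v hv
  obtain ⟨v₀, v₁, hv₀, hv₁, rfl⟩ := Submodule.codisjoint_iff_exists_add_eq.1 hV v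
  have heven : φ v₁ - v₀ ∈ K := by
    simpa using K.sub_mem (hK ⟨v₁, rfl⟩) hv
  have hodd : φ v₀ - v₁ ∈ K := by
    simpa [add_comm v₀ v₁] using K.sub_mem (hK ⟨v₀, rfl⟩) hv
  have hsplit : φ (v₀ + v₁) - (v₀ + v₁) = (φ v₁ - v₀) + (φ v₀ - v₁) := by
    rw [map_add]
    abel
  rw [Submodule.mem_comap, LinearMap.sub_apply, LinearMap.id_apply, hsplit]
  exact Submodule.add_mem_sup ⟨heven, V₀.sub_mem (hφ.map_odd v₁ hv₁) hv₀⟩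
    ⟨hodd, V₁.sub_mem (hφ.map_even v₀ hv₀) hv₁⟩

theorem fixedModDefect_le (hφ : IsOdd V₀ V₁ φ) (hV : IsCompl V₀ V₁)
    (hK : LinearMap.range (φ + LinearMap.id) ≤ K) : fixedModDefect φ ≤ K :=
  (hφ.fixedModDefect_eq_range hV).trans_le hK

theorem squareDefect_le_homogeneousPart (hφ : IsOdd V₀ V₁ φ) (hV : IsCompl V₀ V₁)
    (hK : LinearMap.range (φ + LinearMap.id) ≤ K) :
    squareDefect φ ≤ homogeneousPart V₀ V₁ K :=
  (hφ.homogeneousPart_fixedModDefect hV).ge.trans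
    (homogeneousPart_mono (hφ.fixedModDefect_le hV hK))

theorem eq_fixedModDefect_iff (hφ : IsOdd V₀ V₁ φ) (hV : IsCompl V₀ V₁)
    (hK : LinearMap.range (φ + LinearMap.id) ≤ K) :
    K = fixedModDefect φ ↔ squareDefect φ = homogeneousPart V₀ V₁ K := by
  constructor
  · rintro rfl
    exact (hφ.homogeneousPart_fixedModDefect hV).symm
  · intro h
    refine le_antisymm ?_ (hφ.fixedModDefect_le hV hK)
    rw [fixedModDefect, h]
    exact hφ.le_comap_sub_id_homogeneousPart hV.codisjoint hK

end IsOdd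

variable {p₀ p₁ : V →ₗ[R] V} {i₀ : V₀ →ₗ[R] V} {i₁ : V₁ →ₗ[R] V}

theorem eq_zero_of_mem_of_add_eq (hV : Disjoint V₀ V₁) {x y z : V} (hx : x ∈ V₀) (hy : y ∈ V₁)
    (hz : z ∈ V₀) (h : x + y = z) : y = 0 :=
  Submodule.disjoint_def.1 hV y ((V₀.add_mem_iff_right hx).1 (h ▸ hz)) hy

theorem isOdd_of_apply_eq (hV : Disjoint V₀ V₁) (hp₀ : ∀ v, p₀ v ∈ V₀) (hp₁ : ∀ v, p₁ v ∈ V₁)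
    (hsum : ∀ v, p₀ v + p₁ v = v)
    (hφ : ∀ v, φ v = p₁ (i₀ ⟨p₀ v, hp₀ v⟩) + p₀ (i₁ ⟨p₁ v, hp₁ v⟩)) : IsOdd V₀ V₁ φ where
  map_even v hv := by
    have hp₁v : p₁ v = 0 := eq_zero_of_mem_of_add_eq hV (hp₀ v) (hp₁ v) hv (hsum v)
    have hi₁ : i₁ ⟨p₁ v, hp₁ v⟩ = 0 :=
      (congrArg i₁ (Subtype.ext hp₁v)).trans (map_zero i₁)
    rw [hφ, hi₁, map_zero, add_zero]
    exact hp₁ _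
  map_odd v hv := by
    have hp₀v : p₀ v = 0 :=
      eq_zero_of_mem_of_add_eq hV.symm (hp₁ v) (hp₀ v) hv ((add_comm _ _).trans (hsum v))
    have hi₀ : i₀ ⟨p₀ v, hp₀ v⟩ = 0 :=
      (congrArg i₀ (Subtype.ext hp₀v)).trans (map_zero i₀)
    rw [hφ, hi₀, map_zero, zero_add]
    exact hp₀ _

theorem apply_add_self_of_sections (hp₀ : ∀ v, p₀ v ∈ V₀) (hp₁ : ∀ v, p₁ v ∈ V₁)
    (hsum : ∀ v, p₀ v + p₁ v = v)
    (hsec₀ : ∀ x : V₀, p₀ (i₀ x) = x) (hsec₁ : ∀ x : V₁, p₁ (i₁ x) = x)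
    (hφ : ∀ v, φ v = p₁ (i₀ ⟨p₀ v, hp₀ v⟩) + p₀ (i₁ ⟨p₁ v, hp₁ v⟩)) (v : V) :
    φ v + v = i₀ ⟨p₀ v, hp₀ v⟩ + i₁ ⟨p₁ v, hp₁ v⟩ :=
  calc
    φ v + v = (p₁ (i₀ ⟨p₀ v, hp₀ v⟩) + p₀ (i₁ ⟨p₁ v, hp₁ v⟩)) + (p₀ v + p₁ v) := by
      rw [hφ, hsum]
    _ = (p₀ (i₀ ⟨p₀ v, hp₀ v⟩) + p₁ (i₀ ⟨p₀ v, hp₀ v⟩)) +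
        (p₀ (i₁ ⟨p₁ v, hp₁ v⟩) + p₁ (i₁ ⟨p₁ v, hp₁ v⟩)) := by
      rw [hsec₀, hsec₁]
      abel
    _ = i₀ ⟨p₀ v, hp₀ v⟩ + i₁ ⟨p₁ v, hp₁ v⟩ := by rw [hsum, hsum]

theorem stmt_10_general (hV : IsCompl V₀ V₁)
    (hp₀ : ∀ v, p₀ v ∈ V₀) (hp₁ : ∀ v, p₁ v ∈ V₁) (hsum : ∀ v, p₀ v + p₁ v = v)
    (hi₀K : ∀ x : V₀, i₀ x ∈ K) (hi₁K : ∀ x : V₁, i₁ x ∈ K)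
    (hsec₀ : ∀ x : V₀, p₀ (i₀ x) = x) (hsec₁ : ∀ x : V₁, p₁ (i₁ x) = x)
    (hφ : ∀ v, φ v = p₁ (i₀ ⟨p₀ v, hp₀ v⟩) + p₀ (i₁ ⟨p₁ v, hp₁ v⟩)) :
    squareDefect φ ≤ homogeneousPart V₀ V₁ K ∧
    fixedModDefect φ ≤ K ∧
    (K = fixedModDefect φ ↔ squareDefect φ = homogeneousPart V₀ V₁ K) := by
  have hodd : IsOdd V₀ V₁ φ := isOdd_of_apply_eq hV.disjoint hp₀ hp₁ hsum hφ
  have hK : LinearMap.range (φ + LinearMap.id) ≤ K := by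
    rintro _ ⟨v, rfl⟩
    rw [LinearMap.add_apply, LinearMap.id_apply,
      apply_add_self_of_sections hp₀ hp₁ hsum hsec₀ hsec₁ hφ]
    exact K.add_mem (hi₀K _) (hi₁K _)
  exact ⟨hodd.squareDefect_le_homogeneousPart hV hK, hodd.fixedModDefect_le hV hK,
    hodd.eq_fixedModDefect_iff hV hK⟩

end

/-- Let `V = V₀ ⊕ V₁` (internal direct sum of subspaces, with projections
`p₀, p₁`), `K ⊆ V` a subspace, and `i₀ : V₀ → V`, `i₁ : V₁ → V` linear maps with images in `K`
which are sections of `p₀`, `p₁` respectively. Define the odd operator `φ` by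
`φ(v₀) = p₁(i₀ v₀)`, `φ(v₁) = p₀(i₁ v₁)`, let `V_φ = range(φ² − id)`,
`K(φ) = {v : φ v − v ∈ V_φ}`, and `K^h = (K ∩ V₀) + (K ∩ V₁)`. Then (i) `V_φ ⊆ K^h`,
(ii) `K(φ) ⊆ K`, and (iii) `K = K(φ)` iff `V_φ = K^h`. -/
theorem stmt_10 {k : Type*} {V : Type*} [Field k] [AddCommGroup V] [Module k V]
    (V₀ V₁ : Submodule k V) (hcompl : IsCompl V₀ V₁)
    (p₀ p₁ : V →ₗ[k] V)
    (hp₀ : ∀ v, p₀ v ∈ V₀) (hp₁ : ∀ v, p₁ v ∈ V₁) (hsum : ∀ v, p₀ v + p₁ v = v)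
    (K : Submodule k V)
    (i₀ : V₀ →ₗ[k] V) (i₁ : V₁ →ₗ[k] V)
    (hi₀K : ∀ x : V₀, i₀ x ∈ K) (hi₁K : ∀ x : V₁, i₁ x ∈ K)
    (hsec₀ : ∀ x : V₀, p₀ (i₀ x) = (x : V)) (hsec₁ : ∀ x : V₁, p₁ (i₁ x) = (x : V))
    (φ : V →ₗ[k] V)
    (hφ : ∀ v, φ v = p₁ (i₀ ⟨p₀ v, hp₀ v⟩) + p₀ (i₁ ⟨p₁ v, hp₁ v⟩)) :
    LinearMap.range (φ ∘ₗ φ - LinearMap.id) ≤ (K ⊓ V₀) ⊔ (K ⊓ V₁) ∧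
    (∀ v : V, φ v - v ∈ LinearMap.range (φ ∘ₗ φ - LinearMap.id) → v ∈ K) ∧
    ((∀ v : V, v ∈ K ↔ φ v - v ∈ LinearMap.range (φ ∘ₗ φ - LinearMap.id)) ↔
      LinearMap.range (φ ∘ₗ φ - LinearMap.id) = (K ⊓ V₀) ⊔ (K ⊓ V₁)) := by
  obtain ⟨hi, hii, hiii⟩ := stmt_10_general hcompl hp₀ hp₁ hsum hi₀K hi₁K hsec₀ hsec₁ hφ
  exact ⟨hi, hii, SetLike.ext_iff.symm.trans hiii⟩
end

section
/- Let k be a field, V a k-vector space, and φ : V → V an invertible linear endomorphism. Let K ⊆ V × V be the set of pairs (v₁, v₂) such that v₂ − φ(v₁) lies in the range of φ² − id. Then every element of K can be written in the form (a, φ(a)) + (φ(b), b) for some a, b ∈ V; that is, K is spanned by the images of the two maps i₁ : V → V × V, i₁(v) = (v, φ(v)), and i_s : V → V × V, i_s(v) = (φ(v), v). (In other words, every representation of the braid group Br₂ = ℤ is good.) -/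
theorem stmt_11_general {R M N : Type*} [Semiring R] [AddCommMonoid M] [Module R M]
    [AddCommGroup N] [Module R N] (f : M →ₗ[R] N) (g : N →ₗ[R] M) (v : M) (w : N) :
    w - f v ∈ LinearMap.range (f ∘ₗ g - LinearMap.id) ↔
      ∃ a : M, ∃ b : N, v = a + g b ∧ w = f a + b := by
  constructor
  · rintro ⟨u, hu⟩
    have hw : w = f v + (f (g u) - u) := eq_add_of_sub_eq' hu.symm
    -- `(g u, f (g u)) + (g (-u), -u) = (0, f (g u) - u)` corrects the second entry of `(v, f v)`.
    refine ⟨v + g u, -u, ?_, ?_⟩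
    · rw [add_assoc, ← map_add, add_neg_cancel, map_zero, add_zero]
    · rw [hw, map_add, add_assoc, sub_eq_add_neg]
  · rintro ⟨a, b, rfl, rfl⟩
    refine ⟨-b, ?_⟩
    calc (f ∘ₗ g - LinearMap.id : N →ₗ[R] N) (-b) = b - f (g b) := by
          simp only [LinearMap.sub_apply, LinearMap.comp_apply, LinearMap.id_apply, map_neg]
          abel
      _ = f a + b - f (a + g b) := by rw [map_add, add_sub_add_left_eq_sub]

/-- (Every representation of `Br₂ = ℤ` is good.) Let `φ` be an invertible
linear endomorphism of a vector space `V`. If `v₂ − φ(v₁)` lies in the range of `φ² − id`,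
then `(v₁, v₂) = (a, φ a) + (φ b, b)` for some `a, b ∈ V`; i.e. `K_{S₂}(V)` is spanned by
the images of `i₁(v) = (v, φ v)` and `i_s(v) = (φ v, v)`. -/
theorem stmt_11 {k : Type*} {V : Type*} [Field k] [AddCommGroup V] [Module k V]
    (φ : V →ₗ[k] V) (hφ : Function.Bijective φ)
    (v₁ v₂ : V) (h : v₂ - φ v₁ ∈ LinearMap.range (φ ∘ₗ φ - LinearMap.id)) :
    ∃ a b : V, v₁ = a + φ b ∧ v₂ = φ a + b :=
  (stmt_11_general φ φ v₁ v₂).mp h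
end
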